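/- arXiv:0907.2758 — 8 statements merged into one kernel-verified Lean document; each statement's English description precedes it below -/
import Mathlib

section
/- Fix ℓ₀ > 0 and ε ∈ (0, 1/2]. For every sequence (a_k)_{k≥0} of real numbers with ∑_{k≥0} (1+λ_k) a_k² < ∞, one has ∑_{k≥0} b_{ε,k} a_k² ≥ ∑_{k≥0} a_k² + 3ε · ∑_{k≥0} λ_k a_k². -/
/-- `λ_k = (4π²/ℓ₀²)·⌈k/2⌉²`, the absolute values of the eigenvalues of the second
derivative operator with `ℓ₀`-periodic boundary conditions. -/
noncomputable def lam (ℓ₀ : ℝ) (k : ℕ) : ℝ :=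
  4 * Real.pi ^ 2 / ℓ₀ ^ 2 * (((k + 1) / 2 : ℕ) : ℝ) ^ 2

/-- `X_{ε,k} = √(1 + 4ελ_k)`. -/
noncomputable def Xe (ℓ₀ ε : ℝ) (k : ℕ) : ℝ := Real.sqrt (1 + 4 * ε * lam ℓ₀ k)

/-- The `k`-th Fourier symbol of the operator `𝓑_ε`. -/
noncomputable def bSym (ℓ₀ ε : ℝ) (k : ℕ) : ℝ :=
  3 / 4 * ((Xe ℓ₀ ε k + 1) * ((Xe ℓ₀ ε k) ^ 2 + 2 * Xe ℓ₀ ε k - 1)) / (Xe ℓ₀ ε k + 2)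

/-- the coercivity estimate for `𝓑_ε` in Fourier variables:
`∑ b_{ε,k} a_k² ≥ ∑ a_k² + 3ε ∑ λ_k a_k²` whenever `∑ (1+λ_k) a_k² < ∞`. -/
theorem bSym_coercivity (ℓ₀ ε : ℝ) (hℓ₀ : 0 < ℓ₀) (hε : ε ∈ Set.Ioc (0 : ℝ) (1 / 2))
    (a : ℕ → ℝ) (hsum : Summable fun k : ℕ => (1 + lam ℓ₀ k) * a k ^ 2) :
    (∑' k : ℕ, a k ^ 2) + 3 * ε * ∑' k : ℕ, lam ℓ₀ k * a k ^ 2 ≤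
      ∑' k : ℕ, bSym ℓ₀ ε k * a k ^ 2 := by
  obtain ⟨h0, h1⟩ := hε
  have hl : ∀ k, 0 ≤ lam ℓ₀ k := fun k => by unfold lam; positivity
  have hX2 : ∀ k, Xe ℓ₀ ε k ^ 2 = 1 + 4 * ε * lam ℓ₀ k := fun k => by
    have := hl k
    unfold Xe
    exact Real.sq_sqrt (by positivity)
  have hX1 : ∀ k, 1 ≤ Xe ℓ₀ ε k := fun k => by
    have := hl k
    unfold Xe
    rw [Real.one_le_sqrt]
    have : 0 ≤ 4 * ε * lam ℓ₀ k := by positivity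
    linarith
  have hlow : ∀ k, 1 + 3 * ε * lam ℓ₀ k ≤ bSym ℓ₀ ε k := fun k => by
    have h := hX1 k
    have e : 1 + 3 * ε * lam ℓ₀ k = (3 * Xe ℓ₀ ε k ^ 2 + 1) / 4 := by
      rw [hX2 k]; ring
    rw [e]
    unfold bSym
    rw [le_div_iff₀ (by linarith)]
    nlinarith [mul_nonneg (sub_nonneg.2 h) (sub_nonneg.2 h)]
  have hup : ∀ k, bSym ℓ₀ ε k ≤ 3 * (1 + lam ℓ₀ k) := fun k => by
    have h := hX1 k
    have e : 3 / 2 * Xe ℓ₀ ε k ^ 2 ≤ 3 * (1 + lam ℓ₀ k) := by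
      rw [hX2 k]; nlinarith [hl k, mul_le_mul_of_nonneg_right h1 (hl k)]
    refine le_trans ?_ e
    unfold bSym
    rw [div_le_iff₀ (by linarith)]
    generalize Xe ℓ₀ ε k = x at h
    have h2 : 0 ≤ x * (x - 1) := mul_nonneg (by linarith) (by linarith)
    have h3 : 0 ≤ x * (x * (x - 1)) := mul_nonneg (by linarith) h2
    nlinarith
  have s1 : Summable fun k => a k ^ 2 :=
    Summable.of_nonneg_of_le (fun k => sq_nonneg _)
      (fun k => by nlinarith [mul_nonneg (hl k) (sq_nonneg (a k))]) hsum
  have s2 : Summable fun k => lam ℓ₀ k * a k ^ 2 :=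
    Summable.of_nonneg_of_le (fun k => mul_nonneg (hl k) (sq_nonneg _))
      (fun k => by nlinarith [sq_nonneg (a k)]) hsum
  have s3 : Summable fun k => bSym ℓ₀ ε k * a k ^ 2 := by
    refine Summable.of_nonneg_of_le (fun k => mul_nonneg ?_ (sq_nonneg _))
      (fun k => ?_) (hsum.mul_left 3)
    · have := hl k
      exact le_trans (by positivity) (hlow k)
    · rw [← mul_assoc]
      exact mul_le_mul_of_nonneg_right (hup k) (sq_nonneg _)
  rw [← tsum_mul_left, ← s1.tsum_add (s2.mul_left _)]
  refine (s1.add (s2.mul_left _)).tsum_le_tsum (fun k => ?_) s3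
  have := mul_le_mul_of_nonneg_right (hlow k) (sq_nonneg (a k))
  linarith
end

section
/- Fix ℓ₀ > 0 and ε ∈ (0, 1/2]. Define z_{ε,k} = −(2/3)·λ_k·(3X_{ε,k}²+15X_{ε,k}+4)/((X_{ε,k}+1)²(X_{ε,k}²+2X_{ε,k}−1)). Then z_{ε,k} + 1/(2ε) is asymptotically equivalent to −1/(4√(ε³λ_k)) as k → ∞; that is, the product (z_{ε,k} + 1/(2ε))·(−4√(ε³λ_k)) tends to 1 as k → ∞. -/
open Filter

/-- The `k`-th Fourier symbol of the operator `𝓩_ε = 𝓑_ε⁻¹𝓖_ε`. -/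
noncomputable def zSym (ℓ₀ ε : ℝ) (k : ℕ) : ℝ :=
  -(2 / 3) * lam ℓ₀ k * (3 * (Xe ℓ₀ ε k) ^ 2 + 15 * Xe ℓ₀ ε k + 4) /
    ((Xe ℓ₀ ε k + 1) ^ 2 * ((Xe ℓ₀ ε k) ^ 2 + 2 * Xe ℓ₀ ε k - 1))

lemma lam_tendsto (ℓ₀ : ℝ) (hℓ₀ : 0 < ℓ₀) : Tendsto (lam ℓ₀) atTop atTop := by
  unfold lam
  have hc : 0 < 4 * Real.pi ^ 2 / ℓ₀ ^ 2 := by positivity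
  refine Tendsto.const_mul_atTop hc ?_
  refine (tendsto_pow_atTop (two_ne_zero)).comp ?_
  refine tendsto_natCast_atTop_atTop.comp ?_
  refine tendsto_atTop.2 fun b => ?_
  filter_upwards [eventually_ge_atTop (2 * b)] with k hk
  omega

lemma Xe_tendsto (ℓ₀ ε : ℝ) (hℓ₀ : 0 < ℓ₀) (hε : 0 < ε) : Tendsto (Xe ℓ₀ ε) atTop atTop := by
  unfold Xe
  refine Real.tendsto_sqrt_atTop.comp ?_
  refine tendsto_atTop_add_const_left _ _ ?_
  exact Tendsto.const_mul_atTop (by positivity) (lam_tendsto ℓ₀ hℓ₀)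

/-- `z_{ε,k} + 1/(2ε) ∼ −1/(4√(ε³λ_k))` as `k → ∞`. -/
theorem zSym_asymptotic (ℓ₀ ε : ℝ) (hℓ₀ : 0 < ℓ₀) (hε : ε ∈ Set.Ioc (0 : ℝ) (1 / 2)) :
    Tendsto (fun k : ℕ =>
        (zSym ℓ₀ ε k + 1 / (2 * ε)) * (-4 * Real.sqrt (ε ^ 3 * lam ℓ₀ k)))
      atTop (nhds 1) := by
  obtain ⟨he, -⟩ := hε
  have hY : Tendsto (fun k => (Xe ℓ₀ ε k)⁻¹) atTop (nhds 0) :=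
    tendsto_inv_atTop_zero.comp (Xe_tendsto ℓ₀ ε hℓ₀ he)
  have hc : ContinuousAt (fun y : ℝ => (3 - 14 * y - y ^ 2) /
      (3 * (1 + y) * (1 + 2 * y - y ^ 2)) * Real.sqrt (1 - y ^ 2)) 0 := by
    refine ContinuousAt.mul (ContinuousAt.div (by fun_prop) (by fun_prop) (by norm_num))
      (by fun_prop)
  have h1 := hc.tendsto.comp hY
  have h0 : (3 - 14 * (0:ℝ) - 0 ^ 2) /
      (3 * (1 + 0) * (1 + 2 * 0 - 0 ^ 2)) * Real.sqrt (1 - 0 ^ 2) = 1 := by norm_num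
  rw [h0] at h1
  refine h1.congr' ?_
  filter_upwards [(Xe_tendsto ℓ₀ ε hℓ₀ he).eventually_gt_atTop 1] with k hk
  have hl0 : 0 ≤ lam ℓ₀ k := by unfold lam; positivity
  have hX2 : (Xe ℓ₀ ε k) ^ 2 = 1 + 4 * ε * lam ℓ₀ k := by
    unfold Xe; exact Real.sq_sqrt (by positivity)
  have hl : lam ℓ₀ k = ((Xe ℓ₀ ε k) ^ 2 - 1) / (4 * ε) := by
    rw [hX2]; field_simp; ring
  simp only [Function.comp, zSym]
  rw [hl]
  generalize Xe ℓ₀ ε k = X at hk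
  have hXp : 0 < X := by linarith
  have hs : Real.sqrt (ε ^ 3 * ((X ^ 2 - 1) / (4 * ε))) = ε * X / 2 * Real.sqrt (1 - X⁻¹ ^ 2) := by
    rw [show ε ^ 3 * ((X ^ 2 - 1) / (4 * ε)) = (ε * X / 2) ^ 2 * (1 - X⁻¹ ^ 2) by
      field_simp; ring]
    rw [Real.sqrt_mul (by positivity), Real.sqrt_sq (by positivity)]
  rw [hs]
  generalize Real.sqrt (1 - X⁻¹ ^ 2) = S
  have hq : X ^ 2 + 2 * X - 1 ≠ 0 := by nlinarith
  have hq' : X * (X + 2) - 1 ≠ 0 := by nlinarith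
  have hp : X + 1 ≠ 0 := by linarith
  have e1 : 1 + X⁻¹ = (X + 1) / X := by field_simp
  have e2 : 1 + 2 * X⁻¹ - X⁻¹ ^ 2 = (X ^ 2 + 2 * X - 1) / X ^ 2 := by field_simp
  rw [e1, e2]
  field_simp
  ring
end

section
/- Let A₀, C₀, C₁, C₂ be positive constants. For any T > 0, there exist ε₀ ∈ (0, 1/2) and a constant K₀ > 0 such that the following holds: for every T' ∈ (0, T], every ε ∈ (0, ε₀], and every continuously differentiable function A : [0, T'] → ℝ satisfying A'(τ) ≤ C₀ + C₁·A(τ) + C₂·ε·(A(τ))² for all τ ∈ [0, T'] and A(0) ≤ A₀, one has A(τ) ≤ K₀ for all τ ∈ [0, T']. -/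
/-- Lemma 6.6: a differential-inequality comparison lemma. For positive
constants `A₀, C₀, C₁, C₂` and any `T > 0` there exist `ε₀ ∈ (0,1/2)` and `K₀ > 0` such
that any `C¹` function `A` on `[0,T']` `(0 < T' ≤ T)` with
`A'(τ) ≤ C₀ + C₁ A(τ) + C₂ ε A(τ)²` and `A(0) ≤ A₀` satisfies `A(τ) ≤ K₀` on `[0,T']`,
whenever `0 < ε ≤ ε₀`. -/
theorem differential_inequality_lemma (A₀ C₀ C₁ C₂ : ℝ)
    (hA₀ : 0 < A₀) (hC₀ : 0 < C₀) (hC₁ : 0 < C₁) (hC₂ : 0 < C₂)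
    (T : ℝ) (hT : 0 < T) :
    ∃ ε₀ ∈ Set.Ioo (0 : ℝ) (1 / 2), ∃ K₀ : ℝ, 0 < K₀ ∧
      ∀ T' ∈ Set.Ioc (0 : ℝ) T, ∀ ε ∈ Set.Ioc (0 : ℝ) ε₀, ∀ A A' : ℝ → ℝ,
        (∀ τ ∈ Set.Icc (0 : ℝ) T', HasDerivWithinAt A (A' τ) (Set.Icc (0 : ℝ) T') τ) →
        ContinuousOn A' (Set.Icc (0 : ℝ) T') →
        (∀ τ ∈ Set.Icc (0 : ℝ) T', A' τ ≤ C₀ + C₁ * A τ + C₂ * ε * (A τ) ^ 2) →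
        A 0 ≤ A₀ →
        ∀ τ ∈ Set.Icc (0 : ℝ) T', A τ ≤ K₀ := by
  set k : ℝ := C₁ + C₀ / A₀ + 1 with hk
  have hkpos : 0 < k := by positivity
  set K : ℝ := A₀ * Real.exp (k * T) with hK
  have hKpos : 0 < K := by positivity
  refine ⟨min (1 / 4) (1 / (2 * C₂ * K)), ⟨by positivity, ?_⟩, K, hKpos, ?_⟩
  · exact lt_of_le_of_lt (min_le_left _ _) (by norm_num)
  intro T' hT' ε hε A A' hA _ hineq h0 τ hτ
  have hεK : C₂ * ε * K ≤ 1 / 2 := by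
    have h1 : ε ≤ 1 / (2 * C₂ * K) := hε.2.trans (min_le_right _ _)
    rw [le_div_iff₀ (by positivity)] at h1
    linarith
  have hle : ∀ x ∈ Set.Icc (0 : ℝ) T', A₀ * Real.exp (k * x) ≤ K := by
    intro x hx
    have : x ≤ T := hx.2.trans hT'.2
    rw [hK]
    gcongr
  have key : ∀ ⦃x⦄, x ∈ Set.Icc (0 : ℝ) T' → A x ≤ A₀ * Real.exp (k * x) := by
    refine image_le_of_deriv_right_lt_deriv_boundary' (f' := A')
      (B' := fun x => k * (A₀ * Real.exp (k * x)))
      (fun x hx => (hA x hx).continuousWithinAt) ?_ (by simpa using h0)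
      (by fun_prop) ?_ ?_
    · intro x hx
      exact (hA x ⟨hx.1, hx.2.le⟩).mono_of_mem_nhdsWithin
        (Filter.mem_of_superset (Icc_mem_nhdsGE hx.2) (Set.Icc_subset_Icc_left hx.1))
    · intro x _
      have h := (((hasDerivAt_id x).const_mul k).exp.const_mul A₀).hasDerivWithinAt (s := Set.Ici x)
      refine h.congr_deriv ?_
      simp only [id]
      ring
    · intro x hx hAB
      have hx' : x ∈ Set.Icc (0 : ℝ) T' := ⟨hx.1, hx.2.le⟩
      have h1 := hineq x hx'
      have h2 := hle x hx'
      rw [hAB] at h1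
      have h3 : A₀ ≤ A₀ * Real.exp (k * x) :=
        le_mul_of_one_le_right hA₀.le (Real.one_le_exp (mul_nonneg hkpos.le hx.1))
      change A' x < k * (A₀ * Real.exp (k * x))
      generalize A₀ * Real.exp (k * x) = b at *
      have hb : 0 < b := hA₀.trans_le h3
      have h4 : C₀ ≤ C₀ / A₀ * b := by
        calc C₀ = C₀ / A₀ * A₀ := by field_simp
          _ ≤ _ := by gcongr
      have hc : 0 < C₂ * ε := mul_pos hC₂ hε.1
      have h5 : C₂ * ε * b ^ 2 ≤ 1 / 2 * b := by
        have : C₂ * ε * b ≤ 1 / 2 := (mul_le_mul_of_nonneg_left h2 hc.le).trans hεK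
        nlinarith
      have h6 : k * b = C₁ * b + C₀ / A₀ * b + b := by rw [hk]; ring
      linarith
  exact (key hτ).trans (hle τ hτ)
end

section
/- Fix ℓ₀ > 0 and α ∈ (0, 1/2). Let Φ₀ : [−ℓ₀/2, ℓ₀/2] → ℝ be six times continuously differentiable, with its sixth derivative α-Hölder continuous, and with D_η^{(k)}Φ₀(−ℓ₀/2) = D_η^{(k)}Φ₀(ℓ₀/2) for every k = 0, 1, …, 6. Then there exists a unique function Φ : [0, ∞) × [−ℓ₀/2, ℓ₀/2] → ℝ of class C^{1,4} (once continuously differentiable in τ and four times continuously differentiable in η, with all these derivatives jointly continuous) such that: (i) Φ_τ(τ,η) = −3Φ_ηηηη(τ,η) − Φ_ηη(τ,η) − (1/2)(Φ_η(τ,η))² for all τ ≥ 0 and |η| ≤ ℓ₀/2; (ii) D_η^{(k)}Φ(τ,−ℓ₀/2) = D_η^{(k)}Φ(τ,ℓ₀/2) for all τ ≥ 0 and k = 0,1,2,3; (iii) Φ(0,η) = Φ₀(η) for all |η| ≤ ℓ₀/2. -/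
open Set

/-- The spatial interval `[−ℓ₀/2, ℓ₀/2]`. -/
def Iℓ (ℓ₀ : ℝ) : Set ℝ := Icc (-(ℓ₀ / 2)) (ℓ₀ / 2)

/-- `Φ : [0,∞) × [−ℓ₀/2, ℓ₀/2] → ℝ` is a `C^{1,4}` solution of the Kuramoto–Sivashinsky
equation `Φ_τ = −3Φ_ηηηη − Φ_ηη − (1/2)(Φ_η)²` with `ℓ₀`-periodic boundary conditions and
initial datum `Φ₀`.  The function `Φτ` is the time derivative, and `D j` is the `j`-th
spatial derivative (`D 0 = Φ`); all of them are jointly continuous on the domain. -/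
def IsKSSolution (ℓ₀ : ℝ) (Φ₀ : ℝ → ℝ) (Φ : ℝ → ℝ → ℝ) : Prop :=
  ∃ Φτ : ℝ → ℝ → ℝ, ∃ D : ℕ → ℝ → ℝ → ℝ,
    D 0 = Φ ∧
    (∀ τ ∈ Ici (0 : ℝ), ∀ η ∈ Iℓ ℓ₀,
      HasDerivWithinAt (fun t => Φ t η) (Φτ τ η) (Ici (0 : ℝ)) τ) ∧
    (∀ j < 4, ∀ τ ∈ Ici (0 : ℝ), ∀ η ∈ Iℓ ℓ₀,
      HasDerivWithinAt (fun y => D j τ y) (D (j + 1) τ η) (Iℓ ℓ₀) η) ∧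
    ContinuousOn (fun p : ℝ × ℝ => Φτ p.1 p.2) (Ici (0 : ℝ) ×ˢ Iℓ ℓ₀) ∧
    (∀ j ≤ 4, ContinuousOn (fun p : ℝ × ℝ => D j p.1 p.2) (Ici (0 : ℝ) ×ˢ Iℓ ℓ₀)) ∧
    (∀ τ ∈ Ici (0 : ℝ), ∀ η ∈ Iℓ ℓ₀,
      Φτ τ η = -3 * D 4 τ η - D 2 τ η - 1 / 2 * (D 1 τ η) ^ 2) ∧
    (∀ τ ∈ Ici (0 : ℝ), ∀ j ≤ 3, D j τ (-(ℓ₀ / 2)) = D j τ (ℓ₀ / 2)) ∧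
    (∀ η ∈ Iℓ ℓ₀, Φ 0 η = Φ₀ η)

namespace KS
open MeasureTheory intervalIntegral

lemma ibp {a b : ℝ} (hab : a ≤ b) {u v u' v' : ℝ → ℝ}
    (hu : ∀ x ∈ Icc a b, HasDerivWithinAt u (u' x) (Icc a b) x)
    (hv : ∀ x ∈ Icc a b, HasDerivWithinAt v (v' x) (Icc a b) x)
    (hu' : ContinuousOn u' (Icc a b)) (hv' : ContinuousOn v' (Icc a b))
    (h1 : u a = u b) (h2 : v a = v b) :
    ∫ x in a..b, u x * v' x = - ∫ x in a..b, u' x * v x := by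
  rw [← uIcc_of_le hab] at hu hv hu' hv'
  rw [integral_mul_deriv_eq_deriv_mul_of_hasDerivWithinAt hu hv hu'.intervalIntegrable
    hv'.intervalIntegrable, h1, h2]
  ring

lemma space_est {a b : ℝ} (hab : a ≤ b) (w : ℕ → ℝ → ℝ)
    (hd : ∀ j < 4, ∀ x ∈ Icc a b, HasDerivWithinAt (w j) (w (j+1) x) (Icc a b) x)
    (hc : ∀ j ≤ 4, ContinuousOn (w j) (Icc a b))
    (hb : ∀ j ≤ 3, w j a = w j b) (β : ℝ → ℝ) (hβ : ContinuousOn β (Icc a b)) (B : ℝ)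
    (hB : ∀ x ∈ Icc a b, |β x| ≤ B) :
    ∫ x in a..b, 2 * w 0 x * (-3 * w 4 x - w 2 x - 1/2 * (β x * w 1 x)) ≤
      (B^2/2 + 1) * ∫ x in a..b, (w 0 x)^2 := by
  have c0 := hc 0 (by norm_num)
  have c1 := hc 1 (by norm_num)
  have c2 := hc 2 (by norm_num)
  have c3 := hc 3 (by norm_num)
  have c4 := hc 4 (by norm_num)
  have e1 := ibp hab (hd 0 (by norm_num)) (hd 3 (by norm_num)) c1 c4 (hb 0 (by norm_num))
    (hb 3 (by norm_num))
  have e2 := ibp hab (hd 1 (by norm_num)) (hd 2 (by norm_num)) c2 c3 (hb 1 (by norm_num))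
    (hb 2 (by norm_num))
  have e3 := ibp hab (hd 0 (by norm_num)) (hd 1 (by norm_num)) c1 c2 (hb 0 (by norm_num))
    (hb 1 (by norm_num))
  simp only [zero_add] at e1 e2 e3
  norm_num at e1 e2 e3
  have ii : ∀ {f : ℝ → ℝ}, ContinuousOn f (Icc a b) → IntervalIntegrable f volume a b := by
    intro f hf
    rw [← uIcc_of_le hab] at hf
    exact hf.intervalIntegrable
  have z1 : ∫ x in a..b, (w 0 x * w 4 x - w 2 x * w 2 x) = 0 := by
    rw [intervalIntegral.integral_sub (ii (by fun_prop)) (ii (by fun_prop))]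
    rw [e1, e2]; ring
  have z2 : ∫ x in a..b, (w 1 x * w 1 x + w 0 x * w 2 x) = 0 := by
    rw [intervalIntegral.integral_add (ii (by fun_prop)) (ii (by fun_prop))]
    rw [e3]; ring
  set f := fun x => 2 * w 0 x * (-3 * w 4 x - w 2 x - 1/2 * (β x * w 1 x)) with hf
  have cf : ContinuousOn f (Icc a b) := by fun_prop
  have cz1 : ContinuousOn (fun x => w 0 x * w 4 x - w 2 x * w 2 x) (Icc a b) := by fun_prop
  have cz2 : ContinuousOn (fun x => w 1 x * w 1 x + w 0 x * w 2 x) (Icc a b) := by fun_prop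
  have : ∫ x in a..b, f x = ∫ x in a..b, ((f x + 6 * (w 0 x * w 4 x - w 2 x * w 2 x))
      - 1/2 * (w 1 x * w 1 x + w 0 x * w 2 x)) := by
    rw [intervalIntegral.integral_sub, intervalIntegral.integral_add, intervalIntegral.integral_const_mul,
      intervalIntegral.integral_const_mul, z1, z2]
    · ring
    · exact ii cf
    · exact ii (by fun_prop)
    · exact ii (by fun_prop)
    · exact ii (by fun_prop)
  rw [this, ← intervalIntegral.integral_const_mul]
  apply integral_mono_on hab (ii (by fun_prop)) (ii (by fun_prop))
  intro x hx
  have h1 := hB x hx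
  have h2 : (β x)^2 ≤ B^2 := sq_le_sq' (abs_le.1 h1).1 (abs_le.1 h1).2
  simp only [hf]
  nlinarith [sq_nonneg (β x * w 0 x + w 1 x), sq_nonneg (w 0 x + w 2 x), sq_nonneg (w 0 x),
    mul_le_mul_of_nonneg_right h2 (sq_nonneg (w 0 x)), sq_nonneg (w 2 x), sq_nonneg (w 0 x + 5/4 * w 2 x)]

lemma time_deriv {a b : ℝ} (hab : a ≤ b) (W Wt : ℝ → ℝ → ℝ)
    (hW : ContinuousOn (fun p : ℝ × ℝ => W p.1 p.2) (Ici 0 ×ˢ Icc a b))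
    (hWt : ContinuousOn (fun p : ℝ × ℝ => Wt p.1 p.2) (Ici 0 ×ˢ Icc a b))
    (hd : ∀ t ∈ Ici (0:ℝ), ∀ x ∈ Icc a b, HasDerivWithinAt (fun t => W t x) (Wt t x) (Ici 0) t) :
    ContinuousOn (fun t => ∫ x in a..b, (W t x)^2) (Ici 0) ∧
    ∀ t, 0 < t → HasDerivAt (fun t => ∫ x in a..b, (W t x)^2)
      (∫ x in a..b, 2 * W t x * Wt t x) t := by
  have sl : ∀ {G : ℝ → ℝ → ℝ}, ContinuousOn (fun p : ℝ × ℝ => G p.1 p.2) (Ici 0 ×ˢ Icc a b) →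
      ∀ t, 0 ≤ t → ContinuousOn (G t) (Icc a b) := by
    intro G hG t ht
    exact hG.comp (f := fun x => (t, x)) (by fun_prop) (fun x hx => ⟨ht, hx⟩)
  have ii : ∀ {f : ℝ → ℝ}, ContinuousOn f (Icc a b) → IntervalIntegrable f volume a b := by
    intro f hf
    rw [← uIcc_of_le hab] at hf
    exact hf.intervalIntegrable
  constructor
  · have hP : Continuous (fun p : ℝ × ℝ => W (max p.1 0) (projIcc a b hab p.2)) := by
      have : Continuous (fun p : ℝ × ℝ => (max p.1 0, (projIcc a b hab p.2 : ℝ))) := by fun_prop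
      exact hW.comp_continuous this (fun p => ⟨mem_Ici.2 (le_max_right _ _), (projIcc a b hab p.2).2⟩)
    have := continuous_parametric_intervalIntegral_of_continuous' (μ := volume)
      (f := fun t x => (W (max t 0) (projIcc a b hab x))^2) (by
        exact hP.pow 2) a b
    refine this.continuousOn.congr ?_
    intro t ht
    refine integral_congr ?_
    intro x hx
    rw [uIcc_of_le hab] at hx
    simp only
    rw [projIcc_of_mem hab hx, max_eq_left ht]
  · intro t ht
    have hK : IsCompact (Icc (0:ℝ) (t+1) ×ˢ Icc a b) := isCompact_Icc.prod isCompact_Icc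
    have hsub : Icc (0:ℝ) (t+1) ×ˢ Icc a b ⊆ Ici 0 ×ˢ Icc a b :=
      prod_mono Icc_subset_Ici_self subset_rfl
    obtain ⟨C, hC⟩ := hK.exists_bound_of_continuousOn (f := fun p : ℝ × ℝ => 2 * W p.1 p.2 * Wt p.1 p.2)
      ((continuousOn_const.mul (hW.mono hsub)).mul (hWt.mono hsub))
    have mm : ∀ {f : ℝ → ℝ}, ContinuousOn f (Icc a b) →
        AEStronglyMeasurable f (volume.restrict (uIoc a b)) := by
      intro f hf
      have := (ii hf).aestronglyMeasurable
      rwa [uIoc_of_le hab]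
    refine (intervalIntegral.hasDerivAt_integral_of_dominated_loc_of_deriv_le (F := fun t x => (W t x)^2)
      (F' := fun t x => 2 * W t x * Wt t x) (x₀ := t) (s := Ioo 0 (t+1)) (bound := fun _ => C)
      (Ioo_mem_nhds ht (by linarith)) ?_ ?_ ?_ ?_ ?_ ?_).2
    · filter_upwards [Ioi_mem_nhds ht] with s hs
      exact mm ((sl hW s (le_of_lt hs)).pow 2)
    · exact ii ((sl hW t ht.le).pow 2)
    · exact mm ((continuousOn_const.mul (sl hW t ht.le)).mul (sl hWt t ht.le))
    · refine Filter.Eventually.of_forall ?_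
      intro x hx s hs
      rw [uIoc_of_le hab] at hx
      exact hC (s, x) ⟨⟨hs.1.le, hs.2.le⟩, ⟨hx.1.le, hx.2⟩⟩
    · exact _root_.intervalIntegrable_const
    · refine Filter.Eventually.of_forall ?_
      intro x hx s hs
      rw [uIoc_of_le hab] at hx
      have := ((hd s hs.1.le x ⟨hx.1.le, hx.2⟩).hasDerivAt (Ici_mem_nhds hs.1)).pow 2
      exact this.congr_deriv (by norm_num)

lemma unique_aux {a b : ℝ} (hab : a < b) (P Q : ℝ → ℝ → ℝ) (Pt Qt : ℝ → ℝ → ℝ)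
    (D F : ℕ → ℝ → ℝ → ℝ) (hP : D 0 = P) (hQ : F 0 = Q)
    (hPt : ∀ τ ∈ Ici (0 : ℝ), ∀ η ∈ Icc a b,
      HasDerivWithinAt (fun t => P t η) (Pt τ η) (Ici (0 : ℝ)) τ)
    (hQt : ∀ τ ∈ Ici (0 : ℝ), ∀ η ∈ Icc a b,
      HasDerivWithinAt (fun t => Q t η) (Qt τ η) (Ici (0 : ℝ)) τ)
    (hD : ∀ j < 4, ∀ τ ∈ Ici (0 : ℝ), ∀ η ∈ Icc a b,
      HasDerivWithinAt (fun y => D j τ y) (D (j + 1) τ η) (Icc a b) η)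
    (hF : ∀ j < 4, ∀ τ ∈ Ici (0 : ℝ), ∀ η ∈ Icc a b,
      HasDerivWithinAt (fun y => F j τ y) (F (j + 1) τ η) (Icc a b) η)
    (cPt : ContinuousOn (fun p : ℝ × ℝ => Pt p.1 p.2) (Ici (0 : ℝ) ×ˢ Icc a b))
    (cQt : ContinuousOn (fun p : ℝ × ℝ => Qt p.1 p.2) (Ici (0 : ℝ) ×ˢ Icc a b))
    (cD : ∀ j ≤ 4, ContinuousOn (fun p : ℝ × ℝ => D j p.1 p.2) (Ici (0 : ℝ) ×ˢ Icc a b))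
    (cF : ∀ j ≤ 4, ContinuousOn (fun p : ℝ × ℝ => F j p.1 p.2) (Ici (0 : ℝ) ×ˢ Icc a b))
    (eP : ∀ τ ∈ Ici (0 : ℝ), ∀ η ∈ Icc a b,
      Pt τ η = -3 * D 4 τ η - D 2 τ η - 1 / 2 * (D 1 τ η) ^ 2)
    (eQ : ∀ τ ∈ Ici (0 : ℝ), ∀ η ∈ Icc a b,
      Qt τ η = -3 * F 4 τ η - F 2 τ η - 1 / 2 * (F 1 τ η) ^ 2)
    (bD : ∀ τ ∈ Ici (0 : ℝ), ∀ j ≤ 3, D j τ a = D j τ b)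
    (bF : ∀ τ ∈ Ici (0 : ℝ), ∀ j ≤ 3, F j τ a = F j τ b)
    (h0 : ∀ η ∈ Icc a b, P 0 η = Q 0 η) :
    ∀ τ ∈ Ici (0 : ℝ), ∀ η ∈ Icc a b, P τ η = Q τ η := by
  intro T hT
  have sl : ∀ {G : ℝ → ℝ → ℝ}, ContinuousOn (fun p : ℝ × ℝ => G p.1 p.2) (Ici 0 ×ˢ Icc a b) →
      ∀ t, 0 ≤ t → ContinuousOn (G t) (Icc a b) := by
    intro G hG t ht
    exact hG.comp (f := fun x => (t, x)) (by fun_prop) (fun x hx => ⟨ht, hx⟩)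
  obtain ⟨cE, dE⟩ := time_deriv hab.le (fun t x => P t x - Q t x) (fun t x => Pt t x - Qt t x)
    (by subst hP hQ; exact (cD 0 (by norm_num)).sub (cF 0 (by norm_num))) (cPt.sub cQt)
    (fun t ht x hx => (hPt t ht x hx).sub (hQt t ht x hx))
  have hsub : Icc (0:ℝ) T ×ˢ Icc a b ⊆ Ici 0 ×ˢ Icc a b :=
      prod_mono Icc_subset_Ici_self subset_rfl
  obtain ⟨B, hB⟩ := (isCompact_Icc.prod isCompact_Icc :
    IsCompact (Icc (0:ℝ) T ×ˢ Icc a b)).exists_bound_of_continuousOn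
      (f := fun p : ℝ × ℝ => D 1 p.1 p.2 + F 1 p.1 p.2)
      (((cD 1 (by norm_num)).add (cF 1 (by norm_num))).mono hsub)
  set C := B^2/2 + 1 with hCdef
  set E := fun t => ∫ x in a..b, (P t x - Q t x)^2 with hE
  have key : ∀ t ∈ Ioo 0 T, ∫ x in a..b, 2 * (P t x - Q t x) * (Pt t x - Qt t x) ≤ C * E t := by
    intro t ht
    have h0t : t ∈ Ici (0:ℝ) := ht.1.le
    have := space_est hab.le (fun j x => D j t x - F j t x)
      (fun j hj x hx => (hD j hj t h0t x hx).sub (hF j hj t h0t x hx))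
      (fun j hj => (sl (cD j hj) t ht.1.le).sub (sl (cF j hj) t ht.1.le))
      (fun j hj => by rw [bD t h0t j hj, bF t h0t j hj])
      (fun x => D 1 t x + F 1 t x)
      ((sl (cD 1 (by norm_num)) t ht.1.le).add (sl (cF 1 (by norm_num)) t ht.1.le)) B
      (fun x hx => hB (t, x) ⟨⟨ht.1.le, ht.2.le⟩, hx⟩)
    simp only [hP, hQ] at this
    refine le_trans (le_of_eq ?_) this
    refine integral_congr ?_
    intro x hx
    rw [uIcc_of_le hab.le] at hx
    simp only
    rw [eP t h0t x hx, eQ t h0t x hx]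
    ring
  have anti : AntitoneOn (fun t => Real.exp (-C * t) * E t) (Icc 0 T) := by
    have hdd : ∀ t ∈ interior (Icc 0 T), HasDerivAt (fun t => Real.exp (-C * t) * E t)
        (Real.exp (-C * t) * (-C) * E t + Real.exp (-C * t) *
          ∫ x in a..b, 2 * (P t x - Q t x) * (Pt t x - Qt t x)) t := by
      intro t ht
      rw [interior_Icc] at ht
      refine HasDerivAt.mul ?_ (dE t ht.1)
      have := ((hasDerivAt_id t).const_mul (-C)).exp
      simpa using this
    apply antitoneOn_of_deriv_nonpos (convex_Icc 0 T)
    · exact ContinuousOn.mul (by fun_prop) (cE.mono Icc_subset_Ici_self)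
    · intro t ht
      exact (hdd t ht).differentiableAt.differentiableWithinAt
    · intro t ht
      rw [(hdd t ht).deriv]
      rw [interior_Icc] at ht
      have := mul_le_mul_of_nonneg_left (key t ht) (Real.exp_pos (-C * t)).le
      linarith
  have hE0 : E 0 = 0 := by
    simp only [hE]
    rw [integral_congr (g := fun _ => (0:ℝ))]
    · simp
    · intro x hx
      rw [uIcc_of_le hab.le] at hx
      simp [h0 x hx]
  have h1 := anti (left_mem_Icc.2 hT) (right_mem_Icc.2 hT) hT
  simp only [hE0, mul_zero] at h1
  have hET : E T ≤ 0 := by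
    by_contra hcon
    push Not at hcon
    have := mul_pos (Real.exp_pos (-C * T)) hcon
    linarith
  intro η hη
  by_contra hne
  have cW : ContinuousOn (fun x => (P T x - Q T x)^2) (Icc a b) := by
    subst hP hQ
    exact ((sl (cD 0 (by norm_num)) T hT).sub (sl (cF 0 (by norm_num)) T hT)).pow 2
  have := integral_pos hab cW (fun x _ => sq_nonneg _)
    ⟨η, hη, by have := sub_ne_zero.2 hne; positivity⟩
  linarith

end KS

namespace KS
open MeasureTheory intervalIntegral

/-- weight -/
noncomputable def wt (k : ℤ) : ℝ := 1 + |(k : ℝ)|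

lemma wt_pos (k : ℤ) : 0 < wt k := by unfold wt; positivity

lemma one_le_wt (k : ℤ) : 1 ≤ wt k := by unfold wt; have := abs_nonneg (k : ℝ); linarith

/-- the character -/
noncomputable def ee (ω : ℝ) (k : ℤ) (x : ℝ) : ℂ := Complex.exp (Complex.I * (ω * k * x : ℝ))

lemma coeff_decay {a b : ℝ} (hab : a < b) (d : ℕ → ℝ → ℝ)
    (hd : ∀ j < 6, ∀ x ∈ Icc a b, HasDerivWithinAt (d j) (d (j+1) x) (Icc a b) x)
    (hc : ∀ j ≤ 6, ContinuousOn (d j) (Icc a b)) (hb : ∀ j < 6, d j a = d j b) :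
    ∃ C, ∀ k : ℤ, ‖fourierCoeffOn hab (fun x => (d 0 x : ℂ)) k‖ ≤ C / wt k ^ 6 := by
  have step : ∀ n : ℤ, n ≠ 0 → ∀ j < 6, ‖fourierCoeffOn hab (fun x => (d j x : ℂ)) n‖ =
      ((b - a) / (2 * Real.pi * |(n:ℝ)|)) * ‖fourierCoeffOn hab (fun x => (d (j+1) x : ℂ)) n‖ := by
    intro n hn j hj
    rw [fourierCoeffOn_of_hasDerivAt_Ioo hab hn (f' := fun x => (d (j+1) x : ℂ))]
    · rw [hb j hj]
      have hba : 0 ≤ b - a := by linarith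
      have : ‖(b - a : ℂ)‖ = b - a := by
        rw [← Complex.ofReal_sub, Complex.norm_real, Real.norm_of_nonneg hba]
      simp [this, abs_of_pos Real.pi_pos]
      ring
    · rw [uIcc_of_le hab.le]
      exact Complex.continuous_ofReal.comp_continuousOn (hc j hj.le)
    · intro x hx
      rw [min_eq_left hab.le, max_eq_right hab.le] at hx
      exact ((hd j hj x ⟨hx.1.le, hx.2.le⟩).hasDerivAt (Icc_mem_nhds hx.1 hx.2)).ofReal_comp
    · apply ContinuousOn.intervalIntegrable
      rw [uIcc_of_le hab.le]
      exact Complex.continuous_ofReal.comp_continuousOn (hc (j+1) hj)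
  have iter : ∀ n : ℤ, n ≠ 0 → ∀ j ≤ 6, ‖fourierCoeffOn hab (fun x => (d 0 x : ℂ)) n‖ =
      ((b - a) / (2 * Real.pi * |(n:ℝ)|))^j * ‖fourierCoeffOn hab (fun x => (d j x : ℂ)) n‖ := by
    intro n hn j
    induction j with
    | zero => simp
    | succ j ih =>
      intro hj
      rw [ih (by omega), step n hn j (by omega), pow_succ]
      ring
  obtain ⟨M, hM⟩ := isCompact_Icc.exists_bound_of_continuousOn (hc 6 le_rfl)
  have hM0 : 0 ≤ M := le_trans (norm_nonneg _) (hM a (left_mem_Icc.2 hab.le))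
  have bd : ∀ n : ℤ, ‖fourierCoeffOn hab (fun x => (d 6 x : ℂ)) n‖ ≤ M := by
    intro n
    rw [fourierCoeffOn_eq_integral]
    have hba : 0 < b - a := by linarith
    have h1 : ‖∫ x in a..b, fourier (-n) (x : AddCircle (b - a)) • (d 6 x : ℂ)‖ ≤ M * |b - a| := by
      apply intervalIntegral.norm_integral_le_of_norm_le_const
      intro x hx
      rw [uIoc_of_le hab.le] at hx
      have := hM x ⟨hx.1.le, hx.2⟩
      rw [norm_smul, fourier_apply, Circle.norm_coe, one_mul, Complex.norm_real]
      exact this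
    rw [norm_smul, Real.norm_of_nonneg (by positivity)]
    rw [abs_of_pos hba] at h1
    rw [one_div, inv_mul_le_iff₀ hba]
    linarith
  refine ⟨‖fourierCoeffOn hab (fun x => (d 0 x : ℂ)) 0‖ + ((b - a)/Real.pi)^6 * M, ?_⟩
  intro k
  have hba : 0 < b - a := by linarith
  have hpi := Real.pi_pos
  by_cases hk : k = 0
  · subst hk
    simp [wt]
    positivity
  · rw [iter k hk 6 le_rfl, le_div_iff₀ (pow_pos (wt_pos k) 6)]
    have hk1 : (1:ℝ) ≤ |(k:ℝ)| := by exact_mod_cast Int.one_le_abs hk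
    have hk2 : wt k ≤ 2 * |(k:ℝ)| := by unfold wt; linarith
    have h3 : ((b - a) / (2 * Real.pi * |(k:ℝ)|)) * wt k ≤ (b-a)/Real.pi := by
      rw [div_mul_eq_mul_div, div_le_div_iff₀ (by positivity) hpi]
      calc (b - a) * wt k * Real.pi ≤ (b - a) * (2 * |(k:ℝ)|) * Real.pi := by gcongr
        _ = _ := by ring
    calc _ = (((b - a) / (2 * Real.pi * |(k:ℝ)|)) * wt k)^6 * ‖fourierCoeffOn hab (fun x => (d 6 x : ℂ)) k‖ := by ring
      _ ≤ ((b-a)/Real.pi)^6 * M := by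
        have := wt_pos k
        gcongr
        exact bd k
      _ ≤ _ := by have := norm_nonneg (fourierCoeffOn hab (fun x => (d 0 x : ℂ)) 0); linarith

lemma summable_wt_inv (n : ℕ) (hn : 2 ≤ n) : Summable (fun k : ℤ => 1 / wt k ^ n) := by
  have h2 : Summable (fun k : ℤ => 1 / (k:ℝ) ^ 2 + (if k = 0 then (1:ℝ) else 0)) :=
    (Real.summable_one_div_int_pow.2 (by norm_num)).add (hasSum_ite_eq 0 (1:ℝ)).summable
  refine Summable.of_nonneg_of_le (fun k => by have := wt_pos k; positivity) ?_ h2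
  intro k
  have h1 : 1 / wt k ^ n ≤ 1 / wt k ^ 2 := by
    have := wt_pos k
    gcongr
    exact one_le_wt k
  refine h1.trans ?_
  by_cases hk : k = 0
  · subst hk; simp [wt]
  · simp only [hk, if_false, add_zero]
    have : 0 < |(k:ℝ)| := abs_pos.2 (by exact_mod_cast hk)
    rw [← sq_abs (k:ℝ)]
    gcongr
    unfold wt; linarith

lemma coeff_sum {a b : ℝ} (hab : a < b) (f : ℝ → ℝ) (hc : ContinuousOn f (Icc a b))
    (hf : f a = f b) (hs : Summable (fun k => fourierCoeffOn hab (fun x => (f x : ℂ)) k))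
    (x : ℝ) (hx : x ∈ Icc a b) :
    HasSum (fun k => fourierCoeffOn hab (fun x => (f x : ℂ)) k * ee (2 * Real.pi / (b - a)) k x)
      (f x) := by
  have : Fact (0 < b - a) := ⟨by linarith⟩
  have key : ∀ y ∈ Ioc a b, HasSum (fun k => fourierCoeffOn hab (fun x => (f x : ℂ)) k * ee (2 * Real.pi / (b - a)) k y)
      (f y) := by
    intro y hy
    let g : C(AddCircle (b - a), ℂ) := ⟨AddCircle.liftIoc (b - a) a (fun x => (f x : ℂ)),
      AddCircle.liftIoc_continuous (by simp [hf]) (by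
        rw [add_sub_cancel]; exact Complex.continuous_ofReal.comp_continuousOn hc)⟩
    have := has_pointwise_sum_fourier_series_of_summable (f := g) hs (y : AddCircle (b - a))
    have h2 : g (y : AddCircle (b - a)) = f y := AddCircle.liftIoc_coe_apply (f := fun x => (f x : ℂ)) (p := b - a)
      (a := a) (by rwa [add_sub_cancel])
    rw [h2] at this
    convert this using 2 with k
    rw [smul_eq_mul, fourier_coe_apply]
    congr 1
    unfold ee
    congr 1
    push_cast
    ring
  by_cases h : x = a
  · subst h
    rw [hf]
    convert key b ⟨hab, le_rfl⟩ using 3 with k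
    unfold ee
    rw [Complex.exp_eq_exp_iff_exists_int]
    refine ⟨-k, ?_⟩
    have : (b - x : ℂ) ≠ 0 := by
      rw [← Complex.ofReal_sub]; exact_mod_cast (by linarith : b - x ≠ 0)
    push_cast
    field_simp
    ring
  · exact key x ⟨lt_of_le_of_ne hx.1 (Ne.symm h), hx.2⟩

lemma coeff_symm {a b : ℝ} (hab : a < b) (f : ℝ → ℝ) (k : ℤ) :
    fourierCoeffOn hab (fun x => (f x : ℂ)) (-k) =
      (starRingEnd ℂ) (fourierCoeffOn hab (fun x => (f x : ℂ)) k) := by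
  rw [fourierCoeffOn_eq_integral, fourierCoeffOn_eq_integral]
  rw [integral_of_le hab.le, integral_of_le hab.le]
  simp only [Complex.real_smul, map_mul, Complex.conj_ofReal]
  rw [← integral_conj]
  congr 2
  ext x
  simp [-fourier_apply, fourier_neg, Complex.conj_ofReal]

lemma fourier_data (ℓ₀ : ℝ) (hℓ₀ : 0 < ℓ₀) (Φ₀ : ℝ → ℝ)
    (hreg : ContDiffOn ℝ 6 Φ₀ (Icc (-(ℓ₀ / 2)) (ℓ₀ / 2)))
    (hbc : ∀ k ≤ 6, iteratedDerivWithin k Φ₀ (Icc (-(ℓ₀ / 2)) (ℓ₀ / 2)) (-(ℓ₀ / 2)) =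
      iteratedDerivWithin k Φ₀ (Icc (-(ℓ₀ / 2)) (ℓ₀ / 2)) (ℓ₀ / 2)) :
    ∃ a : ℤ → ℂ, (∃ C, ∀ k, ‖a k‖ ≤ C / wt k ^ 6) ∧ (∀ k, a (-k) = (starRingEnd ℂ) (a k)) ∧
      ∀ x ∈ Icc (-(ℓ₀ / 2)) (ℓ₀ / 2), HasSum (fun k => a k * ee (2 * Real.pi / ℓ₀) k x) (Φ₀ x) := by
  have hab : -(ℓ₀ / 2) < ℓ₀ / 2 := by linarith
  have hu := uniqueDiffOn_Icc hab
  obtain ⟨C, hC⟩ := coeff_decay hab (fun j => iteratedDerivWithin j Φ₀ (Icc (-(ℓ₀ / 2)) (ℓ₀ / 2)))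
    (fun j hj x hx => by
      have := (hreg.differentiableOn_iteratedDerivWithin (m := j) (by exact_mod_cast hj) hu x hx).hasDerivWithinAt
      rwa [iteratedDerivWithin_succ])
    (fun j hj => hreg.continuousOn_iteratedDerivWithin (by exact_mod_cast hj) hu)
    (fun j hj => hbc j hj.le)
  simp only [iteratedDerivWithin_zero] at hC
  refine ⟨fun k => fourierCoeffOn hab (fun x => (Φ₀ x : ℂ)) k, ⟨C, hC⟩, coeff_symm hab Φ₀, ?_⟩
  intro x hx
  have := coeff_sum hab Φ₀ hreg.continuousOn (by simpa using hbc 0 (by norm_num)) ?_ x hx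
  · rwa [show ℓ₀ / 2 - -(ℓ₀ / 2) = ℓ₀ by ring] at this
  · refine Summable.of_norm_bounded ((summable_wt_inv 6 (by norm_num)).mul_left C) ?_
    intro k
    rw [mul_one_div]
    exact hC k

end KS

namespace KS
open MeasureTheory intervalIntegral
open scoped ComplexConjugate

/-- linear symbol -/
noncomputable def lam (ω : ℝ) (k : ℤ) : ℝ := 3 * (ω * k)^4 - (ω * k)^2

/-- nonlinear prefactor -/
noncomputable def cc (ω : ℝ) : ℂ := -(Complex.I * ω / 2)

lemma lam_neg (ω : ℝ) (k : ℤ) : lam ω (-k) = lam ω k := by unfold lam; push_cast; ring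

lemma lam_ge (ω : ℝ) (k : ℤ) : (ω * k)^4 - 1 ≤ lam ω k := by
  unfold lam; nlinarith [sq_nonneg ((ω * k)^2 - 1/4)]

lemma lam_ge' (ω : ℝ) (k : ℤ) : -1 ≤ lam ω k := by
  have := lam_ge ω k
  have : 0 ≤ (ω * k)^4 := by positivity
  linarith

lemma conj_cc (ω : ℝ) : conj (cc ω) = - cc ω := by
  have h2 : conj (2:ℂ) = 2 := Complex.conj_ofNat 2
  simp [cc, h2]; ring

lemma triple_zero (s : Finset ℤ) (hs : ∀ k ∈ s, -k ∈ s) (u : ℤ → ℂ) (hu : ∀ k, k ∉ s → u k = 0) :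
    ∑ k ∈ s, ∑ j ∈ s, (k : ℂ) * u (-k) * (u j * u (k - j)) = 0 := by
  have h1 : ∑ k ∈ s, ∑ j ∈ s, (k : ℂ) * u (-k) * (u j * u (k - j)) =
      - ∑ k ∈ s, ∑ j ∈ s, (k : ℂ) * (u k * u j * u (-k - j)) := by
    rw [← Finset.sum_neg_distrib]
    refine Finset.sum_nbij' (fun k => -k) (fun k => -k) hs hs (by simp) (by simp) ?_
    intro k _
    rw [← Finset.sum_neg_distrib]
    refine Finset.sum_congr rfl fun j _ => ?_
    push_cast
    rw [neg_neg]
    ring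
  set T := ∑ k ∈ s, ∑ j ∈ s, (k : ℂ) * (u k * u j * u (-k - j)) with hT
  have h2 : T = ∑ k ∈ s, ∑ j ∈ s, (j : ℂ) * (u k * u j * u (-k - j)) := by
    rw [hT, Finset.sum_comm]
    refine Finset.sum_congr rfl fun j _ => Finset.sum_congr rfl fun k _ => ?_
    rw [show -k - j = -j - k by ring]
    ring
  have h3 : T = ∑ k ∈ s, ∑ j ∈ s, ((-k - j : ℤ) : ℂ) * (u k * u j * u (-k - j)) := by
    rw [h2]
    refine Finset.sum_congr rfl fun k _ => ?_
    rw [← tsum_eq_sum (L := .unconditional ℤ) (s := s) (f := fun j : ℤ => (j : ℂ) * (u k * u j * u (-k - j)))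
        (fun j hj => by simp [hu j hj]),
      ← tsum_eq_sum (L := .unconditional ℤ) (s := s) (f := fun j : ℤ => ((-k - j : ℤ) : ℂ) * (u k * u j * u (-k - j)))
        (fun j hj => by simp [hu j hj]),
      ← (Equiv.subLeft (-k)).tsum_eq (fun j : ℤ => (j : ℂ) * (u k * u j * u (-k - j)))]
    refine tsum_congr fun j => ?_
    simp only [Equiv.subLeft_apply]
    rw [show -k - (-k - j) = j by ring]
    ring
  have h4 : T + T + T = 0 := by
    nth_rewrite 1 [hT]
    nth_rewrite 1 [h2]
    rw [h3, ← Finset.sum_add_distrib, ← Finset.sum_add_distrib]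
    refine Finset.sum_eq_zero fun k _ => ?_
    rw [← Finset.sum_add_distrib, ← Finset.sum_add_distrib]
    refine Finset.sum_eq_zero fun j _ => ?_
    push_cast
    ring
  rw [h1]
  linear_combination (-1/3 : ℂ) * h4

lemma global_ode {E : Type*} [NormedAddCommGroup E] [NormedSpace ℝ E] [CompleteSpace E]
    (F : E → E) (K : NNReal) (hK : LipschitzWith K F) (L : ℝ) (hL : ∀ x, ‖F x‖ ≤ L)
    (T : ℝ) (hT : 0 ≤ T) (x₀ : E) :
    ∃ α : ℝ → E, α 0 = x₀ ∧ ∀ t ∈ Icc 0 T, HasDerivWithinAt α (F (α t)) (Icc 0 T) t := by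
  have hL0 : 0 ≤ L := le_trans (norm_nonneg _) (hL 0)
  have hpl : IsPicardLindelof (fun _ => F) (tmin := 0) (tmax := T) ⟨0, left_mem_Icc.2 hT⟩ x₀
      (⟨L, hL0⟩ * ⟨T, hT⟩) 0 ⟨L, hL0⟩ K := by
    refine ⟨fun t _ => hK.lipschitzOnWith, fun x _ => continuousOn_const, fun t _ x _ => hL x, ?_⟩
    simp only [NNReal.coe_mul, sub_zero, sub_self, max_eq_left hT, NNReal.coe_zero]
    exact le_rfl
  exact hpl.exists_eq_forall_mem_Icc_hasDerivWithinAt₀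

/-- extension by zero -/
noncomputable def ext (s : Finset ℤ) (x : s → ℂ) (k : ℤ) : ℂ := if h : k ∈ s then x ⟨k, h⟩ else 0

/-- Galerkin vector field -/
noncomputable def GG (ω : ℝ) (s : Finset ℤ) (x : s → ℂ) (k : ℤ) : ℂ :=
  -(lam ω k : ℂ) * ext s x k + cc ω * k * ∑ j ∈ s, ext s x j * ext s x (k - j)

/-- symmetrised -/
noncomputable def HH (ω : ℝ) (s : Finset ℤ) (x : s → ℂ) (k : ℤ) : ℂ :=
  (GG ω s x k + conj (GG ω s x (-k))) / 2

lemma ext_contDiff (s : Finset ℤ) (k : ℤ) : ContDiff ℝ 1 (fun x => ext s x k) := by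
  unfold ext
  by_cases h : k ∈ s
  · simp only [h, dif_pos]; fun_prop
  · simp only [h]; simp only [dif_neg, not_false_eq_true]; exact contDiff_const

lemma GG_contDiff (ω : ℝ) (s : Finset ℤ) (k : ℤ) : ContDiff ℝ 1 (fun x => GG ω s x k) := by
  unfold GG
  refine (contDiff_const.mul (ext_contDiff s k)).add (contDiff_const.mul ?_)
  exact ContDiff.sum fun j _ => (ext_contDiff s j).mul (ext_contDiff s _)

lemma HH_contDiff (ω : ℝ) (s : Finset ℤ) (k : ℤ) : ContDiff ℝ 1 (fun x => HH ω s x k) := by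
  unfold HH
  exact ((GG_contDiff ω s k).add (Complex.conjCLE.contDiff.comp (GG_contDiff ω s (-k)))).div_const 2

lemma HH_symm (ω : ℝ) (s : Finset ℤ) (x : s → ℂ) (k : ℤ) : HH ω s x (-k) = conj (HH ω s x k) := by
  have h2 : conj (2:ℂ) = 2 := Complex.conj_ofNat 2
  simp [HH, h2]; ring

lemma GG_symm (ω : ℝ) (s : Finset ℤ) (hs : ∀ k ∈ s, -k ∈ s) (x : s → ℂ)
    (hx : ∀ k, ext s x (-k) = conj (ext s x k)) (k : ℤ) :
    GG ω s x (-k) = conj (GG ω s x k) := by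
  have : ∑ j ∈ s, ext s x j * ext s x (-k - j) = ∑ j ∈ s, conj (ext s x j) * conj (ext s x (k - j)) := by
    refine Finset.sum_nbij' (fun k => -k) (fun k => -k) hs hs (by simp) (by simp) ?_
    intro j _
    rw [← hx, ← hx, neg_neg, show -(k - -j) = -k - j by ring]
  simp only [GG, lam_neg, hx k, map_add, map_mul, map_neg, Complex.conj_ofReal, map_sum, conj_cc, this]
  push_cast
  simp

lemma HH_eq (ω : ℝ) (s : Finset ℤ) (hs : ∀ k ∈ s, -k ∈ s) (x : s → ℂ)
    (hx : ∀ k, ext s x (-k) = conj (ext s x k)) (k : ℤ) : HH ω s x k = GG ω s x k := by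
  unfold HH
  rw [GG_symm ω s hs x hx, Complex.conj_conj]; ring

lemma energy_ineq (ω : ℝ) (s : Finset ℤ) (hs : ∀ k ∈ s, -k ∈ s) (x : s → ℂ)
    (hx : ∀ k, ext s x (-k) = conj (ext s x k)) :
    ∑ k ∈ s, inner ℝ (ext s x k) (GG ω s x k) ≤ ∑ k ∈ s, ‖ext s x k‖^2 := by
  have h0 := triple_zero s hs (ext s x) (fun k hk => by simp [ext, hk])
  have h1 : ∑ k ∈ s, inner ℝ (ext s x k) (GG ω s x k) =
      ∑ k ∈ s, -(lam ω k) * ‖ext s x k‖^2 + (cc ω * ∑ k ∈ s, ∑ j ∈ s, (k : ℂ) * ext s x (-k) *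
        (ext s x j * ext s x (k - j))).re := by
    rw [Finset.mul_sum, Complex.re_sum, ← Finset.sum_add_distrib]
    refine Finset.sum_congr rfl fun k _ => ?_
    rw [Complex.inner, GG, add_mul, Complex.add_re]
    congr 1
    · rw [mul_assoc, Complex.mul_conj, Complex.normSq_eq_norm_sq, ← Complex.ofReal_neg,
        ← Complex.ofReal_mul, Complex.ofReal_re]
    · rw [← hx, ← Finset.mul_sum]
      congr 1; ring
  rw [h1, h0]
  simp only [mul_zero, Complex.zero_re, add_zero]
  refine Finset.sum_le_sum fun k _ => ?_
  have := lam_ge' ω k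
  nlinarith [sq_nonneg ‖ext s x k‖]


lemma galerkin (ω : ℝ) (s : Finset ℤ) (hs : ∀ k ∈ s, -k ∈ s) (T : ℝ) (hT : 0 ≤ T) (u0 : ℤ → ℂ)
    (h0 : ∀ k, u0 (-k) = conj (u0 k)) :
    ∃ u : ℝ → ℤ → ℂ, (∀ t, ∀ k, k ∉ s → u t k = 0) ∧ (∀ k ∈ s, u 0 k = u0 k) ∧
      (∀ t ∈ Icc 0 T, ∀ k, u t (-k) = conj (u t k)) ∧
      (∀ t ∈ Icc 0 T, ∑ k ∈ s, ‖u t k‖^2 ≤ Real.exp (2 * t) * ∑ k ∈ s, ‖u0 k‖^2) ∧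
      ∀ k ∈ s, ∀ t ∈ Icc 0 T, HasDerivWithinAt (fun t => u t k)
        (-(lam ω k : ℂ) * u t k + cc ω * k * ∑ j ∈ s, u t j * u t (k - j)) (Icc 0 T) t := by
  set e0 := ∑ k ∈ s, ‖u0 k‖^2 with he0
  have he0' : 0 ≤ e0 := Finset.sum_nonneg fun k _ => by positivity
  set R := Real.exp (2 * T) * e0 + 1 with hR
  have hR1 : 1 ≤ R := by have := Real.exp_pos (2 * T); nlinarith [mul_nonneg this.le he0']
  let φ : ContDiffBump (0 : s → ℂ) := ⟨R, R + 1, by linarith, by linarith⟩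
  let F : (s → ℂ) → (s → ℂ) := fun x => φ x • fun k : s => HH ω s x k
  have hF1 : ContDiff ℝ 1 F :=
    φ.contDiff.smul (contDiff_pi.2 fun k => HH_contDiff ω s k)
  have hF2 : HasCompactSupport F := φ.hasCompactSupport.smul_right
  obtain ⟨K, hK⟩ := hF1.lipschitzWith_of_hasCompactSupport hF2 (by norm_num)
  obtain ⟨L, hL⟩ := hF1.continuous.bounded_above_of_compact_support hF2
  obtain ⟨α, hα0, hα⟩ := global_ode F K hK L hL T hT (fun k : s => u0 k)
  have hd : ∀ k ∈ s, ∀ t ∈ Icc 0 T, HasDerivWithinAt (fun t => ext s (α t) k)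
      ((φ (α t) : ℂ) * HH ω s (α t) k) (Icc 0 T) t := by
    intro k hk t ht
    have := (hasDerivWithinAt_pi.1 (hα t ht)) ⟨k, hk⟩
    simpa [ext, hk, F] using this
  have hz : ∀ t k, k ∉ s → ext s (α t) k = 0 := fun t k hk => by simp [ext, hk]
  have hi : ∀ k ∈ s, ext s (α 0) k = u0 k := fun k hk => by simp [ext, hk, hα0]
  have hsym : ∀ t ∈ Icc 0 T, ∀ k, ext s (α t) (-k) = conj (ext s (α t) k) := by
    intro t ht k
    by_cases hk : k ∈ s
    · have hk' := hs k hk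
      have hdd : ∀ t ∈ Icc 0 T, HasDerivWithinAt
          (fun t => ext s (α t) (-k) - conj (ext s (α t) k)) 0 (Icc 0 T) t := by
        intro t ht
        have h1 := hd (-k) hk' t ht
        have h2 := (hd k hk t ht).star
        refine (h1.sub h2).congr_deriv ?_
        rw [HH_symm, star_mul']
        simp
      have := constant_of_derivWithin_zero (f := fun t => ext s (α t) (-k) - conj (ext s (α t) k))
        (fun t ht => (hdd t ht).differentiableWithinAt)
        (fun t ht => by
          have hT' : 0 < T := lt_of_le_of_lt ht.1 ht.2
          exact (hdd t ⟨ht.1, ht.2.le⟩).derivWithin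
            (uniqueDiffOn_Icc hT' t ⟨ht.1, ht.2.le⟩)) t ht
      rw [hi _ hk', hi _ hk, h0, sub_self] at this
      exact sub_eq_zero.1 this
    · have hk' : -k ∉ s := fun h => hk (by simpa using hs _ h)
      rw [hz t k hk, hz t _ hk']; simp
  have hen : ∀ t ∈ Icc 0 T, ∑ k ∈ s, ‖ext s (α t) k‖^2 ≤ Real.exp (2 * t) * e0 := by
    set e := fun t => ∑ k ∈ s, ‖ext s (α t) k‖^2 with he
    have hde : ∀ t ∈ Icc 0 T, HasDerivWithinAt e
        (∑ k ∈ s, 2 * inner ℝ (ext s (α t) k) ((φ (α t) : ℂ) * HH ω s (α t) k)) (Icc 0 T) t := by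
      intro t ht
      exact HasDerivWithinAt.fun_sum fun k hk => (hd k hk t ht).norm_sq
    have hle : ∀ t ∈ Icc 0 T,
        ∑ k ∈ s, 2 * inner ℝ (ext s (α t) k) ((φ (α t) : ℂ) * HH ω s (α t) k) ≤ 2 * e t := by
      intro t ht
      have h1 := energy_ineq ω s hs (α t) (hsym t ht)
      have h2 : ∑ k ∈ s, 2 * inner ℝ (ext s (α t) k) ((φ (α t) : ℂ) * HH ω s (α t) k) =
          2 * (φ (α t) * ∑ k ∈ s, inner ℝ (ext s (α t) k) (GG ω s (α t) k)) := by
        rw [Finset.mul_sum, Finset.mul_sum]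
        refine Finset.sum_congr rfl fun k _ => ?_
        rw [HH_eq ω s hs (α t) (hsym t ht), ← Complex.real_smul, inner_smul_right]
      rw [h2]
      have h3 : 0 ≤ e t := Finset.sum_nonneg fun k _ => by positivity
      have h4 := mul_le_mul_of_nonneg_left h1 (φ.nonneg' (α t))
      have h5 : φ (α t) * e t ≤ 1 * e t := mul_le_mul_of_nonneg_right φ.le_one h3
      have h6 : φ (α t) * ∑ k ∈ s, ‖ext s (α t) k‖^2 = φ (α t) * e t := rfl
      linarith
    have anti : AntitoneOn (fun t => Real.exp (-2 * t) * e t) (Icc 0 T) := by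
      have hdd : ∀ t ∈ interior (Icc 0 T), HasDerivAt (fun t => Real.exp (-2 * t) * e t)
          (Real.exp (-2 * t) * (-2) * e t + Real.exp (-2 * t) *
          ∑ k ∈ s, 2 * inner ℝ (ext s (α t) k) ((φ (α t) : ℂ) * HH ω s (α t) k)) t := by
        intro t ht
        rw [interior_Icc] at ht
        refine HasDerivAt.mul ?_ ((hde t ⟨ht.1.le, ht.2.le⟩).hasDerivAt (Icc_mem_nhds ht.1 ht.2))
        have := ((hasDerivAt_id t).const_mul (-2)).exp
        simpa using this
      apply antitoneOn_of_deriv_nonpos (convex_Icc 0 T)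
      · exact ContinuousOn.mul (by fun_prop) (fun t ht => (hde t ht).continuousWithinAt)
      · intro t ht
        exact (hdd t ht).differentiableAt.differentiableWithinAt
      · intro t ht
        rw [(hdd t ht).deriv]
        rw [interior_Icc] at ht
        have := mul_le_mul_of_nonneg_left (hle t ⟨ht.1.le, ht.2.le⟩) (Real.exp_pos (-2 * t)).le
        linarith
    intro t ht
    have h1 := anti (left_mem_Icc.2 hT) ht ht.1
    have h2 : e 0 = e0 := Finset.sum_congr rfl fun k hk => by rw [hi k hk]
    simp only [mul_zero, Real.exp_zero, one_mul, h2] at h1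
    have h3 := mul_le_mul_of_nonneg_left h1 (Real.exp_pos (2 * t)).le
    rw [← mul_assoc, ← Real.exp_add] at h3
    simpa using h3
  have hφ : ∀ t ∈ Icc 0 T, φ (α t) = 1 := by
    intro t ht
    apply φ.one_of_mem_closedBall
    rw [mem_closedBall_zero_iff, pi_norm_le_iff_of_nonneg (by change 0 ≤ R; linarith)]
    intro k
    change _ ≤ R
    have h1 := hen t ht
    have h2 : ‖α t k‖^2 ≤ ∑ k ∈ s, ‖ext s (α t) k‖^2 := by
      have := Finset.single_le_sum (f := fun k => ‖ext s (α t) k‖^2) (fun k _ => by positivity) k.2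
      simpa [ext] using this
    have h3 : Real.exp (2 * t) * e0 ≤ Real.exp (2 * T) * e0 := by
      gcongr
      exact ht.2
    have h4 : ‖α t k‖^2 ≤ R := by linarith
    nlinarith [norm_nonneg (α t k)]
  refine ⟨fun t => ext s (α t), hz, hi, hsym, hen, ?_⟩
  intro k hk t ht
  have := hd k hk t ht
  rw [hφ t ht, HH_eq ω s hs (α t) (hsym t ht)] at this
  simpa [GG] using this

end KS

namespace KS
open MeasureTheory intervalIntegral Filter Topology
open scoped ComplexConjugate

lemma duhamel {T : ℝ} (l : ℝ) (c : ℂ) (v g : ℝ → ℂ)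
    (hd : ∀ t ∈ Icc 0 T, HasDerivWithinAt v (-(l : ℂ) * v t + c * g t) (Icc 0 T) t)
    (hg : ContinuousOn g (Icc 0 T)) (t : ℝ) (ht : t ∈ Icc 0 T) :
    v t = (Real.exp (-l * t) : ℂ) * v 0 + c * ∫ s in (0:ℝ)..t, (Real.exp (-l * (t - s)) : ℂ) * g s := by
  have hsub : Icc 0 t ⊆ Icc 0 T := Icc_subset_Icc_right ht.2
  have hexp : ∀ s, HasDerivAt (fun s : ℝ => (Real.exp (-l * (t - s)) : ℂ))
      ((Real.exp (-l * (t - s)) * l : ℝ) : ℂ) s := by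
    intro s
    have h1 : HasDerivAt (fun s : ℝ => -l * (t - s)) l s := by
      have := ((hasDerivAt_id s).const_sub t).const_mul (-l)
      simpa using this
    exact (h1.exp).ofReal_comp
  have key := integral_eq_sub_of_hasDerivAt_of_le (a := 0) (b := t) (E := ℂ)
    (f := fun s => (Real.exp (-l * (t - s)) : ℂ) * v s)
    (f' := fun s => c * ((Real.exp (-l * (t - s)) : ℂ) * g s)) ht.1 ?_ ?_ ?_
  · rw [intervalIntegral.integral_const_mul] at key
    rw [key]
    simp
  · refine ContinuousOn.mul (fun s _ => (hexp s).continuousAt.continuousWithinAt) ?_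
    exact fun s hs => ((hd s (hsub hs)).continuousWithinAt).mono hsub
  · intro s hs
    have h2 : HasDerivAt v (-(l : ℂ) * v s + c * g s) s :=
      (hd s (hsub (Ioo_subset_Icc_self hs))).hasDerivAt
        (Icc_mem_nhds hs.1 (lt_of_lt_of_le hs.2 ht.2))
    refine ((hexp s).mul h2).congr_deriv ?_
    push_cast; ring
  · apply ContinuousOn.intervalIntegrable_of_Icc ht.1
    refine continuousOn_const.mul (ContinuousOn.mul (fun s _ => (hexp s).continuousAt.continuousWithinAt) (hg.mono hsub))

lemma duh_bound {T t : ℝ} (l μ : ℝ) (hμ : 0 < μ) (hl : μ - 1 ≤ l) (g : ℝ → ℂ) (ht : t ∈ Icc 0 T)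
    (G : ℝ) (hG : 0 ≤ G) (hg : ∀ s ∈ Icc 0 t, ‖g s‖ ≤ G) :
    ‖∫ s in (0:ℝ)..t, (Real.exp (-l * (t - s)) : ℂ) * g s‖ ≤ Real.exp T * G / μ := by
  have h1 : ‖∫ s in (0:ℝ)..t, (Real.exp (-l * (t - s)) : ℂ) * g s‖ ≤
      ∫ s in (0:ℝ)..t, Real.exp T * G * Real.exp (-μ * (t - s)) := by
    apply norm_integral_le_of_norm_le ht.1
    · refine Filter.Eventually.of_forall fun s hs => ?_
      have hs' : s ∈ Icc 0 t := ⟨hs.1.le, hs.2⟩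
      rw [norm_mul, Complex.norm_real, Real.norm_eq_abs, abs_of_pos (Real.exp_pos _)]
      have : Real.exp (-l * (t - s)) ≤ Real.exp T * Real.exp (-μ * (t - s)) := by
        rw [← Real.exp_add]
        apply Real.exp_le_exp.2
        have a1 : 0 ≤ t - s := by linarith [hs.2]
        nlinarith [hs'.1, ht.2, mul_le_mul_of_nonneg_right hl a1]
      calc _ ≤ Real.exp T * Real.exp (-μ * (t - s)) * G :=
            mul_le_mul this (hg s hs') (norm_nonneg _) (by positivity)
        _ = _ := by ring
    · apply Continuous.intervalIntegrable; fun_prop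
  refine h1.trans ?_
  rw [intervalIntegral.integral_const_mul]
  have h2 : ∫ s in (0:ℝ)..t, Real.exp (-μ * (t - s)) = 1 / μ - Real.exp (-μ * t) / μ := by
    have : ∀ s ∈ uIcc 0 t, HasDerivAt (fun s : ℝ => Real.exp (-μ * (t - s)) / μ)
      (Real.exp (-μ * (t - s))) s := by
      intro s _
      have h1 : HasDerivAt (fun s : ℝ => -μ * (t - s)) μ s := by
        have := ((hasDerivAt_id s).const_sub t).const_mul (-μ)
        simpa using this
      refine (h1.exp.div_const μ).congr_deriv ?_
      field_simp
    rw [integral_eq_sub_of_hasDerivAt this (by apply Continuous.intervalIntegrable; fun_prop)]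
    simp
  rw [h2, mul_div_assoc, mul_assoc]
  have h3 : 0 < Real.exp (-μ * t) / μ := by positivity
  have : G * (1 / μ - Real.exp (-μ * t) / μ) ≤ G / μ := by
    rw [div_eq_mul_one_div G μ]
    exact mul_le_mul_of_nonneg_left (by linarith) hG
  exact mul_le_mul_of_nonneg_left this (Real.exp_pos _).le

lemma conv_fin_bound (s : Finset ℤ) (u : ℤ → ℂ) (hu : ∀ k, k ∉ s → u k = 0) (k : ℤ) :
    ‖∑ j ∈ s, u j * u (k - j)‖ ≤ ∑ j ∈ s, ‖u j‖^2 := by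
  have h1 : ∑ j ∈ s, ‖u (k - j)‖^2 ≤ ∑ j ∈ s, ‖u j‖^2 := by
    rw [← Finset.sum_image (s := s) (g := fun j => k - j) (f := fun j => ‖u j‖^2) (by
      intro a _ b _ h; simpa using h)]
    refine (Finset.sum_le_sum_of_subset_of_nonneg (Finset.subset_union_left (s₂ := s))
      (fun i _ _ => by positivity)).trans (le_of_eq ?_)
    exact (Finset.sum_subset Finset.subset_union_right (fun x _ hx => by simp [hu x hx])).symm
  calc _ ≤ ∑ j ∈ s, ‖u j * u (k - j)‖ := norm_sum_le _ _
    _ ≤ ∑ j ∈ s, (‖u j‖^2 / 2 + ‖u (k-j)‖^2 / 2) := by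
      apply Finset.sum_le_sum; intro j _; rw [norm_mul]
      nlinarith [sq_nonneg (‖u j‖ - ‖u (k-j)‖)]
    _ ≤ _ := by
      rw [Finset.sum_add_distrib, ← Finset.sum_div, ← Finset.sum_div]; linarith

lemma wt_le (k : ℤ) (hk : k ≠ 0) : wt k ≤ 2 * |(k:ℝ)| := by
  have : (1:ℝ) ≤ |(k:ℝ)| := by exact_mod_cast Int.one_le_abs hk
  unfold wt; linarith

lemma norm_cc (ω : ℝ) (hω : 0 < ω) : ‖cc ω‖ = ω / 2 := by
  simp [cc, abs_of_pos hω]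

lemma norm_intCast' (k : ℤ) : ‖(k:ℂ)‖ = |(k:ℝ)| := Complex.norm_intCast k

/-- uniform bound for one mode -/
lemma mode_bound {T t : ℝ} (ω : ℝ) (hω : 0 < ω) (k : ℤ) (v : ℂ) (v0 : ℂ) (C M : ℝ) (hM : 0 ≤ M)
    (hv0 : ‖v0‖ ≤ C / wt k ^ 2) (g : ℝ → ℂ) (ht : t ∈ Icc 0 T) (hg : ∀ s ∈ Icc 0 t, ‖g s‖ ≤ M)
    (hv : v = (Real.exp (-lam ω k * t) : ℂ) * v0 +
      cc ω * k * ∫ s in (0:ℝ)..t, (Real.exp (-lam ω k * (t - s)) : ℂ) * g s) :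
    ‖v‖ ≤ (Real.exp T * (C + 2 * M / ω^3)) / wt k ^ 2 := by
  have hw := wt_pos k
  have h1 : ‖(Real.exp (-lam ω k * t) : ℂ) * v0‖ ≤ Real.exp T * (C / wt k ^ 2) := by
    rw [norm_mul, Complex.norm_real, Real.norm_eq_abs, abs_of_pos (Real.exp_pos _)]
    refine mul_le_mul (Real.exp_le_exp.2 ?_) hv0 (norm_nonneg _) (Real.exp_pos _).le
    have := lam_ge' ω k
    nlinarith [ht.1, ht.2, mul_le_mul_of_nonneg_right this ht.1]
  have h2 : ‖cc ω * k * ∫ s in (0:ℝ)..t, (Real.exp (-lam ω k * (t - s)) : ℂ) * g s‖ ≤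
      Real.exp T * (2 * M / ω^3) / wt k ^ 2 := by
    by_cases hk : k = 0
    · subst hk; simp; positivity
    · have hk1 : (1:ℝ) ≤ |(k:ℝ)| := by exact_mod_cast Int.one_le_abs hk
      have hkne : (k:ℝ) ≠ 0 := by exact_mod_cast hk
      have hb := duh_bound (lam ω k) ((ω * k)^4) (by positivity) (lam_ge ω k) g ht M hM hg
      rw [norm_mul, norm_mul, norm_cc ω hω, norm_intCast']
      have hk4 : (ω * k)^4 = ω^4 * |(k:ℝ)|^4 := by
        rw [mul_pow]; congr 1; exact ((Even.pow_abs (by decide) _)).symm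
      have hw2 : wt k ^ 2 ≤ 4 * |(k:ℝ)|^3 := by
        have := wt_le k hk
        nlinarith [mul_le_mul this this hw.le (by positivity)]
      rw [hk4] at hb
      generalize |(k:ℝ)| = x at *
      calc _ ≤ ω / 2 * x * (Real.exp T * M / (ω^4 * x^4)) :=
            mul_le_mul_of_nonneg_left hb (by positivity)
        _ = Real.exp T * M / (2 * ω^3) / x^3 := by field_simp
        _ ≤ Real.exp T * M / (2 * ω^3) / (wt k ^ 2 / 4) := by
            gcongr; linarith
        _ = _ := by field_simp; norm_num
  rw [hv]
  refine (norm_add_le _ _).trans ((add_le_add h1 h2).trans (le_of_eq ?_))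
  field_simp

lemma norm_lam_le (ω : ℝ) (k : ℤ) : ‖(-(lam ω k : ℂ))‖ = |lam ω k| := by
  rw [norm_neg, Complex.norm_real, Real.norm_eq_abs]

/-- Galerkin family with uniform bounds -/
lemma galerkin2 (ω : ℝ) (hω : 0 < ω) (u0 : ℤ → ℂ) (h0 : ∀ k, u0 (-k) = conj (u0 k)) (C : ℝ)
    (hC : ∀ k, ‖u0 k‖ ≤ C / wt k ^ 2) :
    ∃ (Bd : ℝ → ℝ) (L : ℝ → ℤ → ℝ) (f : ℕ → ℝ → ℤ → ℂ),
      (∀ n T t k, t ∈ Icc 0 T → ‖f n t k‖ ≤ Bd T / wt k ^ 2) ∧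
      (∀ n T t s k, t ∈ Icc 0 T → s ∈ Icc 0 T → ‖f n t k - f n s k‖ ≤ L T k * |t - s|) ∧
      (∀ n t k, f n t (-k) = conj (f n t k)) ∧
      (∀ n : ℕ, ∀ k ∈ Finset.Icc (-(n:ℤ)) n, ∀ t ∈ Icc 0 (n:ℝ),
        f n t k = (Real.exp (-lam ω k * t) : ℂ) * u0 k + cc ω * k *
          ∫ s in (0:ℝ)..t, (Real.exp (-lam ω k * (t - s)) : ℂ) * ∑' j, f n s j * f n s (k - j)) := by
  have hC0 : 0 ≤ C := by
    have := (norm_nonneg _).trans (hC 0)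
    simpa [wt] using this
  have hsum : Summable fun k => ‖u0 k‖^2 := by
    refine Summable.of_nonneg_of_le (fun k => by positivity) (fun k => ?_)
      ((summable_wt_inv 4 (by norm_num)).mul_left (C^2))
    have := hC k
    have h2 := pow_le_pow_left₀ (norm_nonneg _) this 2
    refine h2.trans (le_of_eq ?_)
    have := wt_pos k
    field_simp
  set S := ∑' k, ‖u0 k‖^2 with hS
  have hS0 : 0 ≤ S := tsum_nonneg fun k => by positivity
  have hsN : ∀ n : ℕ, ∀ k ∈ Finset.Icc (-(n:ℤ)) n, -k ∈ Finset.Icc (-(n:ℤ)) n := by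
    intro n k hk; rw [Finset.mem_Icc] at *; omega
  choose u huz hu0 husym huen hud using fun n : ℕ =>
    galerkin ω (Finset.Icc (-(n:ℤ)) n) (hsN n) n (Nat.cast_nonneg n) u0 h0
  -- energy bound
  set M := fun T : ℝ => Real.exp (2 * T) * S with hMdef
  have hM0 : ∀ T, 0 ≤ M T := fun T => by positivity
  have hMmono : ∀ s t, s ≤ t → M s ≤ M t := fun s t h => by
    simp only [hMdef]; gcongr
  have hconv : ∀ n : ℕ, ∀ t ∈ Icc 0 (n:ℝ), ∀ k,
      ‖∑ j ∈ Finset.Icc (-(n:ℤ)) n, u n t j * u n t (k - j)‖ ≤ M t := by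
    intro n t ht k
    refine (conv_fin_bound _ (u n t) (huz n t) k).trans ((huen n t ht).trans ?_)
    exact mul_le_mul_of_nonneg_left (hsum.sum_le_tsum _ (fun _ _ => by positivity)) (Real.exp_pos _).le
  have hcont : ∀ (n : ℕ) k, ContinuousOn (fun t => u n t k) (Icc 0 (n:ℝ)) := by
    intro n k
    by_cases hk : k ∈ Finset.Icc (-(n:ℤ)) n
    · exact fun t ht => (hud n k hk t ht).continuousWithinAt
    · simp only [huz n _ k hk]; exact continuousOn_const
  have hmild : ∀ n : ℕ, ∀ k ∈ Finset.Icc (-(n:ℤ)) n, ∀ t ∈ Icc 0 (n:ℝ),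
        u n t k = (Real.exp (-lam ω k * t) : ℂ) * u0 k + cc ω * k *
          ∫ s in (0:ℝ)..t, (Real.exp (-lam ω k * (t - s)) : ℂ) *
            ∑ j ∈ Finset.Icc (-(n:ℤ)) n, u n s j * u n s (k - j) := by
    intro n k hk t ht
    have := duhamel (lam ω k) (cc ω * k) (fun t => u n t k)
      (fun s => ∑ j ∈ Finset.Icc (-(n:ℤ)) n, u n s j * u n s (k - j)) (hud n k hk)
      (continuousOn_finsetSum _ fun j _ => (hcont n j).mul (hcont n (k-j))) t ht
    rw [← hu0 n k hk]; exact this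
  set Bd := fun T : ℝ => Real.exp T * (C + 2 * M T / ω^3) with hBd
  have hBd0 : ∀ T, 0 ≤ Bd T := fun T => by have := hM0 T; simp only [hBd]; positivity
  have hbound : ∀ n : ℕ, ∀ T t : ℝ, ∀ k, t ∈ Icc 0 T → t ≤ n → ‖u n t k‖ ≤ Bd T / wt k ^ 2 := by
    intro n T t k ht htn
    by_cases hk : k ∈ Finset.Icc (-(n:ℤ)) n
    · exact mode_bound ω hω k _ (u0 k) C (M T) (hM0 T) (hC k) _ ht
        (fun s hs => (hconv n s ⟨hs.1, hs.2.trans htn⟩ k).trans (hMmono _ _ (hs.2.trans ht.2)))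
        (hmild n k hk t ⟨ht.1, htn⟩)
    · rw [huz n t k hk, norm_zero]; have := hBd0 T; have := wt_pos k; positivity
  set L := fun (T : ℝ) (k : ℤ) => |lam ω k| * (Bd T / wt k ^ 2) + ω / 2 * |(k:ℝ)| * M T with hL
  have hL0 : ∀ T k, 0 ≤ L T k := fun T k => by
    have := hBd0 T; have := hM0 T; have := wt_pos k; simp only [hL]; positivity
  have hlip : ∀ n : ℕ, ∀ T t s : ℝ, ∀ k, t ∈ Icc 0 T → s ∈ Icc 0 T → t ≤ n → s ≤ n →
      ‖u n t k - u n s k‖ ≤ L T k * |t - s| := by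
    intro n T t s k ht hs htn hsn
    by_cases hk : k ∈ Finset.Icc (-(n:ℤ)) n
    · have hsub : Icc 0 (min T n) ⊆ Icc 0 (n:ℝ) := Icc_subset_Icc_right (min_le_right _ _)
      have := Convex.norm_image_sub_le_of_norm_hasDerivWithin_le (C := L T k)
        (s := Icc 0 (min T n)) (f := fun t => u n t k) (x := s) (y := t)
        (fun x hx => (hud n k hk x (hsub hx)).mono hsub) ?_ (convex_Icc _ _)
        ⟨hs.1, le_min hs.2 hsn⟩ ⟨ht.1, le_min ht.2 htn⟩
      · exact this
      · intro x hx
        have hxn := hx.2.trans (min_le_right _ _)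
        have hxT := hx.2.trans (min_le_left _ _)
        refine (norm_add_le _ _).trans (add_le_add ?_ ?_)
        · rw [norm_mul, norm_lam_le]
          exact mul_le_mul_of_nonneg_left (hbound n T x k ⟨hx.1, hxT⟩ hxn) (abs_nonneg _)
        · rw [norm_mul, norm_mul, norm_cc ω hω, norm_intCast']
          exact mul_le_mul_of_nonneg_left ((hconv n x ⟨hx.1, hxn⟩ k).trans (hMmono _ _ hxT))
            (by positivity)
    · rw [huz n t k hk, huz n s k hk]; simp; have := hL0 T k; positivity
  have hpr : ∀ (n : ℕ) (t : ℝ), max 0 (min (n:ℝ) t) ∈ Icc 0 (n:ℝ) := fun n t =>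
    ⟨le_max_left _ _, max_le (Nat.cast_nonneg n) (min_le_left _ _)⟩
  have hprT : ∀ (n : ℕ) (t T : ℝ), t ∈ Icc 0 T → max 0 (min (n:ℝ) t) ∈ Icc 0 T := fun n t T h =>
    ⟨le_max_left _ _, max_le (h.1.trans h.2) ((min_le_right _ _).trans h.2)⟩
  have hpre : ∀ (n : ℕ) (t : ℝ), t ∈ Icc 0 (n:ℝ) → max 0 (min (n:ℝ) t) = t := fun n t h => by
    rw [min_eq_right h.2, max_eq_right h.1]
  refine ⟨Bd, L, fun n t k => u n (max 0 (min (n:ℝ) t)) k, ?_, ?_, ?_, ?_⟩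
  · intro n T t k ht
    exact hbound n T _ k (hprT n t T ht) (hpr n t).2
  · intro n T t s k ht hs
    refine (hlip n T _ _ k (hprT n t T ht) (hprT n s T hs) (hpr n t).2 (hpr n s).2).trans ?_
    refine mul_le_mul_of_nonneg_left ?_ (hL0 T k)
    have e1 := abs_max_sub_max_le_max (0:ℝ) (min (n:ℝ) t) 0 (min (n:ℝ) s)
    have e2 := abs_min_sub_min_le_max (n:ℝ) t n s
    simp only [sub_self, abs_zero] at e1 e2
    rw [max_eq_right (abs_nonneg (min (n:ℝ) t - min (n:ℝ) s))] at e1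
    rw [max_eq_right (abs_nonneg (t - s))] at e2
    exact e1.trans e2
  · intro n t k
    exact husym n _ (hpr n t) k
  · intro n k hk t ht
    simp only [hpre n t ht]
    rw [hmild n k hk t ht]
    congr 2
    refine integral_congr fun s hs => ?_
    rw [uIcc_of_le ht.1] at hs
    rw [hpre n s ⟨hs.1, hs.2.trans ht.2⟩]
    congr 1
    exact (tsum_eq_sum fun j hj => by rw [huz n s j hj, zero_mul]).symm

/-- diagonal extraction -/
lemma extract (f : ℕ → ℝ → ℤ → ℂ) (B L : ℝ → ℤ → ℝ)
    (hB : ∀ n T t k, t ∈ Icc 0 T → ‖f n t k‖ ≤ B T k)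
    (hL : ∀ n T t s k, t ∈ Icc 0 T → s ∈ Icc 0 T → ‖f n t k - f n s k‖ ≤ L T k * |t - s|) :
    ∃ φ : ℕ → ℕ, StrictMono φ ∧ ∀ t, 0 ≤ t → ∀ k, ∃ z, Tendsto (fun n => f (φ n) t k) atTop (𝓝 z) := by
  let x : ℕ → (ℚ × ℤ → ℂ) := fun n p => f n (max (p.1:ℝ) 0) p.2
  have hK : IsCompact (Set.pi univ fun p : ℚ × ℤ => Metric.closedBall (0:ℂ) (B (max (p.1:ℝ) 0) p.2)) :=
    isCompact_univ_pi fun p => isCompact_closedBall _ _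
  obtain ⟨a, _, φ, hφ, ha⟩ := hK.tendsto_subseq (x := x) (by
    intro n p _
    rw [mem_closedBall_zero_iff]
    exact hB n _ _ _ ⟨le_max_right _ _, le_rfl⟩)
  rw [tendsto_pi_nhds] at ha
  refine ⟨φ, hφ, fun t ht k => ?_⟩
  apply cauchySeq_tendsto_of_complete
  rw [Metric.cauchySeq_iff']
  intro ε hε
  set L' := |L (t + 1) k| + 1 with hL'
  have hL'0 : 0 < L' := by positivity
  have hδ : 0 < min 1 (ε / (4 * L')) := by positivity
  obtain ⟨q, hq1, hq2⟩ := exists_rat_btwn (show t < t + min 1 (ε / (4 * L')) by linarith)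
  have hq0 : (0:ℝ) ≤ q := ht.trans hq1.le
  have hmax : max (q:ℝ) 0 = q := max_eq_left hq0
  have hcs := (ha (q, k)).cauchySeq
  rw [Metric.cauchySeq_iff'] at hcs
  obtain ⟨N, hN⟩ := hcs (ε / 4) (by positivity)
  refine ⟨N, fun n hn => ?_⟩
  have h1 := hN n hn
  simp only [Function.comp, x, hmax, dist_eq_norm] at h1
  have hq3 : (q:ℝ) ∈ Icc 0 (t+1) := ⟨hq0, by have := min_le_left 1 (ε / (4 * L')); linarith⟩
  have ht3 : t ∈ Icc 0 (t+1) := ⟨ht, by linarith⟩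
  have h2 : ∀ m, ‖f m t k - f m q k‖ ≤ ε / 4 := by
    intro m
    refine (hL m (t+1) t q k ht3 hq3).trans ?_
    have : |t - q| ≤ ε / (4 * L') := by
      rw [abs_sub_comm, abs_of_pos (by linarith)]
      have := min_le_right 1 (ε / (4 * L')); linarith
    calc _ ≤ L' * (ε / (4 * L')) :=
          mul_le_mul (by have := le_abs_self (L (t+1) k); linarith) this (abs_nonneg _) hL'0.le
      _ = _ := by field_simp
  rw [dist_eq_norm]
  have e : f (φ n) t k - f (φ N) t k = (f (φ n) t k - f (φ n) q k) + (f (φ n) q k - f (φ N) q k)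
      - (f (φ N) t k - f (φ N) q k) := by ring
  rw [e]
  have := norm_sub_le ((f (φ n) t k - f (φ n) q k) + (f (φ n) q k - f (φ N) q k)) (f (φ N) t k - f (φ N) q k)
  have := norm_add_le (f (φ n) t k - f (φ n) q k) (f (φ n) q k - f (φ N) q k)
  have := h2 (φ n)
  have := h2 (φ N)
  linarith

lemma exists_u (ω : ℝ) (hω : 0 < ω) (u0 : ℤ → ℂ) (h0 : ∀ k, u0 (-k) = conj (u0 k)) (C : ℝ)
    (hC : ∀ k, ‖u0 k‖ ≤ C / wt k ^ 2) :
    ∃ (Bd : ℝ → ℝ) (u : ℝ → ℤ → ℂ),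
      (∀ k, Continuous fun t => u t k) ∧
      (∀ t k, u t (-k) = conj (u t k)) ∧
      (∀ T t k, 0 ≤ T → t ≤ T → ‖u t k‖ ≤ Bd T / wt k ^ 2) ∧
      (∀ k t, 0 ≤ t → u t k = (Real.exp (-lam ω k * t) : ℂ) * u0 k + cc ω * k *
          ∫ s in (0:ℝ)..t, (Real.exp (-lam ω k * (t - s)) : ℂ) * ∑' j, u s j * u s (k - j)) := by
  obtain ⟨Bd, L, f, hb, hl, hsym, hmild⟩ := galerkin2 ω hω u0 h0 C hC
  obtain ⟨φ, hφ, hlim⟩ := extract f (fun T k => Bd T / wt k ^ 2) L hb hl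
  choose! v hv using hlim
  have hvb : ∀ T t k, t ∈ Icc 0 T → ‖v t k‖ ≤ Bd T / wt k ^ 2 := fun T t k ht =>
    le_of_tendsto (hv t ht.1 k).norm (Eventually.of_forall fun n => hb _ T t k ht)
  have hvl : ∀ T t s k, t ∈ Icc 0 T → s ∈ Icc 0 T → ‖v t k - v s k‖ ≤ L T k * |t - s| :=
    fun T t s k ht hs => le_of_tendsto ((hv t ht.1 k).sub (hv s hs.1 k)).norm
      (Eventually.of_forall fun n => hl _ T t s k ht hs)
  have hvs : ∀ t k, 0 ≤ t → v t (-k) = conj (v t k) := by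
    intro t k ht
    refine tendsto_nhds_unique (hv t ht (-k)) ?_
    simp only [hsym]
    exact (Complex.continuous_conj.tendsto _).comp (hv t ht k)
  have hvc : ∀ k, ContinuousOn (fun t => v t k) (Ici 0) := by
    intro k t ht
    have hnn : 𝓝[Ici 0] t = 𝓝[Icc 0 (t+1)] t := by
      rw [← Ici_inter_Iic]
      exact (nhdsWithin_inter_of_mem' (mem_nhdsWithin_of_mem_nhds (Iic_mem_nhds (by linarith)))).symm
    unfold ContinuousWithinAt
    rw [hnn, tendsto_iff_norm_sub_tendsto_zero]
    have ht' : t ∈ Icc 0 (t+1) := ⟨ht, by linarith⟩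
    refine squeeze_zero' (Eventually.of_forall fun _ => norm_nonneg _)
      (eventually_mem_nhdsWithin.mono fun s hs => hvl (t+1) s t k hs ht') ?_
    have : Tendsto (fun s => L (t+1) k * |s - t|) (𝓝 t) (𝓝 (L (t+1) k * |t - t|)) := by
      apply Continuous.tendsto; fun_prop
    simp at this
    exact this.mono_left nhdsWithin_le_nhds
  have hvm : ∀ k t, 0 ≤ t → v t k = (Real.exp (-lam ω k * t) : ℂ) * u0 k + cc ω * k *
          ∫ s in (0:ℝ)..t, (Real.exp (-lam ω k * (t - s)) : ℂ) * ∑' j, v s j * v s (k - j) := by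
    intro k t ht
    have hd : ∀ n : ℕ, ∀ s ∈ Icc 0 t, ∀ j, ‖f n s j * f n s (k - j)‖ ≤ |Bd t|^2 * (1 / wt j ^ 2) := by
      intro n s hs j
      rw [norm_mul]
      have h1 : ‖f n s j‖ ≤ |Bd t| * (1 / wt j ^ 2) := by
        refine (hb n t s j hs).trans ?_
        rw [div_eq_mul_one_div]
        have := wt_pos j
        exact mul_le_mul_of_nonneg_right (le_abs_self _) (by positivity)
      have h2 : ‖f n s (k - j)‖ ≤ |Bd t| := by
        refine (hb n t s (k-j) hs).trans ?_
        have := one_le_wt (k - j)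
        have h3 : 1 ≤ wt (k-j)^2 := one_le_pow₀ this
        calc Bd t / wt (k-j)^2 ≤ |Bd t| / wt (k-j)^2 := by gcongr; exact le_abs_self _
          _ ≤ |Bd t| := div_le_self (abs_nonneg _) h3
      calc _ ≤ |Bd t| * (1 / wt j ^ 2) * |Bd t| :=
            mul_le_mul h1 h2 (norm_nonneg _) ((norm_nonneg _).trans h1)
        _ = _ := by ring
    have hsm : Summable fun j => |Bd t|^2 * (1 / wt j ^ 2) :=
      (summable_wt_inv 2 le_rfl).mul_left _
    have hq : ∀ s ∈ Icc 0 t, Tendsto (fun n => ∑' j, f (φ n) s j * f (φ n) s (k - j)) atTop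
        (𝓝 (∑' j, v s j * v s (k - j))) := by
      intro s hs
      exact tendsto_tsum_of_dominated_convergence hsm
        (fun j => (hv s hs.1 j).mul (hv s hs.1 (k - j)))
        (Eventually.of_forall fun n j => hd _ s hs j)
    have hqc : ∀ n, ContinuousOn (fun s => ∑' j, f n s j * f n s (k - j)) (Icc 0 t) := by
      intro n
      have hfc : ∀ j, ContinuousOn (fun s => f n s j) (Icc 0 t) := by
        intro j
        have : LipschitzOnWith (Real.toNNReal (L t j)) (fun s => f n s j) (Icc 0 t) := by
          apply LipschitzOnWith.of_dist_le_mul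
          intro a ha b hb
          rw [dist_eq_norm, Real.dist_eq]
          refine (hl n t a b j ha hb).trans ?_
          exact mul_le_mul_of_nonneg_right (Real.le_coe_toNNReal _) (abs_nonneg _)
        exact this.continuousOn
      exact continuousOn_tsum (fun j => (hfc j).mul (hfc (k - j))) hsm (fun j s hs => hd n s hs j)
    have hint : Tendsto (fun n => ∫ s in (0:ℝ)..t, (Real.exp (-lam ω k * (t - s)) : ℂ) *
        ∑' j, f (φ n) s j * f (φ n) s (k - j)) atTop
        (𝓝 (∫ s in (0:ℝ)..t, (Real.exp (-lam ω k * (t - s)) : ℂ) * ∑' j, v s j * v s (k - j))) := by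
      apply intervalIntegral.tendsto_integral_filter_of_dominated_convergence
        (fun s => Real.exp (-lam ω k * (t - s)) * ∑' j, |Bd t|^2 * (1 / wt j ^ 2))
      · refine Eventually.of_forall fun n => ?_
        rw [uIoc_of_le ht]
        refine ContinuousOn.aestronglyMeasurable ?_ measurableSet_Ioc
        refine ContinuousOn.mul (by fun_prop) ((hqc _).mono Ioc_subset_Icc_self)
      · refine Eventually.of_forall fun n => Eventually.of_forall fun s hs => ?_
        rw [uIoc_of_le ht] at hs
        rw [norm_mul, Complex.norm_real, Real.norm_eq_abs, abs_of_pos (Real.exp_pos _)]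
        refine mul_le_mul_of_nonneg_left ?_ (Real.exp_pos _).le
        exact tsum_of_norm_bounded hsm.hasSum (hd _ s (Ioc_subset_Icc_self hs))
      · apply Continuous.intervalIntegrable; fun_prop
      · refine Eventually.of_forall fun s hs => ?_
        rw [uIoc_of_le ht] at hs
        exact (hq s (Ioc_subset_Icc_self hs)).const_mul _
    refine tendsto_nhds_unique (hv t ht k) ?_
    refine (((hint.const_mul (cc ω * k)).const_add _)).congr' ?_
    have hφt := hφ.tendsto_atTop
    filter_upwards [hφt.eventually_ge_atTop (max k.natAbs ⌈t⌉₊)] with n hn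
    have h1 : k.natAbs ≤ φ n := (le_max_left _ _).trans hn
    have h2 : t ≤ φ n := (Nat.le_ceil t).trans (by exact_mod_cast (le_max_right _ _).trans hn)
    exact (hmild (φ n) k (by rw [Finset.mem_Icc]; omega) t ⟨ht, h2⟩).symm
  refine ⟨Bd, fun t k => v (max t 0) k, ?_, ?_, ?_, ?_⟩
  · intro k
    exact (hvc k).comp_continuous (by fun_prop) (fun t => mem_Ici.2 (le_max_right _ _))
  · exact fun t k => hvs _ k (le_max_right _ _)
  · exact fun T t k hT ht => hvb T _ k ⟨le_max_right _ _, max_le ht hT⟩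
  · intro k t ht
    simp only [max_eq_left ht]
    rw [hvm k t ht]
    congr 2
    refine integral_congr fun s hs => ?_
    rw [uIcc_of_le ht] at hs
    simp only [max_eq_left hs.1]

end KS

namespace KS
open MeasureTheory intervalIntegral Filter Topology
open scoped ComplexConjugate

/-- derivative symbol -/
noncomputable def dd (ω : ℝ) (k : ℤ) : ℂ := Complex.I * ω * k

lemma norm_dd (ω : ℝ) (hω : 0 < ω) (k : ℤ) : ‖dd ω k‖ = ω * |(k:ℝ)| := by
  simp only [dd, norm_mul, Complex.norm_I, Complex.norm_real, norm_intCast', Real.norm_eq_abs, abs_of_pos hω]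
  ring

lemma norm_dd_le (ω : ℝ) (hω : 0 < ω) (k : ℤ) : ‖dd ω k‖ ≤ ω * wt k := by
  rw [norm_dd ω hω]; unfold wt; nlinarith

lemma lam_dd (ω : ℝ) (k : ℤ) : (lam ω k : ℂ) = 3 * dd ω k ^ 4 + dd ω k ^ 2 := by
  simp only [lam, dd, mul_pow, Complex.I_sq, Complex.I_pow_four]; push_cast; ring

lemma abs_lam_le (ω : ℝ) (hω : 0 < ω) (k : ℤ) : |lam ω k| ≤ (3 * ω^4 + ω^2) * wt k ^ 4 := by
  rw [← Real.norm_eq_abs, ← Complex.norm_real, lam_dd]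
  have h1 := norm_dd_le ω hω k
  have hw := one_le_wt k
  have e1 : ‖dd ω k‖^4 ≤ (ω * wt k)^4 := pow_le_pow_left₀ (norm_nonneg _) h1 4
  have e2 : ‖dd ω k‖^2 ≤ (ω * wt k)^2 := pow_le_pow_left₀ (norm_nonneg _) h1 2
  have e3 : wt k ^ 2 ≤ wt k ^ 4 := pow_le_pow_right₀ hw (by norm_num)
  refine (norm_add_le _ _).trans ?_
  rw [norm_mul, norm_pow, norm_pow]
  have : ‖(3:ℂ)‖ = 3 := by norm_num
  rw [this]
  rw [mul_pow] at e1 e2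
  have := mul_le_mul_of_nonneg_left e3 (sq_nonneg ω)
  linarith

lemma wt_sub (k j : ℤ) : wt k ≤ wt j + wt (k - j) := by
  unfold wt; push_cast
  have := abs_add_le (j:ℝ) (k - j)
  rw [add_sub_cancel] at this; linarith

lemma conv_term (u : ℤ → ℂ) (B : ℝ) (hu : ∀ k, ‖u k‖ ≤ B / wt k ^ 2) (k j : ℤ) :
    ‖u j * u (k - j)‖ ≤ 2 * B^2 / wt k ^ 2 * (1 / wt j ^ 2 + 1 / wt (k - j) ^ 2) := by
  have a := wt_pos j
  have b := wt_pos (k - j)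
  have c := wt_pos k
  have d := wt_sub k j
  rw [norm_mul]
  refine (mul_le_mul (hu j) (hu (k-j)) (norm_nonneg _) ((norm_nonneg _).trans (hu j))).trans ?_
  generalize wt k = x at *
  generalize wt j = y at *
  generalize wt (k - j) = z at *
  have h : x^2 ≤ 2 * (y^2 + z^2) := by nlinarith [sq_nonneg (y - z)]
  have e1 : B / y^2 * (B / z^2) = B^2 / (x^2 * y^2 * z^2) * x^2 := by field_simp
  have e2 : 2 * B^2 / x^2 * (1 / y^2 + 1 / z^2) = B^2 / (x^2 * y^2 * z^2) * (2 * (y^2 + z^2)) := by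
    field_simp; ring
  rw [e1, e2]
  gcongr

lemma summable_wt_shift (k : ℤ) : Summable fun j : ℤ => 1 / wt (k - j) ^ 2 :=
  ((Equiv.subLeft k).summable_iff (f := fun j : ℤ => 1 / wt j ^ 2)).2 (summable_wt_inv 2 le_rfl)

lemma conv_bound (u : ℤ → ℂ) (B : ℝ) (hu : ∀ k, ‖u k‖ ≤ B / wt k ^ 2) (k : ℤ) :
    ‖∑' j, u j * u (k - j)‖ ≤ 4 * B^2 * (∑' j, 1 / wt j ^ 2) / wt k ^ 2 := by
  have h1 := summable_wt_inv 2 le_rfl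
  have h2 := summable_wt_shift k
  have h3 : ∑' j : ℤ, 1 / wt (k - j) ^ 2 = ∑' j, 1 / wt j ^ 2 :=
    (Equiv.subLeft k).tsum_eq (fun j : ℤ => 1 / wt j ^ 2)
  refine (tsum_of_norm_bounded ((h1.add h2).mul_left _).hasSum (conv_term u B hu k)).trans (le_of_eq ?_)
  rw [tsum_mul_left, h1.tsum_add h2, h3]
  ring

lemma tsum_cont {X : Type*} [TopologicalSpace X] (F : ℝ → X → ℤ → ℂ)
    (hc : ∀ k, Continuous fun p : ℝ × X => F p.1 p.2 k)
    (hb : ∀ T, 0 ≤ T → ∃ B : ℤ → ℝ, Summable B ∧ ∀ t ≤ T, ∀ x, ∀ k, ‖F t x k‖ ≤ B k) :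
    Continuous fun p : ℝ × X => ∑' k, F p.1 p.2 k := by
  rw [continuous_iff_continuousAt]
  rintro ⟨t, x⟩
  obtain ⟨B, hB, hB2⟩ := hb (|t| + 1) (by positivity)
  have : ContinuousOn (fun p : ℝ × X => ∑' k, F p.1 p.2 k) (Iio (|t|+1) ×ˢ univ) :=
    continuousOn_tsum (fun k => (hc k).continuousOn) hB (fun k p hp => hB2 _ (le_of_lt hp.1) _ _)
  refine this.continuousAt ((isOpen_Iio.prod isOpen_univ).mem_nhds ⟨?_, mem_univ _⟩)
  have := le_abs_self t
  simp only [mem_Iio]; linarith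

lemma mu_exists (ω : ℝ) (hω : 0 < ω) (k : ℤ) : ∃ μ : ℝ, 0 < μ ∧ μ - 1 ≤ lam ω k ∧
    1 / μ ≤ (1 + 16 / ω^4) / wt k ^ 4 := by
  by_cases hk : k = 0
  · subst hk
    refine ⟨1, one_pos, by simp [lam], ?_⟩
    have : 0 ≤ 16 / ω^4 := by positivity
    simp [wt]; exact this
  · have hkne : (k:ℝ) ≠ 0 := by exact_mod_cast hk
    have hw := wt_pos k
    refine ⟨(ω * k)^4, by positivity, lam_ge ω k, ?_⟩
    have hk4 : (ω * k)^4 = ω^4 * |(k:ℝ)|^4 := by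
      rw [mul_pow]; congr 1; exact ((Even.pow_abs (by decide) _)).symm
    have h1 : wt k ^ 4 ≤ (2 * |(k:ℝ)|)^4 := pow_le_pow_left₀ hw.le (wt_le k hk) 4
    have hx : 0 < |(k:ℝ)| := abs_pos.2 hkne
    rw [hk4]
    generalize |(k:ℝ)| = x at *
    rw [div_le_div_iff₀ (by positivity) (by positivity)]
    have h2 : (1 + 16 / ω^4) * (ω^4 * x^4) = ω^4 * x^4 + 16 * x^4 := by field_simp
    rw [h2]
    have : 0 < ω^4 * x^4 := by positivity
    nlinarith

lemma exists_a (ω : ℝ) (hω : 0 < ω) (a0 : ℤ → ℂ) (h0 : ∀ k, a0 (-k) = conj (a0 k)) (C : ℝ)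
    (hC : ∀ k, ‖a0 k‖ ≤ C / wt k ^ 6) :
    ∃ (a ad b : ℝ → ℤ → ℂ) (Bd : ℝ → ℝ),
      (∀ k, Continuous fun t => a t k) ∧ (∀ k, Continuous fun t => ad t k) ∧
      (∀ k t, HasDerivAt (fun t => b t k) (ad t k) t) ∧ (∀ t, 0 ≤ t → ∀ k, b t k = a t k) ∧
      (∀ k, a 0 k = a0 k) ∧
      (∀ T t k, 0 ≤ T → t ≤ T → ‖a t k‖ ≤ Bd T / wt k ^ 6) ∧
      (∀ T t k, 0 ≤ T → t ≤ T → ‖ad t k‖ ≤ Bd T / wt k ^ 2) ∧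
      (∀ t k, dd ω (-k) * a t (-k) = conj (dd ω k * a t k)) ∧
      (∀ t k, ad t k = -(lam ω k : ℂ) * a t k -
        1 / 2 * ∑' j, (dd ω j * a t j) * (dd ω (k - j) * a t (k - j))) := by
  have hC0 : 0 ≤ C := by
    have := (norm_nonneg _).trans (hC 0)
    simpa [wt] using this
  have hdd : ∀ k, dd ω (-k) = conj (dd ω k) := by
    intro k; simp [dd]
  obtain ⟨B, u, huc, husym, hub, hum⟩ := exists_u ω hω (fun k => dd ω k * a0 k)
    (by intro k; simp only [h0, hdd, map_mul]) (ω * C) (by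
      intro k
      have hw := one_le_wt k
      rw [norm_mul]
      refine (mul_le_mul (norm_dd_le ω hω k) (hC k) (norm_nonneg _) (by positivity)).trans ?_
      have e : ω * wt k * (C / wt k ^ 6) = ω * C / wt k ^ 5 := by field_simp
      rw [e]
      exact div_le_div_of_nonneg_left (by positivity) (by positivity) (pow_le_pow_right₀ hw (by norm_num)))
  set q : ℝ → ℤ → ℂ := fun t k => ∑' j, u t j * u t (k - j) with hq
  set K : ℝ → ℝ := fun T => 4 * (B T)^2 * (∑' j, 1 / wt j ^ 2) with hK
  have hS : 0 ≤ ∑' j, 1 / wt j ^ 2 := tsum_nonneg fun j => by have := wt_pos j; positivity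
  have hK0 : ∀ T, 0 ≤ K T := fun T => by simp only [hK]; positivity
  have hqb : ∀ T t k, 0 ≤ T → t ≤ T → ‖q t k‖ ≤ K T / wt k ^ 2 := fun T t k hT ht =>
    conv_bound (u t) (B T) (fun k => hub T t k hT ht) k
  have hqc : ∀ k, Continuous fun t => q t k := by
    intro k
    have := tsum_cont (X := Unit) (fun t _ j => u t j * u t (k - j))
      (fun j => ((huc j).comp continuous_fst).mul ((huc (k-j)).comp continuous_fst))
      (fun T hT => ⟨_, ((summable_wt_inv 2 le_rfl).add (summable_wt_shift k)).mul_left _,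
        fun t ht _ j => conv_term (u t) (B T) (fun k => hub T t k hT ht) k j⟩)
    exact this.comp (f := fun t : ℝ => (t, ())) (by fun_prop)
  set aa : ℝ → ℤ → ℂ := fun t k => (Real.exp (-lam ω k * t) : ℂ) * a0 k -
    1 / 2 * ∫ s in (0:ℝ)..t, (Real.exp (-lam ω k * (t - s)) : ℂ) * q s k with haa
  have haau : ∀ t, 0 ≤ t → ∀ k, dd ω k * aa t k = u t k := by
    intro t ht k
    rw [hum k t ht]
    simp only [haa, dd, cc, hq]
    ring
  have haad : ∀ k t, HasDerivAt (fun t => aa t k) (-(lam ω k : ℂ) * aa t k - 1 / 2 * q t k) t := by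
    intro k t
    have e : ∀ t, aa t k = (Real.exp (-lam ω k * t) : ℂ) * (a0 k -
        1 / 2 * ∫ s in (0:ℝ)..t, (Real.exp (lam ω k * s) : ℂ) * q s k) := by
      intro t
      simp only [haa]
      have : ∫ s in (0:ℝ)..t, (Real.exp (-lam ω k * (t - s)) : ℂ) * q s k =
          (Real.exp (-lam ω k * t) : ℂ) * ∫ s in (0:ℝ)..t, (Real.exp (lam ω k * s) : ℂ) * q s k := by
        rw [← intervalIntegral.integral_const_mul]
        refine integral_congr fun s _ => ?_
        rw [← mul_assoc, ← Complex.ofReal_mul, ← Real.exp_add]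
        congr 3; ring
      rw [this]; ring
    have h1 : HasDerivAt (fun t : ℝ => (Real.exp (-lam ω k * t) : ℂ))
        ((Real.exp (-lam ω k * t) * (-lam ω k) : ℝ) : ℂ) t := by
      have := (((hasDerivAt_id t).const_mul (-lam ω k)).exp).ofReal_comp
      simpa using this
    have hcont : Continuous fun s : ℝ => (Real.exp (lam ω k * s) : ℂ) * q s k :=
      Continuous.mul (by fun_prop) (hqc k)
    have h2 := (hcont.integral_hasStrictDerivAt 0 t).hasDerivAt
    have h3 := h1.mul ((h2.const_mul (1/2 : ℂ)).const_sub (a0 k))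
    have h4 : (fun t => aa t k) = fun t => (Real.exp (-lam ω k * t) : ℂ) * (a0 k -
        1 / 2 * ∫ s in (0:ℝ)..t, (Real.exp (lam ω k * s) : ℂ) * q s k) := funext e
    rw [h4]
    refine h3.congr_deriv ?_
    rw [e t]
    have : (Real.exp (-lam ω k * t) : ℂ) * (Real.exp (lam ω k * t) : ℂ) = 1 := by
      rw [← Complex.ofReal_mul, ← Real.exp_add]; simp
    push_cast at this ⊢
    linear_combination (-1/2 * q t k) * this
  have haac : ∀ k, Continuous fun t => aa t k := fun k =>
    continuous_iff_continuousAt.2 fun t => (haad k t).continuousAt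
  set cω := 1 + 16 / ω^4 with hcω
  have hcω0 : 0 ≤ cω := by positivity
  set Ba : ℝ → ℝ := fun T => Real.exp T * C + 1 / 2 * (Real.exp T * K T * cω) with hBa
  have hBa0 : ∀ T, 0 ≤ Ba T := fun T => by have := hK0 T; simp only [hBa]; positivity
  have haab : ∀ T t k, t ∈ Icc 0 T → ‖aa t k‖ ≤ Ba T / wt k ^ 6 := by
    intro T t k ht
    have hw := wt_pos k
    have h1 : ‖(Real.exp (-lam ω k * t) : ℂ) * a0 k‖ ≤ Real.exp T * (C / wt k ^ 6) := by
      rw [norm_mul, Complex.norm_real, Real.norm_eq_abs, abs_of_pos (Real.exp_pos _)]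
      refine mul_le_mul (Real.exp_le_exp.2 ?_) (hC k) (norm_nonneg _) (Real.exp_pos _).le
      have := lam_ge' ω k
      nlinarith [ht.1, ht.2, mul_le_mul_of_nonneg_right this ht.1]
    obtain ⟨μ, hμ, hμl, hμ2⟩ := mu_exists ω hω k
    have hKT := hK0 T
    have h2 := duh_bound (lam ω k) μ hμ hμl (fun s => q s k) ht (K T / wt k ^ 2) (by positivity)
      (fun s hs => hqb T s k (ht.1.trans ht.2) (hs.2.trans ht.2))
    have h3 : Real.exp T * (K T / wt k ^ 2) / μ ≤ Real.exp T * K T * cω / wt k ^ 6 := by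
      calc _ = Real.exp T * (K T / wt k ^ 2) * (1 / μ) := by ring
        _ ≤ Real.exp T * (K T / wt k ^ 2) * (cω / wt k ^ 4) :=
          mul_le_mul_of_nonneg_left hμ2 (by positivity)
        _ = _ := by field_simp
    simp only [haa]
    refine (norm_sub_le _ _).trans ?_
    have e5 : ‖(1 / 2 : ℂ)‖ = 1 / 2 := by norm_num
    rw [norm_mul (1/2 : ℂ), e5]
    have e6 : Ba T / wt k ^ 6 = Real.exp T * (C / wt k ^ 6) + 1 / 2 * (Real.exp T * K T * cω / wt k ^ 6) := by
      simp only [hBa]; ring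
    rw [e6]
    have h7 := h2.trans h3
    linarith
  set A : ℝ → ℤ → ℂ := fun t k => aa (max t 0) k with hA
  set Ad : ℝ → ℤ → ℂ := fun t k => -(lam ω k : ℂ) * A t k - 1 / 2 * q (max t 0) k with hAd
  have hmax : Continuous fun t : ℝ => max t 0 := by fun_prop
  have hAc : ∀ k, Continuous fun t => A t k := fun k => (haac k).comp hmax
  have hAdc : ∀ k, Continuous fun t => Ad t k := fun k =>
    (continuous_const.mul (hAc k)).sub (continuous_const.mul ((hqc k).comp hmax))
  have hA0 : ∀ k, A 0 k = a0 k := by intro k; simp [hA, haa]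
  have hAb : ∀ T t k, 0 ≤ T → t ≤ T → ‖A t k‖ ≤ Ba T / wt k ^ 6 := fun T t k hT ht =>
    haab T _ k ⟨le_max_right _ _, max_le ht hT⟩
  set Bb : ℝ → ℝ := fun T => Ba T + ((3 * ω^4 + ω^2) * Ba T + 1 / 2 * K T) with hBb
  refine ⟨A, Ad, fun t k => a0 k + ∫ s in (0:ℝ)..t, Ad s k, Bb, hAc, hAdc, ?_, ?_, hA0, ?_, ?_, ?_, ?_⟩
  · intro k t
    exact (((hAdc k).integral_hasStrictDerivAt 0 t).hasDerivAt).const_add _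
  · intro t ht k
    have : ∫ s in (0:ℝ)..t, Ad s k = aa t k - aa 0 k := by
      refine integral_eq_sub_of_hasDerivAt (f := fun t => aa t k) (fun s hs => ?_) ((hAdc k).intervalIntegrable _ _)
      rw [uIcc_of_le ht] at hs
      simp only [hAd, hA, max_eq_left hs.1]
      exact haad k s
    have h2 := hA0 k
    simp only [hA, max_self] at h2
    simp only [hA, max_eq_left ht]
    rw [this, h2]; ring
  · intro T t k hT ht
    refine (hAb T t k hT ht).trans ?_
    have := hBa0 T; have := hK0 T; have := wt_pos k
    apply div_le_div_of_nonneg_right _ (by positivity)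
    have : 0 ≤ (3 * ω^4 + ω^2) * Ba T + 1 / 2 * K T := by positivity
    simp only [hBb]; linarith
  · intro T t k hT ht
    have hw := wt_pos k
    have h1 := hAb T t k hT ht
    have h2 := hqb T (max t 0) k hT (max_le ht hT)
    have h3 := abs_lam_le ω hω k
    simp only [hAd]
    refine (norm_sub_le _ _).trans ?_
    have e5 : ‖(1 / 2 : ℂ)‖ = 1 / 2 := by norm_num
    rw [norm_mul, norm_lam_le, norm_mul (1/2 : ℂ), e5]
    have h4 : |lam ω k| * ‖A t k‖ ≤ (3 * ω^4 + ω^2) * Ba T / wt k ^ 2 := by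
      refine (mul_le_mul h3 h1 (norm_nonneg _) (by positivity)).trans (le_of_eq ?_)
      field_simp
    have h5 : 0 ≤ Ba T / wt k ^ 2 := by have := hBa0 T; positivity
    have e6 : Bb T / wt k ^ 2 = Ba T / wt k ^ 2 + (3 * ω^4 + ω^2) * Ba T / wt k ^ 2 +
      1 / 2 * (K T / wt k ^ 2) := by simp only [hBb]; ring
    rw [e6]; linarith
  · intro t k
    simp only [hA]
    rw [haau _ (le_max_right _ _), haau _ (le_max_right _ _), husym]
  · intro t k
    simp only [hAd, hq, hA]
    congr 2
    exact tsum_congr fun j => by rw [haau _ (le_max_right _ _), haau _ (le_max_right _ _)]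

end KS

namespace KS
open MeasureTheory intervalIntegral Filter Topology
open scoped ComplexConjugate

lemma norm_ee (ω : ℝ) (k : ℤ) (x : ℝ) : ‖ee ω k x‖ = 1 := by
  unfold ee; rw [mul_comm]; exact Complex.norm_exp_ofReal_mul_I _

lemma ee_add (ω : ℝ) (j k : ℤ) (x : ℝ) : ee ω j x * ee ω k x = ee ω (j + k) x := by
  unfold ee; rw [← Complex.exp_add]; congr 1; push_cast; ring

lemma ee_conj (ω : ℝ) (k : ℤ) (x : ℝ) : conj (ee ω k x) = ee ω (-k) x := by
  unfold ee; rw [← Complex.exp_conj]; congr 1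
  simp only [map_mul, Complex.conj_I, Complex.conj_ofReal]; push_cast; ring

lemma ee_deriv (ω : ℝ) (k : ℤ) (x : ℝ) : HasDerivAt (fun x => ee ω k x) (dd ω k * ee ω k x) x := by
  have h1 : HasDerivAt (fun x : ℝ => Complex.I * ((ω * k * x : ℝ) : ℂ)) (dd ω k) x := by
    have := (((hasDerivAt_id x).const_mul (ω * k)).ofReal_comp).const_mul Complex.I
    refine this.congr_deriv ?_
    simp [dd]; ring
  exact h1.cexp.congr_deriv (mul_comm _ _)

lemma ee_cont (ω : ℝ) (k : ℤ) : Continuous fun x => ee ω k x :=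
  continuous_iff_continuousAt.2 fun x => (ee_deriv ω k x).continuousAt

lemma ee_bc (ℓ₀ : ℝ) (hℓ₀ : 0 < ℓ₀) (k : ℤ) :
    ee (2 * Real.pi / ℓ₀) k (-(ℓ₀ / 2)) = ee (2 * Real.pi / ℓ₀) k (ℓ₀ / 2) := by
  unfold ee
  rw [Complex.exp_eq_exp_iff_exists_int]
  refine ⟨-k, ?_⟩
  have : (ℓ₀ : ℂ) ≠ 0 := by exact_mod_cast hℓ₀.ne'
  push_cast
  field_simp
  ring

lemma series_deriv (ω : ℝ) (a : ℤ → ℂ) (h0 : Summable fun k => ‖a k‖)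
    (h1 : Summable fun k => ‖dd ω k * a k‖) (x : ℝ) :
    HasDerivAt (fun x => ∑' k, a k * ee ω k x) (∑' k, (dd ω k * a k) * ee ω k x) x := by
  refine hasDerivAt_tsum (𝕜 := ℝ) (F := ℂ) (u := fun k => ‖dd ω k * a k‖) (y₀ := 0)
    (g := fun k x => a k * ee ω k x) (g' := fun k x => (dd ω k * a k) * ee ω k x) h1 (fun k y => ?_) (fun k y => ?_) ?_ x
  · refine ((ee_deriv ω k y).const_mul (a k)).congr_deriv ?_; ring
  · rw [norm_mul, norm_ee, mul_one]
  · apply Summable.of_norm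
    simpa only [norm_mul, norm_ee, mul_one] using h0

lemma series_cont (ω : ℝ) (a : ℝ → ℤ → ℂ) (hc : ∀ k, Continuous fun t => a t k)
    (hb : ∀ T, 0 ≤ T → ∃ B : ℤ → ℝ, Summable B ∧ ∀ t ≤ T, ∀ k, ‖a t k‖ ≤ B k) :
    Continuous fun p : ℝ × ℝ => ∑' k, a p.1 k * ee ω k p.2 := by
  refine tsum_cont (fun t x k => a t k * ee ω k x)
    (fun k => ((hc k).comp continuous_fst).mul ((ee_cont ω k).comp continuous_snd)) ?_
  intro T hT
  obtain ⟨B, h1, h2⟩ := hb T hT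
  refine ⟨B, h1, fun t ht x k => ?_⟩
  rw [norm_mul, norm_ee, mul_one]; exact h2 t ht k

lemma series_sq (ω : ℝ) (u : ℤ → ℂ) (h : Summable fun k => ‖u k‖) (x : ℝ) :
    Summable (fun k => (∑' j, u j * u (k - j)) * ee ω k x) ∧
    ∑' k, (∑' j, u j * u (k - j)) * ee ω k x = (∑' k, u k * ee ω k x)^2 := by
  set f := fun k => u k * ee ω k x with hf
  have hfs : Summable fun k => ‖f k‖ := by simpa only [hf, norm_mul, norm_ee, mul_one] using h
  let e : ℤ × ℤ ≃ ℤ × ℤ :=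
    ⟨fun p => (p.2, p.1 - p.2), fun p => (p.1 + p.2, p.1), fun p => by simp, fun p => by simp⟩
  have hs : Summable fun p : ℤ × ℤ => f p.1 * f p.2 := summable_mul_of_summable_norm hfs hfs
  have hs2 : Summable fun p : ℤ × ℤ => f p.2 * f (p.1 - p.2) := (e.summable_iff).2 hs
  have ht : ∑' p : ℤ × ℤ, f p.1 * f p.2 = ∑' p : ℤ × ℤ, f p.2 * f (p.1 - p.2) :=
    (e.tsum_eq (fun p : ℤ × ℤ => f p.1 * f p.2)).symm
  have key : ∀ k, ∑' j, f j * f (k - j) = (∑' j, u j * u (k - j)) * ee ω k x := by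
    intro k
    rw [← tsum_mul_right]
    refine tsum_congr fun j => ?_
    have : ee ω k x = ee ω j x * ee ω (k - j) x := by rw [ee_add]; congr 1; ring
    rw [this]; simp only [hf]; ring
  constructor
  · have := hs2.prod
    simpa only [key] using this
  · rw [sq, tsum_mul_tsum_of_summable_norm hfs hfs, ht, hs2.tsum_prod]
    exact (tsum_congr key).symm

lemma series_real (ω : ℝ) (u : ℤ → ℂ) (hu : ∀ k, u (-k) = conj (u k)) (x : ℝ) :
    (∑' k, u k * ee ω k x).im = 0 := by
  rw [← Complex.conj_eq_iff_im, Complex.conj_tsum, ← (Equiv.neg ℤ).tsum_eq]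
  refine tsum_congr fun k => ?_
  rw [map_mul, ee_conj, ← hu]; simp

lemma existence (ℓ₀ : ℝ) (hℓ₀ : 0 < ℓ₀) (Φ₀ : ℝ → ℝ) (a0 : ℤ → ℂ) (C : ℝ)
    (hC : ∀ k, ‖a0 k‖ ≤ C / wt k ^ 6) (hsym : ∀ k, a0 (-k) = conj (a0 k))
    (hsum : ∀ x ∈ Icc (-(ℓ₀/2)) (ℓ₀/2), HasSum (fun k => a0 k * ee (2*Real.pi/ℓ₀) k x) (Φ₀ x : ℂ)) :
    ∃ Φ, IsKSSolution ℓ₀ Φ₀ Φ := by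
  set ω := 2 * Real.pi / ℓ₀ with hω'
  have hω : 0 < ω := by have := Real.pi_pos; positivity
  obtain ⟨a, ad, b, Bd, hac, hadc, hbd, hba, ha0, hab, hadb, hreal, hode⟩ := exists_a ω hω a0 hsym C hC
  -- coefficient bounds
  have hBd0 : ∀ T, 0 ≤ T → 0 ≤ Bd T := by
    intro T hT
    have := (norm_nonneg _).trans (hab T 0 0 hT hT)
    simpa [wt] using this
  have hcoef : ∀ j ≤ 4, ∀ T t k, 0 ≤ T → t ≤ T → ‖dd ω k ^ j * a t k‖ ≤ ω^j * Bd T * (1 / wt k ^ 2) := by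
    intro j hj T t k hT ht
    have hw := one_le_wt k
    have := hBd0 T hT
    rw [norm_mul, norm_pow]
    refine (mul_le_mul (pow_le_pow_left₀ (norm_nonneg _) (norm_dd_le ω hω k) j) (hab T t k hT ht)
      (norm_nonneg _) (by positivity)).trans ?_
    have e : (ω * wt k)^j * (Bd T / wt k ^ 6) = ω^j * Bd T * (wt k ^ j / wt k ^ 6) := by
      rw [mul_pow]; ring
    rw [e]
    refine mul_le_mul_of_nonneg_left ?_ (by positivity)
    rw [div_le_div_iff₀ (by positivity) (by positivity), one_mul, ← pow_add]
    exact pow_le_pow_right₀ hw (by omega)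
  have hcs : ∀ j ≤ 4, ∀ t, Summable fun k => ‖dd ω k ^ j * a t k‖ := by
    intro j hj t
    exact Summable.of_nonneg_of_le (fun _ => norm_nonneg _)
      (fun k => hcoef j hj (max t 0) t k (le_max_right _ _) (le_max_left _ _))
      ((summable_wt_inv 2 le_rfl).mul_left _)
  have hse : ∀ (c : ℤ → ℂ) x, (Summable fun k => ‖c k‖) → Summable fun k => c k * ee ω k x := by
    intro c x h
    apply Summable.of_norm
    simpa only [norm_mul, norm_ee, mul_one] using h
  have hads : ∀ t, Summable fun k => ‖ad t k‖ := fun t =>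
    Summable.of_nonneg_of_le (fun _ => norm_nonneg _)
      (fun k => (hadb (max t 0) t k (le_max_right _ _) (le_max_left _ _)).trans
        (le_of_eq (div_eq_mul_one_div _ _)))
      ((summable_wt_inv 2 le_rfl).mul_left _)
  let Z : ℕ → ℝ → ℝ → ℂ := fun j t x => ∑' k, (dd ω k ^ j * a t k) * ee ω k x
  let D : ℕ → ℝ → ℝ → ℝ := fun j t x => (Z j t x).re
  let P : ℝ → ℝ → ℝ := fun t x => (∑' k, ad t k * ee ω k x).re
  refine ⟨D 0, P, D, rfl, ?_, ?_, ?_, ?_, ?_, ?_, ?_⟩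
  · intro τ hτ η _
    rw [mem_Ici] at hτ
    have h1 : HasDerivAt (fun t => ∑' k, b t k * ee ω k η) (∑' k, ad τ k * ee ω k η) τ := by
      refine hasDerivAt_tsum_of_isPreconnected (𝕜 := ℝ) (F := ℂ) (u := fun k => Bd (τ+1) * (1 / wt k ^ 2))
        (t := Iio (τ + 1)) (y₀ := τ) (g := fun k t => b t k * ee ω k η)
        (g' := fun k t => ad t k * ee ω k η)
        ((summable_wt_inv 2 le_rfl).mul_left _) isOpen_Iio isPreconnected_Iio
        (fun k y _ => (hbd k y).mul_const _) (fun k y hy => ?_) (by simp) ?_ (by simp)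
      · rw [norm_mul, norm_ee, mul_one, ← div_eq_mul_one_div]
        exact hadb (τ+1) y k (by linarith) (le_of_lt hy)
      · simp only [hba τ hτ]
        have := hcs 0 (by norm_num) τ
        simp only [pow_zero, one_mul] at this
        exact hse _ _ this
    have h2 : HasDerivAt (fun t => (∑' k, b t k * ee ω k η).re) (P τ η) τ :=
      Complex.reCLM.hasFDerivAt.comp_hasDerivAt τ h1
    refine h2.hasDerivWithinAt.congr (fun t ht => ?_) ?_
    · simp only [D, Z, pow_zero, one_mul, hba t ht]
    · simp only [D, Z, pow_zero, one_mul, hba τ hτ]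
  · intro j hj τ hτ η _
    have h1 := series_deriv ω (fun k => dd ω k ^ j * a τ k) (hcs j hj.le τ)
      (by simpa only [← mul_assoc, ← pow_succ'] using hcs (j+1) hj τ) η
    have h2 : HasDerivAt (fun y => Z j τ y) (Z (j+1) τ η) η := by
      simpa only [← mul_assoc, ← pow_succ'] using h1
    exact (Complex.reCLM.hasFDerivAt.comp_hasDerivAt η h2).hasDerivWithinAt
  · apply Continuous.continuousOn
    exact Complex.continuous_re.comp (series_cont ω ad hadc fun T hT =>
      ⟨_, (summable_wt_inv 2 le_rfl).mul_left (Bd T), fun t ht k =>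
        (hadb T t k hT ht).trans (le_of_eq (div_eq_mul_one_div _ _))⟩)
  · intro j hj
    apply Continuous.continuousOn
    exact Complex.continuous_re.comp (series_cont ω (fun t k => dd ω k ^ j * a t k)
      (fun k => continuous_const.mul (hac k)) fun T hT =>
      ⟨_, (summable_wt_inv 2 le_rfl).mul_left (ω^j * Bd T), fun t ht k => hcoef j hj T t k hT ht⟩)
  · intro τ _ η _
    have hs1 := hcs 1 (by norm_num) τ
    simp only [pow_one] at hs1
    obtain ⟨hq1, hq2⟩ := series_sq ω (fun k => dd ω k * a τ k) hs1 η
    have him := series_real ω (fun k => dd ω k * a τ k) (hreal τ) η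
    have e4 := hse _ η (hcs 4 le_rfl τ)
    have e2 := hse _ η (hcs 2 (by norm_num) τ)
    have hZ1 : Z 1 τ η = ∑' k, (dd ω k * a τ k) * ee ω k η := by simp only [Z, pow_one]
    have h1 : ∑' k, ad τ k * ee ω k η = -3 * Z 4 τ η - Z 2 τ η - 1 / 2 * (Z 1 τ η)^2 := by
      rw [hZ1, ← hq2]
      simp only [Z]
      rw [← tsum_mul_left, ← tsum_mul_left, ← (e4.mul_left (-3)).tsum_sub e2,
        ← ((e4.mul_left (-3)).sub e2).tsum_sub (hq1.mul_left (1/2))]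
      refine tsum_congr fun k => ?_
      rw [hode, lam_dd]
      ring
    rw [← hZ1] at him
    have h2 : ((Z 1 τ η)^2).re = (Z 1 τ η).re^2 := by
      rw [sq, Complex.mul_re, him]; ring
    simp only [P, D]
    rw [h1, ← h2]
    have a1 : (-3 * Z 4 τ η).re = -3 * (Z 4 τ η).re := by
      have := Complex.re_ofReal_mul (-3) (Z 4 τ η); push_cast at this; exact this
    have a2 : (1 / 2 * (Z 1 τ η)^2).re = 1 / 2 * ((Z 1 τ η)^2).re := by
      have := Complex.re_ofReal_mul (1/2) ((Z 1 τ η)^2); push_cast at this; exact this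
    rw [Complex.sub_re, Complex.sub_re, a1, a2]
  · intro τ _ j _
    simp only [D, Z, hω', ee_bc ℓ₀ hℓ₀]
  · intro η hη
    have := (hsum η hη).tsum_eq
    simp only [D, Z, pow_zero, one_mul, ha0]
    rw [this, Complex.ofReal_re]

end KS

/-- Theorem 4.2: global well-posedness of the Kuramoto–Sivashinsky
equation with `ℓ₀`-periodic boundary conditions: for `Φ₀ ∈ C^{6+α}` with periodic
derivatives up to order `6`, there is a unique `C^{1,4}` solution on
`[0,∞) × [−ℓ₀/2, ℓ₀/2]`. -/
theorem KS_global_wellposedness (ℓ₀ α : ℝ) (hℓ₀ : 0 < ℓ₀)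
    (hα : α ∈ Set.Ioo (0 : ℝ) (1 / 2)) (Φ₀ : ℝ → ℝ)
    (hreg : ContDiffOn ℝ 6 Φ₀ (Iℓ ℓ₀))
    (hhold : ∃ C : NNReal,
      HolderOnWith C ⟨α, hα.1.le⟩ (iteratedDerivWithin 6 Φ₀ (Iℓ ℓ₀)) (Iℓ ℓ₀))
    (hbc : ∀ k ≤ 6, iteratedDerivWithin k Φ₀ (Iℓ ℓ₀) (-(ℓ₀ / 2)) =
      iteratedDerivWithin k Φ₀ (Iℓ ℓ₀) (ℓ₀ / 2)) :
    ∃ Φ : ℝ → ℝ → ℝ, IsKSSolution ℓ₀ Φ₀ Φ ∧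
      ∀ Ψ : ℝ → ℝ → ℝ, IsKSSolution ℓ₀ Φ₀ Ψ →
        ∀ τ ∈ Ici (0 : ℝ), ∀ η ∈ Iℓ ℓ₀, Ψ τ η = Φ τ η := by
  obtain ⟨a0, ⟨C, hC⟩, hsym, hsum⟩ := KS.fourier_data ℓ₀ hℓ₀ Φ₀ hreg hbc
  obtain ⟨Φ, hΦ⟩ := KS.existence ℓ₀ hℓ₀ Φ₀ a0 C hC hsym hsum
  refine ⟨Φ, hΦ, fun Ψ hΨ => ?_⟩
  obtain ⟨Pt, D, p1, p2, p3, p4, p5, p6, p7, p8⟩ := hΨ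
  obtain ⟨Qt, F, q1, q2, q3, q4, q5, q6, q7, q8⟩ := hΦ
  exact KS.unique_aux (by linarith) Ψ Φ Pt Qt D F p1 q1 p2 q2 p3 q3 p4 q4 p5 q5 p6 q6 p7 q7
    (fun η hη => (p8 η hη).trans (q8 η hη).symm)
end

section
/- Fix ℓ₀ > 0, T ∈ (0, ∞], and let Φ : [0, T) × [−ℓ₀/2, ℓ₀/2] → ℝ be a C^{1,4} solution of the Kuramoto–Sivashinsky equation Φ_τ = −3Φ_ηηηη − Φ_ηη − (1/2)(Φ_η)² satisfying the periodic boundary conditions D_η^{(k)}Φ(τ,−ℓ₀/2) = D_η^{(k)}Φ(τ,ℓ₀/2) for k = 0,1,2,3 and Φ(0,·) = Φ₀. Then for every τ ∈ [0, T), ‖Φ_η(τ,·)‖₂ ≤ e^{13τ/6}·‖Φ₀'‖₂, where ‖f‖₂² = ∫_{−ℓ₀/2}^{ℓ₀/2} f(η)² dη. -/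
open Set

/-- The time interval `[0, T)`, where `T ∈ (0, ∞]` is an extended real number. -/
def ksDom (T : EReal) : Set ℝ := {τ : ℝ | 0 ≤ τ ∧ (τ : EReal) < T}

/-- `Φ : [0,T) × [−ℓ₀/2, ℓ₀/2] → ℝ` is a `C^{1,4}` solution of the Kuramoto–Sivashinsky
equation `Φ_τ = −3Φ_ηηηη − Φ_ηη − (1/2)(Φ_η)²` with `ℓ₀`-periodic boundary conditions;
`Φτ` is the time derivative and `D j` the `j`-th spatial derivative (`D 0 = Φ`), all
jointly continuous on the domain. -/
def IsKSSolutionOn (ℓ₀ : ℝ) (T : EReal) (Φ Φτ : ℝ → ℝ → ℝ) (D : ℕ → ℝ → ℝ → ℝ) : Prop :=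
  D 0 = Φ ∧
  (∀ τ ∈ ksDom T, ∀ η ∈ Iℓ ℓ₀,
    HasDerivWithinAt (fun t => Φ t η) (Φτ τ η) (ksDom T) τ) ∧
  (∀ j < 4, ∀ τ ∈ ksDom T, ∀ η ∈ Iℓ ℓ₀,
    HasDerivWithinAt (fun y => D j τ y) (D (j + 1) τ η) (Iℓ ℓ₀) η) ∧
  ContinuousOn (fun p : ℝ × ℝ => Φτ p.1 p.2) (ksDom T ×ˢ Iℓ ℓ₀) ∧
  (∀ j ≤ 4, ContinuousOn (fun p : ℝ × ℝ => D j p.1 p.2) (ksDom T ×ˢ Iℓ ℓ₀)) ∧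
  (∀ τ ∈ ksDom T, ∀ η ∈ Iℓ ℓ₀,
    Φτ τ η = -3 * D 4 τ η - D 2 τ η - 1 / 2 * (D 1 τ η) ^ 2) ∧
  (∀ τ ∈ ksDom T, ∀ j ≤ 3, D j τ (-(ℓ₀ / 2)) = D j τ (ℓ₀ / 2))

lemma ks_per {a b : ℝ} (hab : a ≤ b) (f f' : ℝ → ℝ)
    (hd : ∀ x ∈ Icc a b, HasDerivWithinAt f (f' x) (Icc a b) x)
    (hc : ContinuousOn f' (Icc a b)) (hp : f a = f b) : ∫ x in a..b, f' x = 0 := by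
  rw [intervalIntegral.integral_eq_sub_of_hasDerivAt_of_le hab
    (fun x hx => (hd x hx).continuousWithinAt)
    (fun x hx => (hd x (Ioo_subset_Icc_self hx)).hasDerivAt (Icc_mem_nhds hx.1 hx.2))
    (hc.intervalIntegrable_of_Icc hab), hp, sub_self]

lemma ks_slice {S : Set ℝ} {a b : ℝ} {g : ℝ → ℝ → ℝ}
    (h : ContinuousOn (fun p : ℝ × ℝ => g p.1 p.2) (S ×ˢ Icc a b)) {t : ℝ} (ht : t ∈ S) :
    ContinuousOn (fun y => g t y) (Icc a b) :=
  h.comp (f := fun y => (t, y)) (by fun_prop) (fun y hy => ⟨ht, hy⟩)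

lemma ks_bdd {S : Set ℝ} {a b c : ℝ} {g : ℝ → ℝ → ℝ}
    (h : ContinuousOn (fun p : ℝ × ℝ => g p.1 p.2) (S ×ˢ Icc a b)) (hS : Icc 0 c ⊆ S) :
    ∃ M, 0 ≤ M ∧ ∀ t ∈ Icc 0 c, ∀ y ∈ Icc a b, |g t y| ≤ M := by
  obtain ⟨M, hM⟩ := (isCompact_Icc.prod isCompact_Icc).exists_bound_of_continuousOn
    (h.mono (prod_mono hS (Subset.refl (Icc a b))))
  refine ⟨max M 0, le_max_right _ _, fun t ht y hy => ?_⟩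
  exact (hM (t, y) ⟨ht, hy⟩).trans (le_max_left _ _)

/-- differentiability of the energy -/
lemma ks_deriv (a b c : ℝ) (hab : a ≤ b) (S : Set ℝ) (hS : Icc 0 c ⊆ S)
    (F Fτ U V : ℝ → ℝ → ℝ)
    (ht : ∀ τ ∈ S, ∀ η ∈ Icc a b, HasDerivWithinAt (fun t => F t η) (Fτ τ η) S τ)
    (hF : ∀ τ ∈ S, ∀ η ∈ Icc a b, HasDerivWithinAt (fun y => F τ y) (U τ η) (Icc a b) η)
    (hU : ∀ τ ∈ S, ∀ η ∈ Icc a b, HasDerivWithinAt (fun y => U τ y) (V τ η) (Icc a b) η)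
    (cFτ : ContinuousOn (fun p : ℝ × ℝ => Fτ p.1 p.2) (S ×ˢ Icc a b))
    (cF : ContinuousOn (fun p : ℝ × ℝ => F p.1 p.2) (S ×ˢ Icc a b))
    (cU : ContinuousOn (fun p : ℝ × ℝ => U p.1 p.2) (S ×ˢ Icc a b))
    (cV : ContinuousOn (fun p : ℝ × ℝ => V p.1 p.2) (S ×ˢ Icc a b))
    (pF : ∀ τ ∈ S, F τ a = F τ b) (pU : ∀ τ ∈ S, U τ a = U τ b)
    (s : ℝ) (hs : s ∈ Icc 0 c) :
    HasDerivWithinAt (fun t => ∫ y in a..b, (U t y) ^ 2)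
      (∫ y in a..b, -(Fτ s y * (V s y + V s y))) (Icc 0 c) s := by
  rw [hasDerivWithinAt_iff_tendsto_slope]
  obtain ⟨M, hM0, hM⟩ := ks_bdd cFτ hS
  obtain ⟨N, hN0, hN⟩ := ks_bdd cV hS
  have key : ∀ t ∈ Icc 0 c \ {s}, ∫ y in a..b, -(slope (fun t => F t y) s t * (V t y + V s y))
      = slope (fun t => ∫ y in a..b, (U t y) ^ 2) s t := by
    intro t htt
    have h1 := hS htt.1
    have h2 := hS hs
    have c1 := ks_slice cF h1
    have c2 := ks_slice cF h2
    have c3 := ks_slice cU h1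
    have c4 := ks_slice cU h2
    have c5 := ks_slice cV h1
    have c6 := ks_slice cV h2
    have e := ks_per hab (fun y => (F t y - F s y) * (U t y + U s y))
      (fun y => (U t y - U s y) * (U t y + U s y) + (F t y - F s y) * (V t y + V s y))
      (fun y hy => ((hF t h1 y hy).sub (hF s h2 y hy)).mul ((hU t h1 y hy).add (hU s h2 y hy)))
      (by fun_prop) (by simp only [pF t h1, pF s h2, pU t h1, pU s h2])
    have e2 : ∫ y in a..b, ((U t y)^2 - (U s y)^2) - (-((F t y - F s y) * (V t y + V s y))) = 0 := by
      rw [← e]; congr 1; ext y; ring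
    rw [intervalIntegral.integral_sub (ContinuousOn.intervalIntegrable_of_Icc hab (by fun_prop))
      (ContinuousOn.intervalIntegrable_of_Icc hab (by fun_prop)),
      intervalIntegral.integral_sub (ContinuousOn.intervalIntegrable_of_Icc hab (by fun_prop))
      (ContinuousOn.intervalIntegrable_of_Icc hab (by fun_prop))] at e2
    rw [slope_def_field, sub_eq_zero.1 e2, div_eq_inv_mul, ← intervalIntegral.integral_const_mul]
    congr 1; ext y; rw [slope_def_field]; ring
  have hmem : ∀ᶠ t in nhdsWithin s (Icc 0 c \ {s}), t ∈ Icc 0 c \ {s} := self_mem_nhdsWithin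
  refine Filter.Tendsto.congr' (hmem.mono key) ?_
  refine intervalIntegral.tendsto_integral_filter_of_dominated_convergence (fun _ => M * (N + N))
    ?_ ?_ intervalIntegrable_const ?_
  · filter_upwards [hmem] with t htt
    have h1 := hS htt.1
    have h2 := hS hs
    have c1 := ks_slice cF h1
    have c2 := ks_slice cF h2
    have c5 := ks_slice cV h1
    have c6 := ks_slice cV h2
    simp only [slope_def_field]
    have : ContinuousOn (fun y => -((F t y - F s y) / (t - s) * (V t y + V s y))) (Icc a b) := by
      fun_prop
    rw [uIoc_of_le hab]
    exact (this.mono Ioc_subset_Icc_self).aestronglyMeasurable measurableSet_Ioc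
  · filter_upwards [hmem] with t htt
    refine Filter.Eventually.of_forall fun y hy => ?_
    rw [uIoc_of_le hab] at hy
    have hy := Ioc_subset_Icc_self hy
    rw [norm_neg, norm_mul]
    have hb : ‖slope (fun t => F t y) s t‖ ≤ M := by
      have := Convex.norm_image_sub_le_of_norm_hasDerivWithin_le (f := fun t => F t y)
        (f' := fun t => Fτ t y) (s := Icc 0 c) (C := M)
        (fun x hx => (ht x (hS hx) y hy).mono hS) (fun x hx => hM x hx y hy) (convex_Icc _ _)
        hs htt.1
      rw [slope_def_field, norm_div, div_le_iff₀ (norm_pos_iff.2 (sub_ne_zero.2 htt.2))]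
      exact this
    gcongr
    exact (norm_add_le _ _).trans (add_le_add (hN t htt.1 y hy) (hN s hs y hy))
  · refine Filter.Eventually.of_forall fun y hy => ?_
    rw [uIoc_of_le hab] at hy
    have hy := Ioc_subset_Icc_self hy
    have h1 := hasDerivWithinAt_iff_tendsto_slope.1 ((ht s (hS hs) y hy).mono hS)
    have h2 : Filter.Tendsto (fun t => V t y) (nhdsWithin s (Icc 0 c \ {s})) (nhds (V s y)) := by
      have : ContinuousOn (fun t => V t y) S :=
        cV.comp (f := fun t => (t, y)) (by fun_prop) (fun t ht => ⟨ht, hy⟩)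
      exact ((this s (hS hs)).mono (sdiff_subset.trans hS)).tendsto
    exact (h1.mul (h2.add tendsto_const_nhds)).neg

/-- the a priori `L²` estimate `‖Φ_η(τ,·)‖₂ ≤ e^{13τ/6}‖Φ₀'‖₂` for any
`C^{1,4}` solution of the Kuramoto–Sivashinsky equation on `[0,T)` (here `Φ₀ = Φ(0,·)`,
so `Φ₀' = D 1 0`). -/
theorem KS_apriori_L2 (ℓ₀ : ℝ) (T : EReal) (hℓ₀ : 0 < ℓ₀) (hT : 0 < T)
    (Φ Φτ : ℝ → ℝ → ℝ) (D : ℕ → ℝ → ℝ → ℝ)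
    (hsol : IsKSSolutionOn ℓ₀ T Φ Φτ D) :
    ∀ τ ∈ ksDom T,
      Real.sqrt (∫ η in (-(ℓ₀ / 2))..(ℓ₀ / 2), (D 1 τ η) ^ 2) ≤
        Real.exp (13 * τ / 6) *
          Real.sqrt (∫ η in (-(ℓ₀ / 2))..(ℓ₀ / 2), (D 1 0 η) ^ 2) := by
  obtain ⟨h0, ht, hη, cτ, cD, eq, per⟩ := hsol
  subst h0
  intro c hc
  have hab : -(ℓ₀ / 2) ≤ ℓ₀ / 2 := by linarith
  have hS : Icc 0 c ⊆ ksDom T := fun t h =>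
    ⟨h.1, lt_of_le_of_lt (EReal.coe_le_coe_iff.2 h.2) hc.2⟩
  have hder := ks_deriv (-(ℓ₀ / 2)) (ℓ₀ / 2) c hab (ksDom T) hS (D 0) Φτ (D 1) (D 2) ht
    (hη 0 (by norm_num)) (hη 1 (by norm_num)) cτ (cD 0 (by norm_num)) (cD 1 (by norm_num))
    (cD 2 (by norm_num)) (fun τ h => per τ h 0 (by norm_num)) (fun τ h => per τ h 1 (by norm_num))
  have hle : ∀ s ∈ Icc 0 c, (∫ y in (-(ℓ₀ / 2))..(ℓ₀ / 2), -(Φτ s y * (D 2 s y + D 2 s y)))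
      ≤ 13 / 3 * ∫ y in (-(ℓ₀ / 2))..(ℓ₀ / 2), (D 1 s y) ^ 2 := by
    intro s hs
    have h := hS hs
    have c1 := ks_slice (cD 1 (by norm_num)) h
    have c2 := ks_slice (cD 2 (by norm_num)) h
    have c3 := ks_slice (cD 3 (by norm_num)) h
    have c4 := ks_slice (cD 4 (by norm_num)) h
    have cT := ks_slice cτ h
    have e := ks_per hab
      (fun y => 6 * (D 3 s y * D 2 s y) + 2 * (D 1 s y * D 2 s y) + 1 / 3 * (D 1 s y) ^ 3)
      (fun y => 6 * (D 4 s y * D 2 s y + D 3 s y * D 3 s y)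
        + 2 * (D 2 s y * D 2 s y + D 1 s y * D 3 s y) + (D 1 s y) ^ 2 * D 2 s y)
      (fun y hy => by
        have d1 := hη 1 (by norm_num) s h y hy
        have d2 := hη 2 (by norm_num) s h y hy
        have d3 := hη 3 (by norm_num) s h y hy
        refine HasDerivWithinAt.congr_deriv ((((d3.mul d2).const_mul 6).add ((d1.mul d2).const_mul 2)).add
          ((d1.pow 3).const_mul (1 / 3))) ?_
        push_cast
        ring)
      (by fun_prop)
      (by simp only [per s h 1 (by norm_num), per s h 2 (by norm_num), per s h 3 (by norm_num)])
    rw [← intervalIntegral.integral_const_mul, ← sub_nonpos, ← e,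
      ← intervalIntegral.integral_sub (ContinuousOn.intervalIntegrable_of_Icc hab (by fun_prop))
      (ContinuousOn.intervalIntegrable_of_Icc hab (by fun_prop))]
    refine intervalIntegral.integral_mono_on hab
      (ContinuousOn.intervalIntegrable_of_Icc hab (by fun_prop))
      (ContinuousOn.intervalIntegrable_of_Icc hab (by fun_prop)) fun y hy => ?_
    rw [eq s h y hy]
    nlinarith [sq_nonneg (D 3 s y + D 1 s y / 6), sq_nonneg (D 1 s y)]
  have hanti : AntitoneOn (fun t => Real.exp (-(13 / 3) * t) *
      ∫ y in (-(ℓ₀ / 2))..(ℓ₀ / 2), (D 1 t y) ^ 2) (Icc 0 c) := by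
    have hd : ∀ s ∈ Icc 0 c, HasDerivWithinAt (fun t => Real.exp (-(13 / 3) * t) *
        ∫ y in (-(ℓ₀ / 2))..(ℓ₀ / 2), (D 1 t y) ^ 2)
        (Real.exp (-(13 / 3) * s) * (-(13 / 3) * 1) * (∫ y in (-(ℓ₀ / 2))..(ℓ₀ / 2), (D 1 s y) ^ 2)
          + Real.exp (-(13 / 3) * s) *
          ∫ y in (-(ℓ₀ / 2))..(ℓ₀ / 2), -(Φτ s y * (D 2 s y + D 2 s y))) (Icc 0 c) s :=
      fun s hs => (((hasDerivWithinAt_id s _).const_mul (-(13 / 3) : ℝ)).exp).mul (hder s hs)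
    refine antitoneOn_of_hasDerivWithinAt_nonpos (convex_Icc _ _)
      (fun s hs => (hd s hs).continuousWithinAt)
      (fun s hs => (hd s (interior_subset hs)).mono interior_subset) fun s hs => ?_
    have := mul_le_mul_of_nonneg_left (hle s (interior_subset hs))
      (Real.exp_pos (-(13 / 3) * s)).le
    linarith
  have hfin := hanti ⟨le_refl 0, hc.1⟩ ⟨hc.1, le_refl c⟩ hc.1
  simp only [mul_zero, Real.exp_zero, one_mul] at hfin
  have hexp : Real.exp (13 * c / 6) = Real.sqrt (Real.exp (13 / 3 * c)) := by
    rw [eq_comm, Real.sqrt_eq_iff_mul_self_eq (Real.exp_pos _).le (Real.exp_pos _).le,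
      ← Real.exp_add]
    congr 1; ring
  rw [hexp, ← Real.sqrt_mul (Real.exp_pos _).le]
  apply Real.sqrt_le_sqrt
  have h3 := mul_le_mul_of_nonneg_left hfin (Real.exp_pos (13 / 3 * c)).le
  rwa [← mul_assoc, ← Real.exp_add, show 13 / 3 * c + -(13 / 3) * c = 0 by ring, Real.exp_zero,
    one_mul] at h3
end

section
/- Fix ℓ₀ > 0, T ∈ (0, ∞], and let Φ : [0, T) × [−ℓ₀/2, ℓ₀/2] → ℝ be a C^{1,4} solution of the Kuramoto–Sivashinsky equation Φ_τ = −3Φ_ηηηη − Φ_ηη − (1/2)(Φ_η)² satisfying the periodic boundary conditions D_η^{(k)}Φ(τ,−ℓ₀/2) = D_η^{(k)}Φ(τ,ℓ₀/2) for k = 0,1,2,3 and Φ(0,·) = Φ₀. Let Π(Φ(τ,·)) = (1/ℓ₀)∫_{−ℓ₀/2}^{ℓ₀/2} Φ(τ,η) dη denote the average. Then for every τ ∈ [0, T) and every η ∈ [−ℓ₀/2, ℓ₀/2], |Φ(τ,η) − Π(Φ(τ,·))| ≤ √ℓ₀ · e^{13τ/6} · ‖Φ₀'‖₂, where ‖f‖₂²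 = ∫_{−ℓ₀/2}^{ℓ₀/2} f(η)² dη. -/
open Set

open MeasureTheory Filter Topology in
lemma ks_ibp {a b : ℝ} (hab : a ≤ b) {u v u' v' : ℝ → ℝ}
    (hu : ∀ x ∈ Icc a b, HasDerivWithinAt u (u' x) (Icc a b) x)
    (hv : ∀ x ∈ Icc a b, HasDerivWithinAt v (v' x) (Icc a b) x)
    (hu' : ContinuousOn u' (Icc a b)) (hv' : ContinuousOn v' (Icc a b))
    (hua : u a = u b) (hva : v a = v b) :
    ∫ x in a..b, u x * v' x = - ∫ x in a..b, u' x * v x := by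
  have h := intervalIntegral.integral_mul_deriv_eq_deriv_mul_of_hasDerivWithinAt
    (a := a) (b := b) (u := u) (v := v) (u' := u') (v' := v')
    (by rwa [uIcc_of_le hab]) (by rwa [uIcc_of_le hab])
    (hu'.intervalIntegrable_of_Icc hab) (hv'.intervalIntegrable_of_Icc hab)
  rw [h, hua, hva]; ring

open MeasureTheory Filter Topology in
lemma ks_rhs {a b : ℝ} (hab : a ≤ b) {f0 f1 f2 f3 f4 p : ℝ → ℝ}
    (h1 : ∀ x ∈ Icc a b, HasDerivWithinAt f1 (f2 x) (Icc a b) x)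
    (h2 : ∀ x ∈ Icc a b, HasDerivWithinAt f2 (f3 x) (Icc a b) x)
    (h3 : ∀ x ∈ Icc a b, HasDerivWithinAt f3 (f4 x) (Icc a b) x)
    (c4 : ContinuousOn f4 (Icc a b))
    (p1 : f1 a = f1 b) (p2 : f2 a = f2 b) (p3 : f3 a = f3 b)
    (hp : ∀ x ∈ Icc a b, p x = -3 * f4 x - f2 x - 1 / 2 * (f1 x) ^ 2) :
    - ∫ x in a..b, p x * (f2 x + f2 x) ≤ 1 / 6 * ∫ x in a..b, (f1 x) ^ 2 := by
  have c1 : ContinuousOn f1 (Icc a b) := fun x hx => (h1 x hx).continuousWithinAt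
  have c2 : ContinuousOn f2 (Icc a b) := fun x hx => (h2 x hx).continuousWithinAt
  have c3 : ContinuousOn f3 (Icc a b) := fun x hx => (h3 x hx).continuousWithinAt
  have e1 : ∫ x in a..b, f2 x * f4 x = - ∫ x in a..b, f3 x * f3 x :=
    ks_ibp hab h2 h3 c3 c4 p2 p3
  have e2 : ∫ x in a..b, f1 x * f3 x = - ∫ x in a..b, f2 x * f2 x :=
    ks_ibp hab h1 h2 c2 c3 p1 p2
  have e3 : ∫ x in a..b, f1 x ^ 2 * f2 x = - ∫ x in a..b, (2 * f1 x * f2 x) * f1 x := by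
    refine ks_ibp hab (u := fun x => f1 x ^ 2) (u' := fun x => 2 * f1 x * f2 x) (fun x hx => ?_)
      h1 ?_ c2 (by simp [p1]) p1
    · have h := (h1 x hx).mul (h1 x hx)
      have e : (fun x => f1 x ^ 2) = f1 * f1 := by ext z; simp [sq]
      rw [e]
      exact h.congr_deriv (by ring)
    · fun_prop
  have e3' : ∫ x in a..b, f1 x ^ 2 * f2 x = 0 := by
    have : ∫ x in a..b, (2 * f1 x * f2 x) * f1 x = 2 * ∫ x in a..b, f1 x ^ 2 * f2 x := by
      rw [← intervalIntegral.integral_const_mul]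
      congr 1; ext x; ring
    linarith
  have i1 : IntervalIntegrable (fun x => f2 x * f4 x) volume a b :=
    (c2.mul c4).intervalIntegrable_of_Icc hab
  have i2 : IntervalIntegrable (fun x => f2 x * f2 x) volume a b :=
    (c2.mul c2).intervalIntegrable_of_Icc hab
  have i3 : IntervalIntegrable (fun x => f1 x ^ 2 * f2 x) volume a b :=
    ((c1.pow 2).mul c2).intervalIntegrable_of_Icc hab
  have i4 : IntervalIntegrable (fun x => f1 x * f3 x) volume a b :=
    (c1.mul c3).intervalIntegrable_of_Icc hab
  have i5 : IntervalIntegrable (fun x => f3 x * f3 x) volume a b :=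
    (c3.mul c3).intervalIntegrable_of_Icc hab
  have i6 : IntervalIntegrable (fun x => f1 x ^ 2) volume a b :=
    (c1.pow 2).intervalIntegrable_of_Icc hab
  have e4 : ∫ x in a..b, p x * (f2 x + f2 x) =
      ∫ x in a..b, ((-6) * (f2 x * f4 x) + (-2) * (f2 x * f2 x)) + (-1) * (f1 x ^ 2 * f2 x) := by
    apply intervalIntegral.integral_congr
    intro x hx
    rw [uIcc_of_le hab] at hx
    simp only [hp x hx]; ring
  rw [intervalIntegral.integral_add ((i1.const_mul _).add (i2.const_mul _)) (i3.const_mul _),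
    intervalIntegral.integral_add (i1.const_mul _) (i2.const_mul _),
    intervalIntegral.integral_const_mul, intervalIntegral.integral_const_mul,
    intervalIntegral.integral_const_mul] at e4
  have e5 : 0 ≤ ∫ x in a..b, (6 * (f3 x * f3 x) + 2 * (f1 x * f3 x)) + (1 / 6) * (f1 x ^ 2) := by
    apply intervalIntegral.integral_nonneg hab
    intro x _
    nlinarith [sq_nonneg (f3 x + f1 x / 6)]
  rw [intervalIntegral.integral_add ((i5.const_mul _).add (i4.const_mul _)) (i6.const_mul _),
    intervalIntegral.integral_add (i5.const_mul _) (i4.const_mul _),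
    intervalIntegral.integral_const_mul, intervalIntegral.integral_const_mul,
    intervalIntegral.integral_const_mul] at e5
  linarith

open MeasureTheory Filter Topology in
lemma ks_slope {a b : ℝ} (hab : a ≤ b) {u v u1 v1 u2 v2 : ℝ → ℝ}
    (hu : ∀ x ∈ Icc a b, HasDerivWithinAt u (u1 x) (Icc a b) x)
    (hu1 : ∀ x ∈ Icc a b, HasDerivWithinAt u1 (u2 x) (Icc a b) x)
    (hv : ∀ x ∈ Icc a b, HasDerivWithinAt v (v1 x) (Icc a b) x)
    (hv1 : ∀ x ∈ Icc a b, HasDerivWithinAt v1 (v2 x) (Icc a b) x)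
    (cu : ContinuousOn u2 (Icc a b)) (cv : ContinuousOn v2 (Icc a b))
    (pu : u a = u b) (pu1 : u1 a = u1 b) (pv : v a = v b) (pv1 : v1 a = v1 b) :
    (∫ x in a..b, u1 x ^ 2) - ∫ x in a..b, v1 x ^ 2 =
      - ∫ x in a..b, (u x - v x) * (u2 x + v2 x) := by
  have c1 : ContinuousOn u1 (Icc a b) := fun x hx => (hu1 x hx).continuousWithinAt
  have c2 : ContinuousOn v1 (Icc a b) := fun x hx => (hv1 x hx).continuousWithinAt
  have := ks_ibp hab (u := fun x => u x - v x) (v := fun x => u1 x + v1 x)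
    (fun x hx => (hu x hx).sub (hv x hx)) (fun x hx => (hu1 x hx).add (hv1 x hx))
    (c1.sub c2) (cu.add cv) (by simp [pu, pv]) (by simp [pu1, pv1])
  have i1 : IntervalIntegrable (fun x => u1 x ^ 2) volume a b :=
    (c1.pow 2).intervalIntegrable_of_Icc hab
  have i2 : IntervalIntegrable (fun x => v1 x ^ 2) volume a b :=
    (c2.pow 2).intervalIntegrable_of_Icc hab
  rw [this, neg_neg, ← intervalIntegral.integral_sub i1 i2]
  congr 1; ext x; ring

open MeasureTheory Filter Topology in
lemma ks_dev {a b : ℝ} (hab : a < b) {u u' : ℝ → ℝ}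
    (hu : ∀ x ∈ Icc a b, HasDerivWithinAt u (u' x) (Icc a b) x)
    (hu' : ContinuousOn u' (Icc a b)) {x y : ℝ} (hx : x ∈ Icc a b) (hy : y ∈ Icc a b)
    (hxy : x ≤ y) :
    (u y - u x) ^ 2 ≤ (b - a) * ∫ z in a..b, u' z ^ 2 := by
  have hs : Icc x y ⊆ Icc a b := Icc_subset_Icc hx.1 hy.2
  have i1 : IntervalIntegrable u' volume x y := (hu'.mono hs).intervalIntegrable_of_Icc hxy
  have i2 : IntervalIntegrable (fun z => u' z ^ 2) volume x y :=
    ((hu'.mono hs).pow 2).intervalIntegrable_of_Icc hxy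
  have hf : ∫ z in x..y, u' z = u y - u x :=
    intervalIntegral.integral_eq_sub_of_hasDerivAt_of_le hxy
      (fun z hz => ((hu z (hs hz)).continuousWithinAt).mono hs)
      (fun z hz => (hu z (hs ⟨hz.1.le, hz.2.le⟩)).hasDerivAt
        (Icc_mem_nhds (hx.1.trans_lt hz.1) (hz.2.trans_le hy.2))) i1
  have hm : ∫ z in x..y, u' z ^ 2 ≤ ∫ z in a..b, u' z ^ 2 := by
    apply intervalIntegral.integral_mono_interval hx.1 hxy hy.2
    · exact Eventually.of_forall fun z => sq_nonneg _
    · exact (hu'.pow 2).intervalIntegrable_of_Icc hab.le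
  set d := u y - u x with hd
  set L := b - a with hL
  have hLp : 0 < L := sub_pos.2 hab
  have h0 : 0 ≤ ∫ z in x..y, (L ^ 2 * (u' z ^ 2) + (-2 * L * d) * u' z) + d ^ 2 := by
    apply intervalIntegral.integral_nonneg hxy
    intro z _
    nlinarith [sq_nonneg (L * u' z - d)]
  rw [intervalIntegral.integral_add ((i2.const_mul _).add (i1.const_mul _)) (by simp),
    intervalIntegral.integral_add (i2.const_mul _) (i1.const_mul _),
    intervalIntegral.integral_const_mul, intervalIntegral.integral_const_mul,
    intervalIntegral.integral_const, hf, smul_eq_mul] at h0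
  have hyx : y - x ≤ L := by rw [hL]; linarith [hx.1, hy.2]
  have h1 : (y - x) * d ^ 2 ≤ L * d ^ 2 := by gcongr
  have h2 : L * d ^ 2 ≤ L * (L * ∫ z in x..y, u' z ^ 2) := by nlinarith
  have h3 := le_of_mul_le_mul_left h2 hLp
  exact h3.trans (by gcongr)

open MeasureTheory Filter Topology in
lemma ks_avg {a b C : ℝ} (hab : a < b) {u : ℝ → ℝ} (hu : ContinuousOn u (Icc a b)) {x : ℝ}
    (h : ∀ y ∈ Icc a b, |u x - u y| ≤ C) :
    |u x - 1 / (b - a) * ∫ y in a..b, u y| ≤ C := by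
  have hL : 0 < b - a := sub_pos.2 hab
  have e : u x - 1 / (b - a) * ∫ y in a..b, u y = 1 / (b - a) * ∫ y in a..b, (u x - u y) := by
    rw [intervalIntegral.integral_sub (by simp) (hu.intervalIntegrable_of_Icc hab.le)]
    simp; field_simp
  have := intervalIntegral.norm_integral_le_of_norm_le_const (a := a) (b := b)
    (f := fun y => u x - u y) (C := C) (fun y hy => by
      rw [uIoc_of_le hab.le] at hy; exact h y ⟨hy.1.le, hy.2⟩)
  rw [e, abs_mul, abs_of_pos (by positivity)]
  rw [abs_of_pos hL, Real.norm_eq_abs] at this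
  rw [one_div, inv_mul_le_iff₀ hL]; linarith

open MeasureTheory Filter Topology in
lemma ks_hasDeriv {a b S : ℝ} (hab : a ≤ b) {p : ℝ → ℝ → ℝ} {D : ℕ → ℝ → ℝ → ℝ}
    (ht : ∀ t ∈ Icc 0 S, ∀ x ∈ Icc a b,
      HasDerivWithinAt (fun s => D 0 s x) (p t x) (Icc 0 S) t)
    (hD : ∀ j < 4, ∀ t ∈ Icc 0 S, ∀ x ∈ Icc a b,
      HasDerivWithinAt (fun y => D j t y) (D (j + 1) t x) (Icc a b) x)
    (cp : ContinuousOn (fun q : ℝ × ℝ => p q.1 q.2) (Icc 0 S ×ˢ Icc a b))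
    (cD : ContinuousOn (fun q : ℝ × ℝ => D 2 q.1 q.2) (Icc 0 S ×ˢ Icc a b))
    (per : ∀ t ∈ Icc 0 S, ∀ j ≤ 3, D j t a = D j t b) {t : ℝ} (htS : t ∈ Icc 0 S) :
    HasDerivWithinAt (fun s => ∫ x in a..b, (D 1 s x) ^ 2)
      (- ∫ x in a..b, p t x * (D 2 t x + D 2 t x)) (Icc 0 S) t := by
  have hK : IsCompact (Icc (0:ℝ) S ×ˢ Icc a b) := isCompact_Icc.prod isCompact_Icc
  obtain ⟨M, hM⟩ := hK.exists_bound_of_continuousOn cp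
  obtain ⟨N, hN⟩ := hK.exists_bound_of_continuousOn cD
  have c2 : ∀ s ∈ Icc 0 S, ContinuousOn (D 2 s) (Icc a b) := fun s hs x hx =>
    (hD 2 (by norm_num) s hs x hx).continuousWithinAt
  have c0 : ∀ s ∈ Icc 0 S, ContinuousOn (D 0 s) (Icc a b) := fun s hs x hx =>
    (hD 0 (by norm_num) s hs x hx).continuousWithinAt
  rw [hasDerivWithinAt_iff_tendsto_slope]
  have hmem : ∀ᶠ s in 𝓝[Icc 0 S \ {t}] t, s ∈ Icc 0 S \ {t} := self_mem_nhdsWithin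
  have key : Tendsto (fun s => ∫ x in a..b, (s - t)⁻¹ * (D 0 s x - D 0 t x) * (D 2 s x + D 2 t x))
      (𝓝[Icc 0 S \ {t}] t) (𝓝 (∫ x in a..b, p t x * (D 2 t x + D 2 t x))) := by
    apply intervalIntegral.tendsto_integral_filter_of_dominated_convergence
      (fun _ => M * (N + N))
    · filter_upwards [hmem] with s hs
      rw [uIoc_of_le hab]
      have := c0 s hs.1
      have := c0 t htS
      have := c2 s hs.1
      have := c2 t htS
      have h : ContinuousOn (fun x => (s - t)⁻¹ * (D 0 s x - D 0 t x) * (D 2 s x + D 2 t x))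
        (Icc a b) := by fun_prop
      exact (h.mono Ioc_subset_Icc_self).aestronglyMeasurable measurableSet_Ioc
    · filter_upwards [hmem] with s hs
      refine Eventually.of_forall fun x hx => ?_
      rw [uIoc_of_le hab] at hx
      have hx' : x ∈ Icc a b := ⟨hx.1.le, hx.2⟩
      have h1 := (convex_Icc (0:ℝ) S).norm_image_sub_le_of_norm_hasDerivWithin_le
        (fun r hr => ht r hr x hx') (fun r hr => hM (r, x) ⟨hr, hx'⟩) htS hs.1
      have hst : 0 < ‖s - t‖ := norm_pos_iff.2 (sub_ne_zero.2 hs.2)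
      have h2 : ‖(s - t)⁻¹ * (D 0 s x - D 0 t x)‖ ≤ M := by
        rw [norm_mul, norm_inv, inv_mul_le_iff₀ hst]; linarith
      have h3 : ‖D 2 s x + D 2 t x‖ ≤ N + N :=
        (norm_add_le _ _).trans (add_le_add (hN (s, x) ⟨hs.1, hx'⟩) (hN (t, x) ⟨htS, hx'⟩))
      rw [norm_mul]
      exact mul_le_mul h2 h3 (norm_nonneg _) ((norm_nonneg _).trans h2)
    · simp
    · refine Eventually.of_forall fun x hx => ?_
      rw [uIoc_of_le hab] at hx
      have hx' : x ∈ Icc a b := ⟨hx.1.le, hx.2⟩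
      have h1 := hasDerivWithinAt_iff_tendsto_slope.1 (ht t htS x hx')
      have h2 : Tendsto (fun s => D 2 s x) (𝓝[Icc 0 S \ {t}] t) (𝓝 (D 2 t x)) := by
        have : ContinuousOn (fun s => D 2 s x) (Icc 0 S) :=
          cD.comp (f := fun s : ℝ => (s, x)) (by fun_prop) (fun s hs => ⟨hs, hx'⟩)
        exact (this t htS).mono_left (nhdsWithin_mono _ sdiff_subset)
      refine (h1.mul (h2.add_const (D 2 t x))).congr fun s => ?_
      simp [slope_def_module]
  refine key.neg.congr' ?_
  filter_upwards [hmem] with s hs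
  have h := ks_slope hab (hD 0 (by norm_num) s hs.1) (hD 1 (by norm_num) s hs.1)
    (hD 0 (by norm_num) t htS) (hD 1 (by norm_num) t htS) (c2 s hs.1) (c2 t htS)
    (per s hs.1 0 (by norm_num)) (per s hs.1 1 (by norm_num))
    (per t htS 0 (by norm_num)) (per t htS 1 (by norm_num))
  rw [slope_def_module, h, smul_eq_mul, mul_neg, ← intervalIntegral.integral_const_mul]
  congr 2; ext x; ring

lemma ks_gronwall {S : ℝ} (hS : 0 ≤ S) {E E' : ℝ → ℝ}
    (h : ∀ t ∈ Icc 0 S, HasDerivWithinAt E (E' t) (Icc 0 S) t)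
    (hE : ∀ t ∈ Icc 0 S, E' t ≤ 1 / 6 * E t) : E S ≤ Real.exp (S / 6) * E 0 := by
  have hd : ∀ t ∈ Icc 0 S, HasDerivWithinAt (fun t => Real.exp (-(t / 6)) * E t)
      (Real.exp (-(t / 6)) * (-(1 / 6)) * E t + Real.exp (-(t / 6)) * E' t) (Icc 0 S) t := by
    intro t ht
    have h1 : HasDerivAt (fun t : ℝ => Real.exp (-(t / 6))) (Real.exp (-(t / 6)) * (-(1 / 6))) t :=
      (((hasDerivAt_id t).div_const 6).neg).exp
    exact h1.hasDerivWithinAt.mul (h t ht)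
  have hm := antitoneOn_of_hasDerivWithinAt_nonpos (convex_Icc (0:ℝ) S)
    (fun t ht => (hd t ht).continuousWithinAt)
    (fun t ht => (hd t (interior_subset ht)).mono interior_subset)
    (fun t ht => by
      have := hE t (interior_subset ht)
      have := Real.exp_pos (-(t / 6))
      nlinarith)
  have := hm (left_mem_Icc.2 hS) (right_mem_Icc.2 hS) hS
  simp only [zero_div, neg_zero, Real.exp_zero, one_mul, Real.exp_neg] at this
  rwa [inv_mul_le_iff₀ (Real.exp_pos _)] at this

/-- estimate (I-P-sup): for any `C^{1,4}` solution of the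
Kuramoto–Sivashinsky equation on `[0,T)`, the deviation of `Φ(τ,·)` from its spatial
average is bounded by `√ℓ₀ e^{13τ/6} ‖Φ₀'‖₂` (with `Φ₀' = D 1 0`). -/
theorem KS_deviation_bound (ℓ₀ : ℝ) (T : EReal) (hℓ₀ : 0 < ℓ₀) (hT : 0 < T)
    (Φ Φτ : ℝ → ℝ → ℝ) (D : ℕ → ℝ → ℝ → ℝ)
    (hsol : IsKSSolutionOn ℓ₀ T Φ Φτ D) :
    ∀ τ ∈ ksDom T, ∀ η ∈ Iℓ ℓ₀,
      |Φ τ η - 1 / ℓ₀ * ∫ y in (-(ℓ₀ / 2))..(ℓ₀ / 2), Φ τ y| ≤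
        Real.sqrt ℓ₀ * Real.exp (13 * τ / 6) *
          Real.sqrt (∫ y in (-(ℓ₀ / 2))..(ℓ₀ / 2), (D 1 0 y) ^ 2) := by
  intro τ hτ η hη
  obtain ⟨hD0, ht, hD, cp, cD, eq, per⟩ := hsol
  subst hD0
  have hab : -(ℓ₀ / 2) < ℓ₀ / 2 := by linarith
  have hsub : Icc 0 τ ⊆ ksDom T := fun s hs =>
    ⟨hs.1, lt_of_le_of_lt (EReal.coe_le_coe_iff.2 hs.2) hτ.2⟩
  have c1 : ContinuousOn (D 1 τ) (Iℓ ℓ₀) := fun x hx =>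
    (hD 1 (by norm_num) τ hτ x hx).continuousWithinAt
  have c0 : ContinuousOn (D 0 τ) (Iℓ ℓ₀) := fun x hx =>
    (hD 0 (by norm_num) τ hτ x hx).continuousWithinAt
  have hsub2 : Icc 0 τ ×ˢ Iℓ ℓ₀ ⊆ ksDom T ×ˢ Iℓ ℓ₀ := prod_mono_left hsub
  have hE := ks_gronwall hτ.1 (E := fun s => ∫ x in (-(ℓ₀ / 2))..(ℓ₀ / 2), (D 1 s x) ^ 2)
    (fun t htS => ks_hasDeriv hab.le (p := Φτ) (D := D)
      (fun s hs x hx => (ht s (hsub hs) x hx).mono hsub)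
      (fun j hj s hs x hx => hD j hj s (hsub hs) x hx)
      (cp.mono hsub2) ((cD 2 (by norm_num)).mono hsub2)
      (fun s hs j hj => per s (hsub hs) j hj) htS)
    (fun t htS => by
      have hs := hsub htS
      exact ks_rhs hab.le (f0 := D 0 t) (hD 1 (by norm_num) t hs) (hD 2 (by norm_num) t hs)
        (hD 3 (by norm_num) t hs)
        ((cD 4 le_rfl).comp (f := fun x : ℝ => (t, x)) (by fun_prop) (fun x hx => ⟨hs, hx⟩))
        (per t hs 1 (by norm_num)) (per t hs 2 (by norm_num)) (per t hs 3 (by norm_num))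
        (eq t hs))
  beta_reduce at hE
  set E0 := ∫ y in (-(ℓ₀ / 2))..(ℓ₀ / 2), (D 1 0 y) ^ 2 with hE0
  have hE0n : 0 ≤ E0 := intervalIntegral.integral_nonneg hab.le fun x _ => sq_nonneg _
  have hlen : ℓ₀ / 2 - -(ℓ₀ / 2) = ℓ₀ := by ring
  have hτ0 : 0 ≤ τ := hτ.1
  have hexp : Real.exp (τ / 6) ≤ Real.exp (13 * τ / 6) ^ 2 := by
    rw [← Real.exp_nat_mul]
    apply Real.exp_le_exp.2
    push_cast; linarith
  have hsq : ∀ y ∈ Iℓ ℓ₀, (D 0 τ η - D 0 τ y) ^ 2 ≤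
      (Real.sqrt ℓ₀ * Real.exp (13 * τ / 6) * Real.sqrt E0) ^ 2 := by
    intro y hy
    have h1 : (D 0 τ η - D 0 τ y) ^ 2 ≤
        ℓ₀ * ∫ x in (-(ℓ₀ / 2))..(ℓ₀ / 2), (D 1 τ x) ^ 2 := by
      rw [← hlen]
      have hd := hD 0 (by norm_num) τ hτ
      rcases le_total η y with h | h
      · have := ks_dev hab hd c1 hη hy h
        rw [hlen] at this ⊢
        linarith [sub_sq_comm (D 0 τ η) (D 0 τ y)]
      · have := ks_dev hab hd c1 hy hη h
        rw [hlen] at this ⊢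
        exact this
    rw [mul_pow, mul_pow, Real.sq_sqrt hℓ₀.le, Real.sq_sqrt hE0n]
    calc _ ≤ _ := h1
      _ ≤ ℓ₀ * (Real.exp (τ / 6) * E0) := by gcongr
      _ ≤ ℓ₀ * (Real.exp (13 * τ / 6) ^ 2 * E0) := by gcongr
      _ = _ := by ring
  have := ks_avg hab c0 (x := η) (fun y hy => abs_le_of_sq_le_sq (hsq y hy) (by positivity))
  rwa [hlen] at this
end

section
/- Fix ℓ₀ > 0, T ∈ (0, ∞], and let Φ : [0, T) × [−ℓ₀/2, ℓ₀/2] → ℝ be a C^{1,4} solution of the Kuramoto–Sivashinsky equation Φ_τ = −3Φ_ηηηη − Φ_ηη − (1/2)(Φ_η)² satisfying the periodic boundary conditions D_η^{(k)}Φ(τ,−ℓ₀/2) = D_η^{(k)}Φ(τ,ℓ₀/2) for k = 0,1,2,3 and Φ(0,·) = Φ₀. Let Π(Φ(τ,·)) = (1/ℓ₀)∫_{−ℓ₀/2}^{ℓ₀/2} Φ(τ,η) dη. Then for every τ ∈ [0, T), |Π(Φ(τ,·))| ≤ |Π(Φ₀)| + (3/(26ℓ₀))·‖Φ₀'‖₂²·e^{13τ/3},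 where ‖f‖₂² = ∫_{−ℓ₀/2}^{ℓ₀/2} f(η)² dη. -/
open Set

open MeasureTheory Filter Topology

theorem aux_per {a b : ℝ} (hab : a ≤ b) {f f' : ℝ → ℝ}
    (hf : ∀ x ∈ Icc a b, HasDerivWithinAt f (f' x) (Icc a b) x)
    (hc : ContinuousOn f' (Icc a b)) (hp : f a = f b) :
    ∫ x in a..b, f' x = 0 := by
  rw [intervalIntegral.integral_eq_sub_of_hasDerivAt_of_le hab
    (fun x hx => (hf x hx).continuousWithinAt)
    (fun x hx => (hf x (Ioo_subset_Icc_self hx)).hasDerivAt (Icc_mem_nhds hx.1 hx.2))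
    (hc.intervalIntegrable_of_Icc hab), hp, sub_self]

theorem aux_slice {S I : Set ℝ} {u : ℝ → ℝ → ℝ}
    (hu : ContinuousOn (fun p : ℝ × ℝ => u p.1 p.2) (S ×ˢ I)) {t : ℝ} (ht : t ∈ S) :
    ContinuousOn (fun x => u t x) I :=
  hu.comp (f := fun x => (t, x)) (by fun_prop) (fun _ hx => ⟨ht, hx⟩)

theorem aux_slice' {S I : Set ℝ} {u : ℝ → ℝ → ℝ}
    (hu : ContinuousOn (fun p : ℝ × ℝ => u p.1 p.2) (S ×ˢ I)) {x : ℝ} (hx : x ∈ I) :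
    ContinuousOn (fun t => u t x) S :=
  hu.comp (f := fun t => (t, x)) (by fun_prop) (fun _ ht => ⟨ht, hx⟩)

theorem aux_slope {a b c d : ℝ} (hab : a ≤ b) {u u' w : ℝ → ℝ → ℝ}
    (hu : ∀ t ∈ Icc c d, ∀ x ∈ Icc a b, HasDerivWithinAt (fun s => u s x) (u' t x) (Icc c d) t)
    (hcu : ContinuousOn (fun p : ℝ × ℝ => u p.1 p.2) (Icc c d ×ˢ Icc a b))
    (hcu' : ContinuousOn (fun p : ℝ × ℝ => u' p.1 p.2) (Icc c d ×ˢ Icc a b))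
    (hcw : ContinuousOn (fun p : ℝ × ℝ => w p.1 p.2) (Icc c d ×ˢ Icc a b))
    {t : ℝ} (ht : t ∈ Icc c d) :
    Tendsto (fun s => ∫ x in a..b, (s - t)⁻¹ * (u s x - u t x) * w s x)
      (𝓝[Icc c d \ {t}] t) (𝓝 (∫ x in a..b, u' t x * w t x)) := by
  have hK : IsCompact (Icc c d ×ˢ Icc a b) := isCompact_Icc.prod isCompact_Icc
  obtain ⟨C, hC⟩ := hK.exists_bound_of_continuousOn hcu'
  obtain ⟨C', hC'⟩ := hK.exists_bound_of_continuousOn hcw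
  have hsub : uIoc a b ⊆ Icc a b := by rw [uIoc_of_le hab]; exact Ioc_subset_Icc_self
  refine intervalIntegral.tendsto_integral_filter_of_dominated_convergence
    (fun _ => C * C') ?_ ?_ (by simp) ?_
  · filter_upwards [self_mem_nhdsWithin] with s hs
    refine (ContinuousOn.aestronglyMeasurable ?_ measurableSet_Icc).mono_measure
      (Measure.restrict_mono hsub le_rfl)
    exact (continuousOn_const.mul ((aux_slice hcu hs.1).sub (aux_slice hcu ht))).mul
      (aux_slice hcw hs.1)
  · filter_upwards [self_mem_nhdsWithin] with s hs
    refine Eventually.of_forall fun x hx => ?_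
    have hx' := hsub hx
    have h1 := (convex_Icc c d).norm_image_sub_le_of_norm_hasDerivWithin_le
      (f := fun s => u s x) (f' := fun s => u' s x) (C := C)
      (fun r hr => hu r hr x hx') (fun r hr => hC (r, x) ⟨hr, hx'⟩) ht hs.1
    have h2 := hC' (s, x) ⟨hs.1, hx'⟩
    have hC0 : 0 ≤ C := (norm_nonneg _).trans (hC (s, x) ⟨hs.1, hx'⟩)
    have hst : 0 < ‖s - t‖ := norm_pos_iff.2 (sub_ne_zero.2 hs.2)
    rw [norm_mul, norm_mul, norm_inv]
    refine mul_le_mul ?_ h2 (norm_nonneg _) hC0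
    rw [inv_mul_le_iff₀ hst, mul_comm]
    exact h1
  · refine Eventually.of_forall fun x hx => ?_
    have hx' := hsub hx
    have h1 := hasDerivWithinAt_iff_tendsto_slope.1 (hu t ht x hx')
    have h2 : Tendsto (fun s => w s x) (𝓝[Icc c d \ {t}] t) (𝓝 (w t x)) :=
      ((aux_slice' hcw hx') t ht).mono_left (nhdsWithin_mono _ sdiff_subset)
    refine (h1.mul h2).congr fun s => ?_
    simp [slope_def_field, div_eq_inv_mul]

theorem aux_main {a b d : ℝ} (hab : a ≤ b) (hd : 0 ≤ d) (v : ℝ → ℝ → ℝ) (D : ℕ → ℝ → ℝ → ℝ)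
    (hv : ∀ t ∈ Icc 0 d, ∀ x ∈ Icc a b, HasDerivWithinAt (fun s => D 0 s x) (v t x) (Icc 0 d) t)
    (hD : ∀ j < 4, ∀ t ∈ Icc 0 d, ∀ x ∈ Icc a b,
      HasDerivWithinAt (fun y => D j t y) (D (j + 1) t x) (Icc a b) x)
    (hcv : ContinuousOn (fun p : ℝ × ℝ => v p.1 p.2) (Icc 0 d ×ˢ Icc a b))
    (hcD : ∀ j ≤ 4, ContinuousOn (fun p : ℝ × ℝ => D j p.1 p.2) (Icc 0 d ×ˢ Icc a b))
    (heq : ∀ t ∈ Icc 0 d, ∀ x ∈ Icc a b,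
      v t x = -3 * D 4 t x - D 2 t x - 1 / 2 * (D 1 t x) ^ 2)
    (hper : ∀ t ∈ Icc 0 d, ∀ j ≤ 3, D j t a = D j t b) :
    |∫ x in a..b, D 0 d x| ≤ |∫ x in a..b, D 0 0 x| +
      3 / 26 * (∫ x in a..b, (D 1 0 x) ^ 2) * Real.exp (13 * d / 3) := by
  have hs : ∀ j ≤ 4, ∀ t ∈ Icc 0 d, ContinuousOn (fun x => D j t x) (Icc a b) :=
    fun j hj t ht => aux_slice (hcD j hj) ht
  have hI : ∀ {f : ℝ → ℝ}, ContinuousOn f (Icc a b) → IntervalIntegrable f volume a b :=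
    fun h => h.intervalIntegrable_of_Icc hab
  set E : ℝ → ℝ := fun t => ∫ x in a..b, (D 1 t x) ^ 2 with hE
  set P : ℝ → ℝ := fun t => ∫ x in a..b, D 0 t x with hP
  have hE0 : ∀ t, 0 ≤ E t := fun t =>
    intervalIntegral.integral_nonneg hab fun x _ => sq_nonneg _
  -- derivative of the mean
  have hPd : ∀ t ∈ Icc 0 d, HasDerivWithinAt P (-(1 / 2) * E t) (Icc 0 d) t := by
    intro t ht
    have h0 := aux_slope (w := fun _ _ => 1) hab hv (hcD 0 (by norm_num)) hcv
      continuousOn_const ht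
    have hval : ∫ x in a..b, v t x * 1 = -(1 / 2) * E t := by
      have z := aux_per hab (f := fun x => -3 * D 3 t x - D 1 t x)
        (f' := fun x => -3 * D 4 t x - D 2 t x)
        (fun x hx => ((hD 3 (by norm_num) t ht x hx).const_mul (-3)).sub
          (hD 1 (by norm_num) t ht x hx))
        ((continuousOn_const.mul (hs 4 le_rfl t ht)).sub (hs 2 (by norm_num) t ht))
        (by simp only [hper t ht 3 le_rfl, hper t ht 1 (by norm_num)])
      have e : ∫ x in a..b, v t x * 1 =
          ∫ x in a..b, ((-3 * D 4 t x - D 2 t x) + (-(1 / 2)) * (D 1 t x) ^ 2) := by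
        refine intervalIntegral.integral_congr fun x hx => ?_
        rw [uIcc_of_le hab] at hx
        simp only [heq t ht x hx]; ring
      rw [e, intervalIntegral.integral_add, z, intervalIntegral.integral_const_mul, zero_add]
      · exact hI ((continuousOn_const.mul (hs 4 le_rfl t ht)).sub (hs 2 (by norm_num) t ht))
      · exact hI (continuousOn_const.mul ((hs 1 (by norm_num) t ht).pow 2))
    rw [hval] at h0
    rw [hasDerivWithinAt_iff_tendsto_slope]
    refine h0.congr' ?_
    filter_upwards [self_mem_nhdsWithin] with s hst
    rw [slope_def_field, div_eq_inv_mul, hP]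
    simp only [mul_one]
    rw [intervalIntegral.integral_const_mul, intervalIntegral.integral_sub
      (hI (hs 0 (by norm_num) s hst.1)) (hI (hs 0 (by norm_num) t ht))]
  -- derivative of the energy
  have hEd : ∀ t ∈ Icc 0 d, ∃ e, e ≤ 1 / 6 * E t ∧ HasDerivWithinAt E e (Icc 0 d) t := by
    intro t ht
    have hcw : ContinuousOn (fun p : ℝ × ℝ => -(D 2 p.1 p.2 + D 2 t p.2))
        (Icc 0 d ×ˢ Icc a b) := by
      refine ((hcD 2 (by norm_num)).add ?_).neg
      exact (hs 2 (by norm_num) t ht).comp continuousOn_snd (fun p hp => hp.2)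
    have h0 := aux_slope (w := fun s x => -(D 2 s x + D 2 t x)) hab hv (hcD 0 (by norm_num)) hcv
      hcw ht
    refine ⟨∫ x in a..b, v t x * -(D 2 t x + D 2 t x), ?_, ?_⟩
    rotate_left
    · rw [hasDerivWithinAt_iff_tendsto_slope]
      refine h0.congr' ?_
      filter_upwards [self_mem_nhdsWithin] with s hst
      have hs' := hst.1
      have c0 := (hs 0 (by norm_num) s hs').sub (hs 0 (by norm_num) t ht)
      have c1 := (hs 1 (by norm_num) s hs').sub (hs 1 (by norm_num) t ht)
      have c1' := (hs 1 (by norm_num) s hs').add (hs 1 (by norm_num) t ht)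
      have c2 := (hs 2 (by norm_num) s hs').add (hs 2 (by norm_num) t ht)
      have z := aux_per hab (f := fun x => (D 0 s x - D 0 t x) * (D 1 s x + D 1 t x))
        (f' := fun x => (D 1 s x - D 1 t x) * (D 1 s x + D 1 t x)
          + (D 0 s x - D 0 t x) * (D 2 s x + D 2 t x))
        (fun x hx => ((hD 0 (by norm_num) s hs' x hx).sub (hD 0 (by norm_num) t ht x hx)).mul
          ((hD 1 (by norm_num) s hs' x hx).add (hD 1 (by norm_num) t ht x hx)))
        ((c1.mul c1').add (c0.mul c2))
        (by simp only [hper t ht 0 (by norm_num), hper t ht 1 (by norm_num),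
              hper s hs' 0 (by norm_num), hper s hs' 1 (by norm_num)])
      rw [slope_def_field, div_eq_inv_mul, hE]
      simp only
      have i1 : IntervalIntegrable (fun x => D 1 s x ^ 2) volume a b :=
        hI ((hs 1 (by norm_num) s hs').pow 2)
      have i2 : IntervalIntegrable (fun x => D 1 t x ^ 2) volume a b :=
        hI ((hs 1 (by norm_num) t ht).pow 2)
      have i3 : IntervalIntegrable (fun x => (D 0 s x - D 0 t x) * -(D 2 s x + D 2 t x))
        volume a b := hI (c0.mul c2.neg)
      rw [← intervalIntegral.integral_sub i1 i2]
      simp only [mul_assoc]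
      rw [intervalIntegral.integral_const_mul]
      congr 1
      rw [← sub_eq_zero, ← neg_eq_zero, ← intervalIntegral.integral_sub i3 (i1.sub i2),
        ← intervalIntegral.integral_neg, ← z]
      congr 1
      ext x
      ring
    · have c1 := hs 1 (by norm_num) t ht
      have c2 := hs 2 (by norm_num) t ht
      have c3 := hs 3 (by norm_num) t ht
      have c4 := hs 4 (by norm_num) t ht
      have cz : ContinuousOn (fun x => 6 * (D 3 t x * D 3 t x + D 2 t x * D 4 t x)
          + 1 / 3 * ((3 : ℕ) * D 1 t x ^ (3 - 1) * D 2 t x)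
          + 2 * (D 2 t x * D 2 t x + D 1 t x * D 3 t x)) (Icc a b) := by fun_prop
      have z := aux_per hab (f := fun x => 6 * (D 2 t x * D 3 t x) + 1 / 3 * (D 1 t x) ^ 3
          + 2 * (D 1 t x * D 2 t x))
        (f' := fun x => 6 * (D 3 t x * D 3 t x + D 2 t x * D 4 t x)
          + 1 / 3 * ((3 : ℕ) * D 1 t x ^ (3 - 1) * D 2 t x)
          + 2 * (D 2 t x * D 2 t x + D 1 t x * D 3 t x))
        (fun x hx => by
          have d1 := hD 1 (by norm_num) t ht x hx
          have d2 := hD 2 (by norm_num) t ht x hx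
          have d3 := hD 3 (by norm_num) t ht x hx
          exact (((d2.mul d3).const_mul 6).add ((d1.pow 3).const_mul (1 / 3))).add
            ((d1.mul d2).const_mul 2))
        cz
        (by simp only [hper t ht 1 (by norm_num), hper t ht 2 (by norm_num),
              hper t ht 3 (by norm_num)])
      have cp : ContinuousOn (fun x => 1 / 6 * (D 1 t x) ^ 2) (Icc a b) := by fun_prop
      rw [← zero_add (1 / 6 * E t), ← z, hE]
      simp only
      rw [← intervalIntegral.integral_const_mul, ← intervalIntegral.integral_add (hI cz) (hI cp)]
      refine intervalIntegral.integral_mono_on hab (hI ?_) (hI (cz.add cp)) ?_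
      · exact (aux_slice hcv ht).mul (c2.add c2).neg
      · intro x hx
        rw [heq t ht x hx]
        push_cast
        nlinarith [sq_nonneg (D 1 t x + 6 * D 3 t x)]
  choose! e he hed using hEd
  have hIci : ∀ {f : ℝ → ℝ} {f' x : ℝ}, x ∈ Ico 0 d → HasDerivWithinAt f f' (Icc 0 d) x →
      HasDerivWithinAt f f' (Ici x) x :=
    fun hx h => h.mono_of_mem_nhdsWithin (Icc_mem_nhdsGE_of_mem hx)
  have hexp : ∀ k x : ℝ, HasDerivAt (fun t => Real.exp (k * t)) (Real.exp (k * x) * k) x := by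
    intro k x
    simpa using ((hasDerivAt_id x).const_mul k).exp
  have hgr : ∀ t ∈ Icc 0 d, E t ≤ E 0 * Real.exp (13 / 3 * t) := by
    have hg : ∀ t ∈ Icc 0 d, HasDerivWithinAt (fun t => E t * Real.exp (-(13 / 3) * t))
        (e t * Real.exp (-(13 / 3) * t) + E t * (Real.exp (-(13 / 3) * t) * (-(13 / 3))))
        (Icc 0 d) t := fun t ht => (hed t ht).mul (hexp _ t).hasDerivWithinAt
    have h := image_le_of_deriv_right_le_deriv_boundary (B := fun _ => E 0) (B' := fun _ => 0)
      (fun t ht => (hg t ht).continuousWithinAt)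
      (fun t ht => hIci ht (hg t (Ico_subset_Icc_self ht))) (by simp) continuousOn_const
      (fun t _ => hasDerivWithinAt_const _ _ _)
      (fun t ht => by
        have h1 := he t (Ico_subset_Icc_self ht)
        have h2 := hE0 t
        have h3 := Real.exp_pos (-(13 / 3) * t)
        have : (e t - 13 / 3 * E t) * Real.exp (-(13 / 3) * t) ≤ 0 :=
          mul_nonpos_of_nonpos_of_nonneg (by linarith) h3.le
        linarith)
    intro t ht
    have h1 := h ht
    rw [neg_mul, Real.exp_neg] at h1
    rwa [← div_eq_mul_inv, div_le_iff₀ (Real.exp_pos _)] at h1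
  have h := image_norm_le_of_norm_deriv_right_le_deriv_boundary (f := P)
    (f' := fun t => -(1 / 2) * E t)
    (B := fun t => |P 0| + 3 / 26 * E 0 * Real.exp (13 / 3 * t))
    (B' := fun t => 3 / 26 * E 0 * (Real.exp (13 / 3 * t) * (13 / 3)))
    (fun t ht => (hPd t ht).continuousWithinAt)
    (fun t ht => hIci ht (hPd t (Ico_subset_Icc_self ht)))
    (by
      have := hE0 0
      simp only [Real.norm_eq_abs, mul_zero, Real.exp_zero]
      linarith)
    (fun t => ((hexp _ t).const_mul _).const_add _)
    (fun t ht => by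
      have h1 := hgr t (Ico_subset_Icc_self ht)
      rw [norm_mul, Real.norm_of_nonneg (hE0 t)]
      norm_num
      linarith)
    (right_mem_Icc.2 hd)
  rw [show 13 * d / 3 = 13 / 3 * d by ring]
  exact h

/-- estimate (Pi-sup): for any `C^{1,4}` solution of the
Kuramoto–Sivashinsky equation on `[0,T)`, the spatial average satisfies
`|Π(Φ(τ,·))| ≤ |Π(Φ₀)| + (3/(26ℓ₀))‖Φ₀'‖₂² e^{13τ/3}` (with `Φ₀ = Φ(0,·)`,
`Φ₀' = D 1 0`). -/
theorem KS_average_bound (ℓ₀ : ℝ) (T : EReal) (hℓ₀ : 0 < ℓ₀) (hT : 0 < T)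
    (Φ Φτ : ℝ → ℝ → ℝ) (D : ℕ → ℝ → ℝ → ℝ)
    (hsol : IsKSSolutionOn ℓ₀ T Φ Φτ D) :
    ∀ τ ∈ ksDom T,
      |1 / ℓ₀ * ∫ η in (-(ℓ₀ / 2))..(ℓ₀ / 2), Φ τ η| ≤
        |1 / ℓ₀ * ∫ η in (-(ℓ₀ / 2))..(ℓ₀ / 2), Φ 0 η| +
          3 / (26 * ℓ₀) * (∫ η in (-(ℓ₀ / 2))..(ℓ₀ / 2), (D 1 0 η) ^ 2) *
            Real.exp (13 * τ / 3) := by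
  intro τ hτ
  obtain ⟨rfl, h1, h2, h3, h4, h5, h6⟩ := hsol
  have hsub : Icc 0 τ ⊆ ksDom T := fun t ht =>
    ⟨ht.1, lt_of_le_of_lt (EReal.coe_le_coe_iff.2 ht.2) hτ.2⟩
  have hsub2 : Icc 0 τ ×ˢ Icc (-(ℓ₀ / 2)) (ℓ₀ / 2) ⊆ ksDom T ×ˢ Iℓ ℓ₀ :=
    prod_mono hsub subset_rfl
  have h := aux_main (a := -(ℓ₀ / 2)) (b := ℓ₀ / 2) (by linarith) hτ.1 Φτ D
    (fun t ht x hx => (h1 t (hsub ht) x hx).mono hsub)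
    (fun j hj t ht x hx => h2 j hj t (hsub ht) x hx)
    (h3.mono hsub2) (fun j hj => (h4 j hj).mono hsub2)
    (fun t ht x hx => h5 t (hsub ht) x hx)
    (fun t ht => h6 t (hsub ht))
  have hp : 0 < 1 / ℓ₀ := by positivity
  rw [abs_mul, abs_mul, abs_of_pos hp]
  refine (mul_le_mul_of_nonneg_left h hp.le).trans (le_of_eq ?_)
  field_simp
end

section
/- Fix ℓ₀ > 0, T > 0, and constants K, K₁ > 0. Let ρ : [0, T] × [−ℓ₀/2, ℓ₀/2] → ℝ be continuously differentiable in both variables with ρ(0, η) = 0 for all η, and suppose that ∫₀^T ∫_{−ℓ₀/2}^{ℓ₀/2} (ρ_τ(τ,η))² dη dτ ≤ K² and |ρ_η(τ,η)| ≤ K₁ for all (τ,η) ∈ [0,T] × [−ℓ₀/2, ℓ₀/2]. Then |ρ(τ,η)| ≤ √(T/ℓ₀)·K + ℓ₀·K₁ for all (τ,η) ∈ [0,T] × [−ℓ₀/2, ℓ₀/2]. -/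
open Set

/-- Corollary 6.7: a uniform sup-norm bound on `ρ` deduced from an
`L²`-in-time bound on `ρ_τ` and a uniform bound on `ρ_η`, for a `C¹` function `ρ` on
`[0,T] × [−ℓ₀/2, ℓ₀/2]` vanishing at `τ = 0`.  Here `ρτ` and `ρη` are the partial
derivatives of `ρ` with respect to the first and second variable, respectively. -/
theorem sup_norm_bound (ℓ₀ T K K₁ : ℝ) (hℓ₀ : 0 < ℓ₀) (hT : 0 < T)
    (hK : 0 < K) (hK₁ : 0 < K₁)
    (ρ ρτ ρη : ℝ → ℝ → ℝ)
    (hderτ : ∀ τ ∈ Icc (0 : ℝ) T, ∀ η ∈ Iℓ ℓ₀,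
      HasDerivWithinAt (fun t => ρ t η) (ρτ τ η) (Icc (0 : ℝ) T) τ)
    (hderη : ∀ τ ∈ Icc (0 : ℝ) T, ∀ η ∈ Iℓ ℓ₀,
      HasDerivWithinAt (fun y => ρ τ y) (ρη τ η) (Iℓ ℓ₀) η)
    (hcontτ : ContinuousOn (fun p : ℝ × ℝ => ρτ p.1 p.2) (Icc (0 : ℝ) T ×ˢ Iℓ ℓ₀))
    (hcontη : ContinuousOn (fun p : ℝ × ℝ => ρη p.1 p.2) (Icc (0 : ℝ) T ×ˢ Iℓ ℓ₀))
    (hzero : ∀ η ∈ Iℓ ℓ₀, ρ 0 η = 0)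
    (hL2 : (∫ τ in (0 : ℝ)..T, ∫ η in (-(ℓ₀ / 2))..(ℓ₀ / 2), (ρτ τ η) ^ 2) ≤ K ^ 2)
    (hgrad : ∀ τ ∈ Icc (0 : ℝ) T, ∀ η ∈ Iℓ ℓ₀, |ρη τ η| ≤ K₁) :
    ∀ τ ∈ Icc (0 : ℝ) T, ∀ η ∈ Iℓ ℓ₀,
      |ρ τ η| ≤ Real.sqrt (T / ℓ₀) * K + ℓ₀ * K₁ := by
  intro τ hτ η hη
  set L := ℓ₀ / 2 with hL
  have hLL : -L ≤ L := by linarith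
  obtain ⟨g, hg, hgeq⟩ : ∃ g : ℝ → ℝ → ℝ, Continuous (Function.uncurry g) ∧
      ∀ t ∈ Icc (0 : ℝ) T, ∀ y ∈ Icc (-L) L, g t y = ρτ t y := by
    refine ⟨fun t y => ρτ (max 0 (min T t)) (max (-L) (min L y)), ?_, ?_⟩
    · have hc : Continuous (fun p : ℝ × ℝ => ((max 0 (min T p.1), max (-L) (min L p.2)) : ℝ × ℝ)) := by
        fun_prop
      refine hcontτ.comp_continuous hc ?_
      intro p
      refine ⟨⟨le_max_left _ _, max_le hT.le (min_le_left _ _)⟩,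
        ⟨le_max_left _ _, max_le hLL (min_le_left _ _)⟩⟩
    · intro t ht y hy
      simp only [min_eq_right ht.2, min_eq_right hy.2, max_eq_right ht.1, max_eq_right hy.1]
  have hg1 : ∀ y, Continuous (fun t => g t y) := fun y =>
    hg.comp (by fun_prop : Continuous fun t : ℝ => (t, y))
  have hL2' : (∫ t in (0 : ℝ)..T, ∫ y in (-L)..L, (g t y) ^ 2) ≤ K ^ 2 := by
    refine le_trans (le_of_eq ?_) hL2
    refine intervalIntegral.integral_congr fun t ht => ?_
    rw [uIcc_of_le hT.le] at ht
    refine intervalIntegral.integral_congr fun y hy => ?_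
    rw [uIcc_of_le hLL] at hy
    simp only [hgeq t ht y hy]
  rw [MeasureTheory.intervalIntegral_intervalIntegral_swap] at hL2'
  swap
  · have hc : Continuous (Function.uncurry fun t y => g t y ^ 2) := hg.pow 2
    exact (hc.continuousOn.integrableOn_compact (isCompact_uIcc.prod isCompact_uIcc)).mono_set
      (prod_mono uIoc_subset_uIcc uIoc_subset_uIcc)
  have hcs : ∀ y ∈ Icc (-L) L, (ρ τ y) ^ 2 ≤ T * ∫ t in (0 : ℝ)..T, (g t y) ^ 2 := by
    intro y hy
    have hft : ∫ t in (0 : ℝ)..τ, g t y = ρ τ y := by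
      rw [intervalIntegral.integral_eq_sub_of_hasDerivAt_of_le (f := fun t => ρ t y) hτ.1 ?_ ?_
        ((hg1 y).intervalIntegrable _ _)]
      · simp [hzero y hy]
      · intro t ht
        have ht' : t ∈ Icc (0 : ℝ) T := ⟨ht.1, ht.2.trans hτ.2⟩
        exact (hderτ t ht' y hy).continuousWithinAt.mono (Icc_subset_Icc_right hτ.2)
      · intro t ht
        have ht' : t ∈ Icc (0 : ℝ) T := ⟨ht.1.le, ht.2.le.trans hτ.2⟩
        rw [hgeq t ht' y hy]
        exact (hderτ t ht' y hy).hasDerivAt (Icc_mem_nhds ht.1 (ht.2.trans_le hτ.2))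
    set r := ρ τ y with hr
    have hI2 : IntervalIntegrable (fun t => g t y ^ 2) MeasureTheory.volume 0 τ :=
      ((hg1 y).pow 2).intervalIntegrable _ _
    have hI1 : IntervalIntegrable (fun t => g t y) MeasureTheory.volume 0 τ :=
      (hg1 y).intervalIntegrable _ _
    have h0 : 0 ≤ ∫ t in (0 : ℝ)..τ, (T * g t y - r) ^ 2 :=
      intervalIntegral.integral_nonneg hτ.1 fun t _ => sq_nonneg _
    have h1 : ∫ t in (0 : ℝ)..τ, (T * g t y - r) ^ 2 =
        T ^ 2 * (∫ t in (0 : ℝ)..τ, g t y ^ 2) - 2 * T * r * r + τ * r ^ 2 := by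
      have : ∀ t, (T * g t y - r) ^ 2 = T ^ 2 * g t y ^ 2 - 2 * T * r * g t y + r ^ 2 := by
        intro t; ring
      simp_rw [this]
      rw [intervalIntegral.integral_add ((hI2.const_mul _).sub (hI1.const_mul _))
        intervalIntegrable_const, intervalIntegral.integral_sub (hI2.const_mul _)
        (hI1.const_mul _), intervalIntegral.integral_const_mul,
        intervalIntegral.integral_const_mul, hft, intervalIntegral.integral_const]
      simp
    have h2 : ∫ t in (0 : ℝ)..τ, g t y ^ 2 ≤ ∫ t in (0 : ℝ)..T, g t y ^ 2 :=
      intervalIntegral.integral_mono_interval le_rfl hτ.1 hτ.2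
        (Filter.Eventually.of_forall fun t => sq_nonneg _)
        (((hg1 y).pow 2).intervalIntegrable _ _)
    have h3 : τ * r ^ 2 ≤ T * r ^ 2 := mul_le_mul_of_nonneg_right hτ.2 (sq_nonneg r)
    have h4 : r ^ 2 ≤ T * ∫ t in (0 : ℝ)..τ, g t y ^ 2 := by
      refine le_of_mul_le_mul_left ?_ hT
      nlinarith
    exact h4.trans (mul_le_mul_of_nonneg_left h2 hT.le)
  set c := |ρ τ η| - ℓ₀ * K₁ with hc
  suffices c ≤ Real.sqrt (T / ℓ₀) * K by linarith
  rcases le_total c 0 with hc0 | hc0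
  · exact hc0.trans (by positivity)
  have hlow : ∀ y ∈ Icc (-L) L, c ≤ |ρ τ y| := by
    intro y hy
    have h := Convex.norm_image_sub_le_of_norm_hasDerivWithin_le (f := fun y => ρ τ y)
      (fun x hx => hderη τ hτ x hx) (fun x hx => hgrad τ hτ x hx) (convex_Icc _ _) hy hη
    simp only [Real.norm_eq_abs] at h
    have hd : |η - y| ≤ ℓ₀ := by
      have h1 := hη.1
      have h2 := hη.2
      rw [abs_le]; constructor <;> linarith [hy.1, hy.2]
    have h3 := mul_le_mul_of_nonneg_left hd hK₁.le
    have h4 := abs_sub_abs_le_abs_sub (ρ τ η) (ρ τ y)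
    linarith
  have hint : ∫ _y in (-L)..L, c ^ 2 ≤ ∫ y in (-L)..L, T * ∫ t in (0 : ℝ)..T, (g t y) ^ 2 := by
    refine intervalIntegral.integral_mono_on hLL intervalIntegrable_const ?_ ?_
    · refine Continuous.intervalIntegrable ?_ _ _
      refine continuous_const.mul
        (intervalIntegral.continuous_parametric_intervalIntegral_of_continuous'
          (f := fun y t => g t y ^ 2) ?_ 0 T)
      exact (hg.comp continuous_swap).pow 2
    · intro y hy
      refine le_trans ?_ (hcs y hy)
      rw [← sq_abs (ρ τ y)]
      exact pow_le_pow_left₀ hc0 (hlow y hy) 2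
  rw [intervalIntegral.integral_const_mul, intervalIntegral.integral_const, smul_eq_mul] at hint
  have hfin : ℓ₀ * c ^ 2 ≤ T * K ^ 2 := by
    have := mul_le_mul_of_nonneg_left hL2' hT.le
    have e : L - -L = ℓ₀ := by rw [hL]; ring
    rw [e] at hint
    linarith
  refine abs_le_of_sq_le_sq' ?_ (by positivity) |>.2
  rw [mul_pow, Real.sq_sqrt (by positivity), div_mul_eq_mul_div, le_div_iff₀ hℓ₀]
  linarith
end
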